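/- arXiv:1301.0784 — 2 statements merged into one kernel-verified Lean document; each statement's English description precedes it below -/
import Mathlib

section
/- Let n ≥ 3, let J_G̃ be the binomial edge ideal of the complete graph on [n], and let M be the monomial ideal generated by the n−1 monomials x_2 x_3 ⋯ x_i y_{i+1} ⋯ y_{n−1} for i = 1, …, n−1 (so the generators are x_2⋯x_{n−1}, x_2⋯x_{n−2}y_{n−1}, …, x_2 y_3⋯y_{n−1}, y_2⋯y_{n−1}). Then the canonical module ω(S/J_G̃) = Ext_S^{n−1}(S/J_G̃, S) is isomorphic, as an S/J_G̃-module (up to a shift in grading), to (J_G̃, M)/J_G̃. -/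
/-!
Let `J` be the ideal of `2`-minors of the generic `2 × n` matrix and let `I ⊆ J` be generated by
the `n - 1` minors of adjacent columns (the binomial edge ideal of the path). The latter form a
regular sequence (`pathGen_regular`): the `k`-th one is linear in `y_{k+1}`, a variable absent
from the previous ones, with leading coefficient `x_k`, which is regular modulo them. Since they
kill `S/J`, Rees' lemma (`rees`) gives `Ext^(n-1)(S/J, S) ≅ Hom(S/J, S/I) ≅ (I : J)/I`. What
remains is the linkage statement `I : J = I + M` (`colon_eq`) together with `(I + M) ∩ J = I`
(`mem_pathI`): then `(I : J)/I ≅ (J + M)/J` by `nonempty_hom_equiv`.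

Both facts come from sorting the monomials by the set `T` of interior vertices of the path that
they miss. If a monomial involves every vertex strictly between `i` and `j`, then modulo `I` one
may exchange a factor `x_i y_j` in front of it for `x_j y_i` (`swap_mem`). In particular `M J ⊆
I`. Hence two monomials which miss the same set `T`, have the same degree at every vertex, and
have the same number of `y`-factors on each component of the path with `T` removed are congruent
modulo `I` (`monomial_sub_mem`). These data are the exponents in the parametrization `param`,
which kills the variables at `T` and sends `x_i ↦ s_i`, `y_i ↦ s_i t_c` with `c` the component of
`i`; it follows that `h` belongs to `I` as soon as it is killed by the parametrizations for all
`T` (`part_mem`, `sum_part`).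

For `T = ∅` the parametrization kills `J`. For nonempty `T` it kills `I` but not the binomial of
the two end vertices, which belongs to `J`, so it kills `I : J`. Therefore an element of `(I : J)
∩ J` is in `I`, and an element of `I : J` is congruent modulo `I` to its part with `T = ∅`. The
monomials of that part are divisible by a product of one variable for each interior vertex, which
is congruent to the generator of `M` with the same number of `y`-factors (`monomial_mem`).
-/

open MvPolynomial CategoryTheory Opposite

noncomputable section

namespace BEIPaper

/-- The `x_i` variable of the polynomial ring `K[x_1,…,x_n,y_1,…,y_n]`,
which we realize as `MvPolynomial (σ ⊕ σ) K`, where `Sum.inl i ↦ x_i` and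
`Sum.inr i ↦ y_i`. -/
def xv (K : Type) [Field K] {σ : Type} (i : σ) : MvPolynomial (σ ⊕ σ) K :=
  X (Sum.inl i)

/-- The `y_i` variable. -/
def yv (K : Type) [Field K] {σ : Type} (i : σ) : MvPolynomial (σ ⊕ σ) K :=
  X (Sum.inr i)

/-- The binomial edge ideal of a graph `G` on the vertex set `[n]`:
generated by the binomials `x_i y_j - x_j y_i` for edges `{i, j}` with `i < j`. -/
def bei (K : Type) [Field K] {n : ℕ} (G : SimpleGraph (Fin n)) :
    Ideal (MvPolynomial (Fin n ⊕ Fin n) K) :=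
  Ideal.span {f | ∃ i j : Fin n, i < j ∧ G.Adj i j ∧
    f = xv K i * yv K j - xv K j * yv K i}

/-- The prime ideal `P_T(G)`: generated by `{x_i, y_i : i ∈ T}` together with the
binomial edge ideals of the complete graphs on the vertex sets of the connected
components of the induced subgraph of `G` on `[n] ∖ T` (equivalently, all binomials
`x_i y_j - x_j y_i` where `i < j` lie outside `T` in the same connected component). -/
def PT (K : Type) [Field K] {n : ℕ} (G : SimpleGraph (Fin n)) (T : Set (Fin n)) :
    Ideal (MvPolynomial (Fin n ⊕ Fin n) K) :=
  Ideal.span ((xv K '' T) ∪ (yv K '' T) ∪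
    {f | ∃ i j : Fin n, ∃ (hi : i ∈ Tᶜ) (hj : j ∈ Tᶜ), i < j ∧
      (G.induce Tᶜ).Reachable ⟨i, hi⟩ ⟨j, hj⟩ ∧
      f = xv K i * yv K j - xv K j * yv K i})

/-- `c(T)`: the number of connected components of the induced subgraph of `G`
on `[n] ∖ T`. -/
def ncomp {n : ℕ} (G : SimpleGraph (Fin n)) (T : Set (Fin n)) : ℕ :=
  Nat.card (G.induce Tᶜ).ConnectedComponent

/-- The graded (irrelevant) maximal ideal of a polynomial ring, generated by
all the variables. -/
def mIdeal (K : Type) [Field K] (σ : Type) : Ideal (MvPolynomial σ K) :=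
  Ideal.span (Set.range X)

/-- The depth of a module `M` with respect to an ideal `I`: the supremum of lengths
of `M`-regular sequences consisting of elements of `I`. -/
def depth {R : Type} [CommRing R] (I : Ideal R) (M : Type) [AddCommGroup M]
    [Module R M] : ℕ∞ :=
  sSup {k : ℕ∞ | ∃ rs : List R, (rs.length : ℕ∞) = k ∧ (∀ r ∈ rs, r ∈ I) ∧
    RingTheory.Sequence.IsRegular M rs}

/-- The (Krull) dimension of a module: the Krull dimension of `R` modulo the
annihilator of `M`. -/
def mdim (R : Type) [CommRing R] (M : Type) [AddCommGroup M] [Module R M] :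
    WithBot ℕ∞ :=
  ringKrullDim (R ⧸ Module.annihilator R M)

/-- `M` is a Cohen-Macaulay `R`-module of dimension `d` (depth and dimension both
being taken with respect to the given (maximal graded) ideal `I`). -/
def IsCMmodOfDim {R : Type} [CommRing R] (I : Ideal R) (M : Type) [AddCommGroup M]
    [Module R M] (d : ℕ) : Prop :=
  (depth I M : WithBot ℕ∞) = mdim R M ∧ mdim R M = (d : ℕ∞)

/-- The quotient `S/J` of a polynomial ring `S` by an ideal `J` is a Cohen-Macaulay
ring: its depth with respect to the graded maximal ideal equals its Krull dimension. -/
def IsCMQuot (K : Type) [Field K] {σ : Type} (J : Ideal (MvPolynomial σ K)) : Prop :=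
  (depth (mIdeal K σ) (MvPolynomial σ K ⧸ J) : WithBot ℕ∞) =
    ringKrullDim (MvPolynomial σ K ⧸ J)

/-- `S/I` is approximately Cohen-Macaulay: there is a homogeneous element `x` of
positive degree in the irrelevant ideal of `R = S/I` (i.e. the image of a homogeneous
polynomial `f` of positive degree) such that `R/x^m R = S/(I + (f^m))` is a
Cohen-Macaulay ring of dimension `dim R - 1` for all `m ≥ 1`. -/
def IsACM (K : Type) [Field K] {σ : Type} (I : Ideal (MvPolynomial σ K)) : Prop :=
  ∃ (d : ℕ) (f : MvPolynomial σ K), 0 < d ∧ f.IsHomogeneous d ∧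
    ∀ m : ℕ, 1 ≤ m →
      IsCMQuot K (I ⊔ Ideal.span {f ^ m}) ∧
      ringKrullDim (MvPolynomial σ K ⧸ (I ⊔ Ideal.span {f ^ m})) + 1 =
        ringKrullDim (MvPolynomial σ K ⧸ I)

/-- The Hilbert series of `S/I` (for a homogeneous ideal `I`), as a power series
over `ℤ`: the `m`-th coefficient is the `K`-dimension of the degree-`m` graded
component of `S/I`, i.e. of the image of the space of degree-`m` homogeneous
polynomials in `S/I`. -/
def hseries (K : Type) [Field K] {σ : Type} (I : Ideal (MvPolynomial σ K)) :
    PowerSeries ℤ :=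
  PowerSeries.mk fun m =>
    (Module.finrank K (Submodule.map (Ideal.Quotient.mkₐ K I).toLinearMap
      (homogeneousSubmodule σ K m)) : ℤ)

/-- The formal power series variable `t`. -/
def t : PowerSeries ℤ := PowerSeries.X

/-- The equidimensional part `U_S(I)` of (a minimal primary decomposition of) `I`:
the intersection of the primary components `I(p)` over the associated primes `p`
with `dim S/p = dim S/I`.  Any such `p` is a minimal prime of `I`, so its primary
component is independent of the decomposition and equals the saturation
`{x | ∃ s ∉ p, s * x ∈ I}`. -/
def USideal {R : Type} [CommRing R] (I : Ideal R) : Ideal R :=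
  sInf {J | ∃ p ∈ associatedPrimes R (R ⧸ I),
    ringKrullDim (R ⧸ p) = ringKrullDim (R ⧸ I) ∧
    J = Ideal.span {x | ∃ s ∉ p, s * x ∈ I}}

/-- `Ext_S^j(S/I, S)`, as an object of `ModuleCat S`.  The `i`-th module of
deficiency of `S/I` is `ω^i(S/I) = Ext_S^{2n-i}(S/I, S)`, i.e. `extSI K I (2*n - i)`. -/
def extSI (K : Type) [Field K] {σ : Type} (I : Ideal (MvPolynomial σ K)) (j : ℕ) :
    ModuleCat (MvPolynomial σ K) :=
  ((Ext (MvPolynomial σ K) (ModuleCat (MvPolynomial σ K)) j).obj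
      (op (ModuleCat.of (MvPolynomial σ K) (MvPolynomial σ K ⧸ I)))).obj
    (ModuleCat.of (MvPolynomial σ K) (MvPolynomial σ K))

/-- The line (path) graph on `[n]` (with `[n]` realized as `Fin n`), with edges
`{i, i+1}` for `1 ≤ i ≤ n-1`. -/
def lineG (n : ℕ) : SimpleGraph (Fin n) :=
  SimpleGraph.fromRel (fun a b => (b : ℕ) = (a : ℕ) + 1)

/-- The cycle of length `n` on `[n]` (with `[n]` realized as `Fin n`), with edges
`{i, i+1}` for `1 ≤ i ≤ n-1` together with `{1, n}`. -/
def cycleG (n : ℕ) : SimpleGraph (Fin n) :=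
  SimpleGraph.fromRel (fun a b =>
    (b : ℕ) = (a : ℕ) + 1 ∨ ((a : ℕ) = 0 ∧ (b : ℕ) = n - 1))

/-- The binomial `g = x_1 y_n - x_n y_1`. -/
def gElt (K : Type) [Field K] {n : ℕ} (hn : 0 < n) : MvPolynomial (Fin n ⊕ Fin n) K :=
  xv K ⟨0, hn⟩ * yv K ⟨n - 1, by omega⟩ - xv K ⟨n - 1, by omega⟩ * yv K ⟨0, hn⟩

/-- The `i`-th generator `x_2 x_3 ⋯ x_i y_{i+1} ⋯ y_{n-1}` (for `i = 1, …, n-1`)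
of the monomial ideal `M`; the product ranges over the labels `p = 2, …, n-1`
(`0`-indexed: `q = p - 1` with `1 ≤ q ≤ n-2`), taking `x_p` when `p ≤ i` and
`y_p` when `p > i`. -/
def mgen (K : Type) [Field K] (n : ℕ) (i : ℕ) : MvPolynomial (Fin n ⊕ Fin n) K :=
  ∏ q ∈ Finset.univ.filter (fun q : Fin n => 0 < (q : ℕ) ∧ (q : ℕ) < n - 1),
    (if (q : ℕ) + 1 ≤ i then xv K q else yv K q)

/-- The monomial ideal
`M = (x_2 x_3 ⋯ x_{n-1}, x_2 x_3 ⋯ x_{n-2} y_{n-1}, …, x_2 y_3 ⋯ y_{n-1}, y_2 y_3 ⋯ y_{n-1})`. -/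
def monoM (K : Type) [Field K] (n : ℕ) : Ideal (MvPolynomial (Fin n ⊕ Fin n) K) :=
  Ideal.span {f | ∃ i : ℕ, 1 ≤ i ∧ i ≤ n - 1 ∧ f = mgen K n i}

/-- The degree of a vertex, as the cardinality of its neighbor set. -/
def deg {n : ℕ} (G : SimpleGraph (Fin n)) (v : Fin n) : ℕ :=
  Nat.card (G.neighborSet v)

/-- A tree is 3-star like if no vertex has degree `≥ 4`, and either there is at most
one vertex of degree `3`, or there are exactly two vertices of degree `3` and they
are joined by an edge. -/
def ThreeStarLike {n : ℕ} (G : SimpleGraph (Fin n)) : Prop :=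
  (∀ v, deg G v ≤ 3) ∧
    ({v | deg G v = 3}.Subsingleton ∨
      ∃ a b : Fin n, a ≠ b ∧ G.Adj a b ∧ {v | deg G v = 3} = {a, b})

/-- The graph `G′` on `[n+1]` obtained from a graph `G` on `[n]` by attaching the
new edge `{v, n+1}` at the vertex `v` of `G`. -/
def extendG {n : ℕ} (G : SimpleGraph (Fin n)) (v : Fin n) : SimpleGraph (Fin (n + 1)) :=
  SimpleGraph.fromRel (fun a b =>
    (∃ (ha : a ≠ Fin.last n) (hb : b ≠ Fin.last n),
      G.Adj (a.castPred ha) (b.castPred hb)) ∨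
    (a = Fin.castSucc v ∧ b = Fin.last n))

/-- The inclusion `S = K[x_1,…,x_n,y_1,…,y_n] → S′ = K[x_1,…,x_{n+1},y_1,…,y_{n+1}]`. -/
def liftS (K : Type) [Field K] (n : ℕ) :
    MvPolynomial (Fin n ⊕ Fin n) K →ₐ[K] MvPolynomial (Fin (n + 1) ⊕ Fin (n + 1)) K :=
  rename (Sum.map Fin.castSucc Fin.castSucc)

/-! ### `Ext` modulo a regular sequence -/

/-- The classical `Ext` (left derived functor of `Hom` in the first variable) agrees linearly with
`Abelian.Ext` (morphisms in the derived category) in positive degrees: both are cocycles modulo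
coboundaries in `Hom(P, N)` for a projective resolution `P` of `A`. -/
theorem nonempty_ext_equiv {R : Type} [CommRing R] (A N : ModuleCat.{0} R) (p : ℕ) :
    Nonempty ((((Ext R (ModuleCat R) (p + 1)).obj (op A)).obj N) ≃ₗ[R] Abelian.Ext A N (p + 1)) := by
  let P := ProjectiveResolution.of A
  let C := P.complex.linearYonedaObj R N
  let S := C.sc' p (p + 1) (p + 2)
  let e₁ : (((Ext R (ModuleCat R) (p + 1)).obj (op A)).obj N) ≅ S.moduleCatLeftHomologyData.H :=
    P.isoExt (p + 1) N ≪≫ ShortComplex.homologyMapIso (C.isoSc' p (p + 1) (p + 2)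
      (by simp) (by simp)) ≪≫ S.moduleCatHomologyIso
  have hZ (f : LinearMap.ker S.g.hom) :
      P.complex.d (p + 2) (p + 1) ≫ (f.1 : P.complex.X (p + 1) ⟶ N) = 0 := f.2
  have hsmul (r : R) (f : P.complex.X (p + 1) ⟶ N) (hf : P.complex.d (p + 2) (p + 1) ≫ f = 0)
      (hrf : P.complex.d (p + 2) (p + 1) ≫ (r • f) = 0) :
      P.extMk (r • f) (p + 2) rfl hrf = r • P.extMk f (p + 2) rfl hf := by
    rw [Abelian.Ext.smul_eq_comp_mk₀, P.extMk_comp_mk₀]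
    congr 1
  let φ : LinearMap.ker S.g.hom →ₗ[R] Abelian.Ext A N (p + 1) :=
    { toFun f := P.extMk (f.1 : P.complex.X (p + 1) ⟶ N) (p + 2) rfl (hZ f)
      map_add' f g := (P.add_extMk _ _ _ _ _ _).symm
      map_smul' r f := hsmul r f.1 (hZ f) (hZ (r • f)) }
  have hφ : Function.Surjective φ := fun α ↦ by
    obtain ⟨f, hf, rfl⟩ := P.extMk_surjective α (p + 2) rfl
    exact ⟨⟨f, hf⟩, rfl⟩
  have hker : LinearMap.ker φ = LinearMap.range S.moduleCatToCycles := by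
    ext f
    rw [LinearMap.mem_ker]
    refine (P.extMk_eq_zero_iff f.1 (p + 2) rfl (hZ f) p rfl).trans ?_
    constructor
    · rintro ⟨g, hg⟩
      exact ⟨g, Subtype.ext hg⟩
    · rintro ⟨g, hg⟩
      exact ⟨g, congrArg Subtype.val hg⟩
  exact ⟨e₁.toLinearEquiv ≪≫ₗ (Submodule.quotEquivOfEq _ _ hker.symm) ≪≫ₗ
    φ.quotKerEquivOfSurjective hφ⟩

lemma ext_smul_eq_zero {R : Type} [CommRing R] {A N : ModuleCat.{0} R} {a : R}
    (ha : ∀ x : A, a • x = 0) {i : ℕ} (x : Abelian.Ext A N i) : a • x = 0 := by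
  have h : a • 𝟙 A = 0 := by ext y; exact ha y
  rw [← Abelian.Ext.mk₀_id_comp x, ← Abelian.Ext.smul_comp, ← Abelian.Ext.mk₀_smul, h]
  simp

/-- Change of rings step: if `a` is regular on `N₁` with cokernel `N₃` and kills `A`, then the
connecting map `Ext^i(A, N₃) → Ext^(i+1)(A, N₁)` is surjective, and it is injective as soon as
`Ext^i(A, N₁)` vanishes. -/
lemma ext_shift {R : Type} [CommRing R] {A N₁ N₃ : ModuleCat.{0} R} {a : R}
    (ha : ∀ x : A, a • x = 0) (g : N₁ ⟶ N₃) (w : (a • 𝟙 N₁) ≫ g = 0)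
    (hS : (ShortComplex.mk (a • 𝟙 N₁) g w).ShortExact) (i : ℕ) :
    ∃ δ : Abelian.Ext A N₃ i →ₗ[R] Abelian.Ext A N₁ (i + 1), Function.Surjective δ ∧
      (Subsingleton (Abelian.Ext A N₁ i) → Function.Injective δ) := by
  let δ : Abelian.Ext A N₃ i →ₗ[R] Abelian.Ext A N₁ (i + 1) :=
    (Abelian.Ext.bilinearCompOfLinear R A N₃ N₁ i 1 (i + 1) rfl).flip hS.extClass
  refine ⟨δ, fun x ↦ ?_, fun h ↦ ?_⟩
  · refine Abelian.Ext.covariant_sequence_exact₁ A hS x ?_ rfl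
    exact (Abelian.Ext.smul_eq_comp_mk₀ x a).symm.trans (ext_smul_eq_zero ha x)
  · rw [injective_iff_map_eq_zero]
    intro x hx
    obtain ⟨y, rfl⟩ := Abelian.Ext.covariant_sequence_exact₃ A hS x rfl hx
    rw [show y = 0 from Subsingleton.elim _ _]
    simp

/-- The short exact sequence `0 → R/I → R/I → R/(I + aR) → 0` for `a` regular modulo `I`. -/
lemma exists_shortExact {R : Type} [CommRing R] (I I' : Ideal R) (a : R)
    (hI' : I' = I ⊔ Ideal.span {a}) (ha : ∀ p, a * p ∈ I → p ∈ I) :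
    ∃ (g : ModuleCat.of R (R ⧸ I) ⟶ ModuleCat.of R (R ⧸ I'))
      (w : (a • 𝟙 (ModuleCat.of R (R ⧸ I))) ≫ g = 0),
      (ShortComplex.mk (a • 𝟙 (ModuleCat.of R (R ⧸ I))) g w).ShortExact := by
  have hle : I ≤ I' := hI' ▸ le_sup_left
  have hmem : a ∈ I' := hI' ▸ Ideal.mem_sup_right (Ideal.mem_span_singleton_self a)
  let g : (R ⧸ I) →ₗ[R] (R ⧸ I') := Submodule.factor hle
  have hg (r : R) : g (Submodule.Quotient.mk r) = Submodule.Quotient.mk r := rfl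
  refine ⟨ModuleCat.ofHom g, ?_, ?_⟩
  · refine ModuleCat.hom_ext (LinearMap.ext fun x ↦ ?_)
    obtain ⟨r, rfl⟩ := Submodule.Quotient.mk_surjective _ x
    change g (a • Submodule.Quotient.mk r) = 0
    rw [← Submodule.Quotient.mk_smul, hg, Submodule.Quotient.mk_eq_zero]
    exact I'.mul_mem_right _ hmem
  · refine ModuleCat.shortComplex_shortExact _ ?_ ?_ ?_
    · intro x
      obtain ⟨r, rfl⟩ := Submodule.Quotient.mk_surjective _ x
      change g (Submodule.Quotient.mk r) = 0 ↔ ∃ y : R ⧸ I, a • y = Submodule.Quotient.mk r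
      rw [hg, Submodule.Quotient.mk_eq_zero, hI', Submodule.mem_sup]
      constructor
      · rintro ⟨y, hy, z, hz, rfl⟩
        obtain ⟨t, rfl⟩ := Ideal.mem_span_singleton.mp hz
        refine ⟨Submodule.Quotient.mk t, ?_⟩
        rw [← Submodule.Quotient.mk_smul, Submodule.Quotient.eq]
        simpa using hy
      · rintro ⟨y, hy⟩
        obtain ⟨t, rfl⟩ := Submodule.Quotient.mk_surjective _ y
        rw [← Submodule.Quotient.mk_smul, eq_comm, Submodule.Quotient.eq] at hy
        exact ⟨_, hy, a * t, Ideal.mul_mem_right _ _ (Ideal.mem_span_singleton_self a),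
          by simp⟩
    · change Function.Injective fun y : R ⧸ I ↦ a • y
      intro x y hxy
      obtain ⟨r, rfl⟩ := Submodule.Quotient.mk_surjective _ x
      obtain ⟨s, rfl⟩ := Submodule.Quotient.mk_surjective _ y
      simp only [← Submodule.Quotient.mk_smul, Submodule.Quotient.eq] at hxy ⊢
      apply ha
      simpa [mul_sub] using hxy
    · intro x
      obtain ⟨r, rfl⟩ := Submodule.Quotient.mk_surjective _ x
      exact ⟨Submodule.Quotient.mk r, rfl⟩

/-- Rees' lemma: if `a₀, …, a_{r-1}` is a regular sequence modulo `I 0` all of whose members kill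
`A`, then `Ext^r(A, R/I 0) ≅ Hom(A, R/I r)`, where `I r = I 0 + (a₀, …, a_{r-1})`, and the lower
`Ext^i(A, R/I 0)` vanish. -/
theorem rees {R : Type} [CommRing R] (A : ModuleCat.{0} R) (r : ℕ) (I : ℕ → Ideal R) (a : ℕ → R)
    (hI : ∀ k < r, I (k + 1) = I k ⊔ Ideal.span {a k})
    (hreg : ∀ k < r, ∀ p, a k * p ∈ I k → p ∈ I k)
    (hA : ∀ k < r, ∀ x : A, a k • x = 0) :
    (∀ i < r, Subsingleton (Abelian.Ext A (ModuleCat.of R (R ⧸ I 0)) i)) ∧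
    Nonempty (Abelian.Ext A (ModuleCat.of R (R ⧸ I 0)) r ≃ₗ[R] (A →ₗ[R] (R ⧸ I r))) := by
  induction r generalizing I a with
  | zero =>
    exact ⟨by simp, ⟨Abelian.Ext.linearEquiv₀ ≪≫ₗ ModuleCat.homLinearEquiv⟩⟩
  | succ r ih =>
    obtain ⟨h₁, ⟨e⟩⟩ := ih (fun k ↦ I (k + 1)) (fun k ↦ a (k + 1))
      (fun k hk ↦ hI _ (by omega)) (fun k hk ↦ hreg _ (by omega)) (fun k hk ↦ hA _ (by omega))
    obtain ⟨g, w, hS⟩ := exists_shortExact (I 0) (I 1) (a 0) (hI 0 (by omega)) (hreg 0 (by omega))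
    have hv : ∀ i < r + 1, Subsingleton (Abelian.Ext A (ModuleCat.of R (R ⧸ I 0)) i) := by
      rintro (_ | i) hi
      · have : Subsingleton (A →ₗ[R] (R ⧸ I 0)) := by
          refine ⟨fun f f' ↦ ?_⟩
          rw [← sub_eq_zero]
          ext x
          obtain ⟨y, hy⟩ := Submodule.Quotient.mk_surjective _ ((f - f') x)
          have h : a 0 • (f - f') x = 0 := by
            rw [← map_smul, hA 0 (by omega), map_zero]
          rw [← hy, ← Submodule.Quotient.mk_smul, Submodule.Quotient.mk_eq_zero] at h
          rw [← hy, LinearMap.zero_apply, Submodule.Quotient.mk_eq_zero]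
          exact hreg 0 (by omega) y h
        exact (Abelian.Ext.linearEquiv₀ (R := R) ≪≫ₗ ModuleCat.homLinearEquiv (S := R)).subsingleton
      · obtain ⟨δ, hδ, -⟩ := ext_shift (hA 0 (by omega)) g w hS i
        have := h₁ i (by omega)
        exact hδ.subsingleton
    refine ⟨hv, ?_⟩
    obtain ⟨δ, hδ, hδ'⟩ := ext_shift (hA 0 (by omega)) g w hS r
    exact ⟨(LinearEquiv.ofBijective δ ⟨hδ' (hv r (by omega)), hδ⟩).symm ≪≫ₗ e⟩

/-! ### The path binomials form a regular sequence -/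

/-- The substitution `X_v ↦ 0`. -/
def killVar {σ : Type} [DecidableEq σ] (K : Type) [Field K] (v : σ) :
    MvPolynomial σ K →ₐ[K] MvPolynomial σ K :=
  aeval fun w ↦ if w = v then 0 else X w

section killVar

variable {σ : Type} [DecidableEq σ] {K : Type} [Field K] {v : σ}

@[simp] lemma killVar_X_self : killVar K v (X v) = 0 := by simp [killVar]

lemma killVar_X_of_ne {w : σ} (h : w ≠ v) : killVar K v (X w) = X w := by simp [killVar, h]

lemma killVar_killVar (p : MvPolynomial σ K) : killVar K v (killVar K v p) = killVar K v p := by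
  have : ((killVar K v).comp (killVar K v)) = killVar K v := by
    ext w
    by_cases h : w = v
    · simp [h]
    · simp [killVar_X_of_ne h]
  exact DFunLike.congr_fun this p

/-- The expansions `c₀ + X_v (c₁ + X_v (⋯))` in powers of `X_v` whose coefficients do not involve
`X_v`; used for induction on the `X_v`-degree. -/
inductive VarExp (K : Type) [Field K] (v : σ) : MvPolynomial σ K → Prop
  | zero : VarExp K v 0
  | step (c q : MvPolynomial σ K) (hc : killVar K v c = c) (hq : VarExp K v q) :
      VarExp K v (c + X v * q)

lemma VarExp.add {p q : MvPolynomial σ K} (hp : VarExp K v p) (hq : VarExp K v q) :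
    VarExp K v (p + q) := by
  induction hp generalizing q with
  | zero => simpa using hq
  | step c p hc hp ih =>
    cases hq with
    | zero => simpa using VarExp.step c p hc hp
    | step c' q hc' hq =>
      have := VarExp.step (c + c') (p + q) (by rw [map_add, hc, hc']) (ih hq)
      convert this using 1
      ring

lemma VarExp.mul_X {p : MvPolynomial σ K} (hp : VarExp K v p) (w : σ) :
    VarExp K v (p * X w) := by
  by_cases h : w = v
  · subst h
    have := VarExp.step 0 p (map_zero _) hp
    rwa [zero_add, mul_comm] at this
  · induction hp with
    | zero => simpa using VarExp.zero
    | step c q hc hq ih =>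
      have := VarExp.step (c * X w) (q * X w) (by rw [map_mul, hc, killVar_X_of_ne h]) ih
      convert this using 1
      ring

lemma varExp (p : MvPolynomial σ K) : VarExp K v p := by
  induction p using MvPolynomial.induction_on with
  | C a => simpa using VarExp.step (C a) 0 (by simp [killVar]) VarExp.zero
  | add p q hp hq => exact hp.add hq
  | mul_X p w hp => exact hp.mul_X w

lemma exists_killVar_add (p : MvPolynomial σ K) : ∃ q, p = killVar K v p + X v * q := by
  cases varExp (K := K) (v := v) p with
  | zero => exact ⟨0, by simp⟩
  | step c q hc hq => exact ⟨q, by simp [hc]⟩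

variable {G : Set (MvPolynomial σ K)}

/-- An ideal generated by polynomials not involving `X_v` contains the coefficients of the
`X_v`-expansion of each of its members. -/
lemma killVar_mem (hG : ∀ g ∈ G, killVar K v g = g) {p : MvPolynomial σ K}
    (hp : p ∈ Ideal.span G) :
    killVar K v p ∈ Ideal.span G ∧ ∃ q ∈ Ideal.span G, p = killVar K v p + X v * q := by
  induction hp using Submodule.span_induction with
  | mem g hg => exact ⟨by rw [hG g hg]; exact Ideal.subset_span hg, 0, zero_mem _, by simp [hG g hg]⟩
  | zero => exact ⟨by simp, 0, zero_mem _, by simp⟩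
  | add p p' _ _ h h' =>
    obtain ⟨h₁, q, hq, e⟩ := h
    obtain ⟨h₁', q', hq', e'⟩ := h'
    refine ⟨by rw [map_add]; exact add_mem h₁ h₁', q + q', add_mem hq hq', ?_⟩
    rw [map_add]
    linear_combination e + e'
  | smul s p hp h =>
    obtain ⟨h₁, q, hq, e⟩ := h
    obtain ⟨t, ht⟩ := exists_killVar_add (v := v) s
    rw [smul_eq_mul, map_mul]
    refine ⟨Ideal.mul_mem_left _ _ h₁, t * p + killVar K v s * q,
      add_mem (Ideal.mul_mem_left _ _ hp) (Ideal.mul_mem_left _ _ hq), ?_⟩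
    linear_combination p * ht + killVar K v s * e

lemma mem_of_add_X_mul_mem (hG : ∀ g ∈ G, killVar K v g = g) {c p : MvPolynomial σ K}
    (hc : killVar K v c = c) (h : c + X v * p ∈ Ideal.span G) :
    c ∈ Ideal.span G ∧ p ∈ Ideal.span G := by
  obtain ⟨h₁, q, hq, e⟩ := killVar_mem hG h
  simp only [map_add, map_mul, killVar_X_self, zero_mul, add_zero, hc] at h₁ e
  have : p = q := mul_left_cancel₀ (X_ne_zero v) (add_left_cancel e)
  exact ⟨h₁, this ▸ hq⟩

lemma X_regular (hG : ∀ g ∈ G, killVar K v g = g) {p : MvPolynomial σ K}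
    (h : X v * p ∈ Ideal.span G) : p ∈ Ideal.span G :=
  (mem_of_add_X_mul_mem hG (map_zero _) (by rwa [zero_add])).2

/-- A linear form `a X_v - b` is regular modulo an ideal not involving `X_v` as soon as its leading
coefficient `a` is. -/
lemma linear_regular (hG : ∀ g ∈ G, killVar K v g = g) {a b : MvPolynomial σ K}
    (ha : killVar K v a = a) (hb : killVar K v b = b)
    (hreg : ∀ p, a * p ∈ Ideal.span G → p ∈ Ideal.span G) (p : MvPolynomial σ K)
    (h : (a * X v - b) * p ∈ Ideal.span G) : p ∈ Ideal.span G := by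
  have key : ∀ c, killVar K v c = c → c + (a * X v - b) * p ∈ Ideal.span G →
      p ∈ Ideal.span G := by
    clear h
    induction varExp (v := v) p with
    | zero => exact fun _ _ _ ↦ zero_mem _
    | step c₀ q hc₀ hq ih =>
      intro c hc h
      have h' : (c - b * c₀) + X v * (a * c₀ + (a * X v - b) * q) ∈ Ideal.span G := by
        convert h using 1
        ring
      have h₂ := (mem_of_add_X_mul_mem hG (by rw [map_sub, map_mul, hc, hb, hc₀]) h').2
      have hq := ih (a * c₀) (by rw [map_mul, ha, hc₀]) h₂
      have hc₀ := hreg c₀ ((Ideal.add_mem_iff_left _ (Ideal.mul_mem_left _ _ hq)).mp h₂)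
      exact add_mem hc₀ (Ideal.mul_mem_left _ _ hq)
  exact key 0 (map_zero _) (by rwa [zero_add])

/-- If `a` and `y` are regular modulo an ideal not involving `X_v`, then `X_v` is regular modulo
that ideal enlarged by `a y - b X_v`. -/
lemma X_regular_sup (hG : ∀ g ∈ G, killVar K v g = g) {a b y : MvPolynomial σ K}
    (ha : killVar K v a = a) (hy : killVar K v y = y)
    (hrega : ∀ p, a * p ∈ Ideal.span G → p ∈ Ideal.span G)
    (hregy : ∀ p, y * p ∈ Ideal.span G → p ∈ Ideal.span G) (p : MvPolynomial σ K)
    (h : X v * p ∈ Ideal.span G ⊔ Ideal.span {a * y - X v * b}) :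
    p ∈ Ideal.span G ⊔ Ideal.span {a * y - X v * b} := by
  obtain ⟨i, hi, z, hz, e⟩ := Submodule.mem_sup.mp h
  obtain ⟨q, rfl⟩ := Ideal.mem_span_singleton.mp hz
  have e' := congrArg (killVar K v) e
  simp only [map_add, map_mul, map_sub, killVar_X_self, ha, hy, zero_mul, sub_zero] at e'
  have h₁ : killVar K v q ∈ Ideal.span G := by
    apply hregy
    apply hrega
    rw [← mul_assoc, eq_neg_of_add_eq_zero_right e']
    exact neg_mem (killVar_mem hG hi).1
  obtain ⟨q', hq'⟩ := exists_killVar_add (v := v) q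
  have h₂ : X v * (p - (a * y - X v * b) * q') ∈ Ideal.span G := by
    have : X v * (p - (a * y - X v * b) * q') = i + (a * y - X v * b) * killVar K v q := by
      linear_combination - e + (a * y - X v * b) * hq'
    rw [this]
    exact add_mem hi (Ideal.mul_mem_left _ _ h₁)
  have h₃ := X_regular hG h₂
  rw [← sub_add_cancel p ((a * y - X v * b) * q')]
  exact add_mem (Ideal.mem_sup_left h₃)
    (Ideal.mem_sup_right (Ideal.mul_mem_right _ _ (Ideal.mem_span_singleton_self _)))

end killVar

/-- The path binomial `x_k y_{k+1} - x_{k+1} y_k` (vertices are numbered from `0`), with junk value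
`0` when `k + 1` is not a vertex. -/
def pathGen (K : Type) [Field K] (n k : ℕ) : MvPolynomial (Fin n ⊕ Fin n) K :=
  if h : k + 1 < n then
    xv K ⟨k, by omega⟩ * yv K ⟨k + 1, h⟩ - xv K ⟨k + 1, h⟩ * yv K ⟨k, by omega⟩
  else 0

/-- The ideal generated by the first `k` path binomials. -/
def pathI (K : Type) [Field K] (n k : ℕ) : Ideal (MvPolynomial (Fin n ⊕ Fin n) K) :=
  Ideal.span (pathGen K n '' {j | j < k})

section path

variable {K : Type} [Field K] {n : ℕ}

lemma pathI_succ (k : ℕ) : pathI K n (k + 1) = pathI K n k ⊔ Ideal.span {pathGen K n k} := by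
  rw [pathI, pathI, ← Ideal.span_union]
  congr 1
  ext f
  simp only [Set.mem_image, Set.mem_ofPred_eq, Set.union_singleton, Set.mem_insert_iff]
  constructor
  · rintro ⟨j, hj, rfl⟩
    rcases Nat.lt_succ_iff_lt_or_eq.mp hj with hj | rfl
    · exact Or.inr ⟨j, hj, rfl⟩
    · exact Or.inl rfl
  · rintro (rfl | ⟨j, hj, rfl⟩)
    · exact ⟨k, by omega, rfl⟩
    · exact ⟨j, by omega, rfl⟩

lemma killVar_pathGen {k : ℕ} {v : Fin n ⊕ Fin n} 
    (hv : Sum.elim (fun i : Fin n ↦ k < (i : ℕ)) (fun i : Fin n ↦ k < (i : ℕ)) v) :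
    ∀ g ∈ pathGen K n '' {j | j < k}, killVar K v g = g := by
  rintro _ ⟨j, hj, rfl⟩
  simp only [Set.mem_ofPred_eq] at hj
  unfold pathGen
  split_ifs with h
  · have aux (w : Fin n ⊕ Fin n) 
        (hw : Sum.elim (fun i : Fin n ↦ (i : ℕ) ≤ k) (fun i : Fin n ↦ (i : ℕ) ≤ k) w) :
        killVar K v (X w) = X w := by
      apply killVar_X_of_ne
      rintro rfl
      rcases w with w | w <;> simp at hw hv <;> omega
    simp only [xv, yv, map_sub, map_mul]
    rw [aux, aux, aux, aux] <;> simp <;> omega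
  · simp

lemma x_regular_pathI (k : ℕ) (hk : k < n) (p : MvPolynomial (Fin n ⊕ Fin n) K)
    (h : xv K ⟨k, hk⟩ * p ∈ pathI K n k) : p ∈ pathI K n k := by
  induction k generalizing p with
  | zero =>
    simp only [pathI, not_lt_zero, Set.ofPred_false, Set.image_empty, Ideal.span_empty,
      Ideal.mem_bot, mul_eq_zero] at h ⊢
    exact h.resolve_left (X_ne_zero _)
  | succ k ih =>
    rw [pathI_succ, pathGen, dif_pos hk] at h ⊢
    refine X_regular_sup (killVar_pathGen (by simp)) ?_ ?_ (ih (by omega)) ?_ p h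
    · exact killVar_X_of_ne (by simp)
    · exact killVar_X_of_ne (by simp)
    · exact fun p ↦ X_regular (killVar_pathGen (by simp))

/-- Each path binomial is regular modulo the previous ones. -/
lemma pathGen_regular (k : ℕ) (hk : k + 1 < n) (p : MvPolynomial (Fin n ⊕ Fin n) K)
    (h : pathGen K n k * p ∈ pathI K n k) : p ∈ pathI K n k := by
  rw [pathGen, dif_pos hk] at h
  refine linear_regular (killVar_pathGen (by simp)) ?_ ?_ (x_regular_pathI k (by omega)) p h
  · exact killVar_X_of_ne (by simp)
  · rw [map_mul]
    congr 1 <;> exact killVar_X_of_ne (by simp)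

end path

/-! ### Exchanging variables modulo the path ideal -/

section swap

variable {K : Type} [Field K] {n : ℕ}

lemma pathGen_mem {i j : Fin n} (h : (i : ℕ) + 1 = j) :
    xv K i * yv K j - xv K j * yv K i ∈ pathI K n (n - 1) := by
  refine Ideal.subset_span ⟨i, show (i : ℕ) < n - 1 by omega, ?_⟩
  rw [pathGen, dif_pos (by omega)]
  congr!

lemma monomial_add_single (p : Fin n ⊕ Fin n →₀ ℕ) (v : Fin n ⊕ Fin n) :
    monomial (p + Finsupp.single v 1) (1 : K) = X v * monomial p 1 := by
  rw [add_comm, X, monomial_mul, one_mul]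

lemma exists_eq_add_single {p : Fin n ⊕ Fin n →₀ ℕ} {v : Fin n ⊕ Fin n} (h : p v ≠ 0) :
    ∃ q, p = q + Finsupp.single v 1 :=
  ⟨p - Finsupp.single v 1, (tsub_add_cancel_of_le (by
    rw [Finsupp.single_le_iff]; omega)).symm⟩

/-- A monomial involving every vertex strictly between `i` and `j` multiplies
`x_i y_j - x_j y_i` into the path ideal. -/
lemma swap_mem (i j : Fin n) (hij : i < j) (p : Fin n ⊕ Fin n →₀ ℕ)
    (hp : ∀ k, i < k → k < j → p (Sum.inl k) ≠ 0 ∨ p (Sum.inr k) ≠ 0) :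
    (xv K i * yv K j - xv K j * yv K i) * monomial p 1 ∈ pathI K n (n - 1) := by
  obtain ⟨l, hl⟩ : ∃ l : ℕ, (j : ℕ) = i + 1 + l := ⟨j - (i + 1), by omega⟩
  induction l generalizing i p with
  | zero => exact Ideal.mul_mem_right _ _ (pathGen_mem (by omega))
  | succ l ih =>
    let k : Fin n := ⟨i + 1, by omega⟩
    have hik : i < k := Fin.lt_def.mpr (by simp [k])
    have hkj : k < j := Fin.lt_def.mpr (by simp [k]; omega)
    have h₁ : xv K i * yv K k - xv K k * yv K i ∈ pathI K n (n - 1) := pathGen_mem rfl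
    have h₂ (q : Fin n ⊕ Fin n →₀ ℕ) (v : Fin n ⊕ Fin n) (hv : v = Sum.inl k ∨ v = Sum.inr k)
        (hq : p = q + Finsupp.single v 1) :
        (xv K k * yv K j - xv K j * yv K k) * monomial q 1 ∈ pathI K n (n - 1) := by
      refine ih k hkj q (fun k' h h' ↦ ?_) (by simp [k]; omega)
      have := hp k' (hik.trans h) h'
      rcases hv with rfl | rfl <;> simpa [hq, h.ne'] using this
    rcases hp k hik hkj with h | h
    · obtain ⟨q, hq⟩ := exists_eq_add_single h
      have := add_mem (Ideal.mul_mem_left _ (xv K i) (h₂ q _ (Or.inl rfl) hq))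
        (Ideal.mul_mem_left _ (xv K j * monomial q 1) h₁)
      rw [hq, monomial_add_single, ← xv]
      convert this using 1
      ring
    · obtain ⟨q, hq⟩ := exists_eq_add_single h
      have := add_mem (Ideal.mul_mem_left _ (yv K i) (h₂ q _ (Or.inr rfl) hq))
        (Ideal.mul_mem_left _ (yv K j * monomial q 1) h₁)
      rw [hq, monomial_add_single, ← yv]
      convert this using 1
      ring

end swap

/-! ### The multigrading cut out by a set of interior vertices -/

section key

variable {n : ℕ} (T : Finset (Fin n))

/-- The number of elements of `T` preceding the vertex `i`; for vertices outside `T` it labels the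
connected component of the path with `T` removed in which `i` lies. -/
def compIdx (i : Fin n) : ℕ := (T.filter (· < i)).card

/-- The multidegree of a variable: `x_i` has degree `s_i` and `y_i` has degree `s_i + t_c`, where
`c` labels the component of `i`. -/
def varKey : Fin n ⊕ Fin n → (Fin n ⊕ ℕ →₀ ℕ)
  | Sum.inl i => Finsupp.single (Sum.inl i) 1
  | Sum.inr i => Finsupp.single (Sum.inl i) 1 + Finsupp.single (Sum.inr (compIdx T i)) 1

/-- The multidegree of a monomial, additive in the exponent. -/
def key : (Fin n ⊕ Fin n →₀ ℕ) →ₗ[ℕ] (Fin n ⊕ ℕ →₀ ℕ) := Finsupp.linearCombination ℕ (varKey T)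

/-- The interior vertices `0 < i < n - 1` that do not occur in a monomial. -/
def zeros (m : Fin n ⊕ Fin n →₀ ℕ) : Finset (Fin n) :=
  Finset.univ.filter fun i ↦
    (0 < (i : ℕ) ∧ (i : ℕ) < n - 1) ∧ m (Sum.inl i) = 0 ∧ m (Sum.inr i) = 0

variable {T}

lemma key_inl (m : Fin n ⊕ Fin n →₀ ℕ) (i : Fin n) :
    key T m (Sum.inl i) = m (Sum.inl i) + m (Sum.inr i) := by
  simp [key, Finsupp.linearCombination_apply, Finsupp.sum_fintype, varKey, Finsupp.single_apply]

lemma key_inr (m : Fin n ⊕ Fin n →₀ ℕ) (c : ℕ) :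
    key T m (Sum.inr c) = ∑ i, if compIdx T i = c then m (Sum.inr i) else 0 := by
  simp [key, Finsupp.linearCombination_apply, Finsupp.sum_fintype, varKey, Finsupp.single_apply]

lemma zeros_congr {m m' : Fin n ⊕ Fin n →₀ ℕ} (h : key T m = key T m') : zeros m = zeros m' := by
  ext i
  have := DFunLike.congr_fun h (Sum.inl i)
  rw [key_inl, key_inl] at this
  simp only [zeros, Finset.mem_filter, Finset.mem_univ, true_and]
  omega

lemma compIdx_lt {i j k : Fin n} (hk : k ∈ T) (hik : i ≤ k) (hkj : k < j) :
    compIdx T i < compIdx T j := by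
  refine Finset.card_lt_card (Finset.ssubset_iff_of_subset ?_ |>.mpr ⟨k, ?_, ?_⟩)
  · exact fun a ha ↦ by
      simp only [Finset.mem_filter] at ha ⊢
      exact ⟨ha.1, ha.2.trans (hik.trans_lt hkj)⟩
  · simp [hk, hkj]
  · simp [hik]

/-- If two monomials have the same multidegree and the exponent of some `y_i` differs, then within
the component of `i` there is a `y_j` whose exponent differs in the opposite direction. -/
lemma exists_lt_of_key_eq {m m' : Fin n ⊕ Fin n →₀ ℕ} (h : key T m = key T m') {i : Fin n}
    (hi : m' (Sum.inr i) < m (Sum.inr i)) :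
    ∃ j, compIdx T i = compIdx T j ∧ m (Sum.inr j) < m' (Sum.inr j) := by
  by_contra! hcon
  have := DFunLike.congr_fun h (Sum.inr (compIdx T i))
  rw [key_inr, key_inr] at this
  refine this.not_gt (Finset.sum_lt_sum (fun j _ ↦ ?_) ⟨i, Finset.mem_univ _, by simpa⟩)
  split_ifs with hj
  · exact hcon j hj.symm
  · exact le_rfl

/-- Monomials of the same multidegree, in which exactly the interior vertices in `T` are missing,
agree modulo the path ideal: they are connected by exchanges of variables. -/
lemma monomial_sub_mem (K : Type) [Field K] {m m' : Fin n ⊕ Fin n →₀ ℕ} (h : key T m = key T m')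
    (hT : zeros m = T) : monomial m (1 : K) - monomial m' 1 ∈ pathI K n (n - 1) := by
  obtain ⟨N, hN⟩ : ∃ N, ∑ i, (m (Sum.inr i) - m' (Sum.inr i)) = N := ⟨_, rfl⟩
  induction N using Nat.strong_induction_on generalizing m with
  | _ N ih =>
  have hd (k : Fin n) : m (Sum.inl k) + m (Sum.inr k) = m' (Sum.inl k) + m' (Sum.inr k) := by
    simpa only [key_inl] using DFunLike.congr_fun h (Sum.inl k)
  by_cases hle : ∀ i, m (Sum.inr i) ≤ m' (Sum.inr i)
  · have hr (i : Fin n) : m (Sum.inr i) = m' (Sum.inr i) := by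
      refine (hle i).antisymm (not_lt.mp fun hi ↦ ?_)
      obtain ⟨j, -, hj⟩ := exists_lt_of_key_eq h.symm hi
      exact (hle j).not_gt hj
    have : m = m' := by
      ext (i | i)
      · have := hd i
        have := hr i
        omega
      · exact hr i
    simp [this]
  · push Not at hle
    obtain ⟨i, hi⟩ := hle
    obtain ⟨j, hc, hj⟩ := exists_lt_of_key_eq h hi
    have hij : i ≠ j := by rintro rfl; omega
    have hdj := hd j
    obtain ⟨p, hp⟩ := exists_eq_add_single (p := m) (v := Sum.inr i) (by omega)
    obtain ⟨q, hq⟩ := exists_eq_add_single (p := p) (v := Sum.inl j) (by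
      have : p (Sum.inl j) = m (Sum.inl j) := by simp [hp]
      omega)
    subst hq
    let m₁ := q + Finsupp.single (Sum.inr j) 1 + Finsupp.single (Sum.inl i) 1
    have hk : key T m = key T m₁ := by
      rw [hp]
      simp only [m₁, map_add, key, Finsupp.linearCombination_single, varKey, hc, one_smul]
      abel
    have hr (k : Fin n) : m (Sum.inr k) = q (Sum.inr k) + if i = k then 1 else 0 := by
      simp [hp, Finsupp.single_apply]
    have hr₁ (k : Fin n) : m₁ (Sum.inr k) = q (Sum.inr k) + if j = k then 1 else 0 := by
      simp [m₁, Finsupp.single_apply]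
    have hlt : ∑ k, (m₁ (Sum.inr k) - m' (Sum.inr k)) < N := by
      rw [← hN]
      refine Finset.sum_lt_sum (fun k _ ↦ ?_) ⟨i, Finset.mem_univ _, ?_⟩
      · rw [hr, hr₁]
        have := hr j
        rw [if_neg hij] at this
        split_ifs with h₁ h₂ h₂
        · omega
        · subst h₁; omega
        · omega
        · omega
      · have h₁ := hr i
        have h₂ := hr₁ i
        rw [if_pos rfl] at h₁
        rw [if_neg hij.symm] at h₂
        omega
    have hrec := ih _ hlt (hk.symm.trans h) ((zeros_congr hk).symm.trans hT) rfl
    have hocc (a b : Fin n) (hab : (a = i ∧ b = j) ∨ (a = j ∧ b = i)) (k : Fin n) (hak : a < k)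
        (hkb : k < b) : q (Sum.inl k) ≠ 0 ∨ q (Sum.inr k) ≠ 0 := by
      have hkT : k ∉ zeros m := by
        rw [hT]
        intro hkT
        have := compIdx_lt hkT hak.le hkb
        rcases hab with ⟨rfl, rfl⟩ | ⟨rfl, rfl⟩ <;> omega
      have hki : i ≠ k := by rintro rfl; rcases hab with ⟨rfl, rfl⟩ | ⟨rfl, rfl⟩ <;> simp_all
      have hkj : j ≠ k := by rintro rfl; rcases hab with ⟨rfl, rfl⟩ | ⟨rfl, rfl⟩ <;> simp_all
      have hkr := hr k
      have hkl : m (Sum.inl k) = q (Sum.inl k) := by simp [hp, hkj]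
      rw [if_neg hki] at hkr
      simp only [zeros, Finset.mem_filter, Finset.mem_univ, true_and] at hkT
      have : 0 < (k : ℕ) ∧ (k : ℕ) < n - 1 := by
        have := Fin.lt_def.mp hak
        have := Fin.lt_def.mp hkb
        omega
      omega
    have hswap : (xv K i * yv K j - xv K j * yv K i) * monomial q 1 ∈ pathI K n (n - 1) := by
      rcases lt_or_gt_of_ne hij with h' | h'
      · exact swap_mem i j h' q (hocc i j (Or.inl ⟨rfl, rfl⟩))
      · have := neg_mem (swap_mem (K := K) j i h' q (hocc j i (Or.inr ⟨rfl, rfl⟩)))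
        convert this using 1
        ring
    have : monomial m (1 : K) - monomial m' 1 =
        (monomial m₁ 1 - monomial m' 1) - (xv K i * yv K j - xv K j * yv K i) * monomial q 1 := by
      rw [hp]
      simp only [m₁, monomial_add_single, xv, yv]
      ring
    rw [this]
    exact sub_mem hrec hswap

end key

/-! ### Reading off membership in the path ideal -/

section parts

variable (K : Type) [Field K] {n : ℕ} (T : Finset (Fin n))

/-- The parametrization killing the variables at the vertices in `T` and sending `x_i ↦ s_i`,
`y_i ↦ s_i t_c` for the other vertices, where `c` labels the component of `i`. -/
def param : MvPolynomial (Fin n ⊕ Fin n) K →ₐ[K] MvPolynomial (Fin n ⊕ ℕ) K :=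
  aeval fun v ↦ if v.elim id id ∈ T then 0 else monomial (varKey T v) 1

/-- The sum of the terms of a polynomial whose monomials miss exactly the interior vertices
in `T`. -/
def part : MvPolynomial (Fin n ⊕ Fin n) K →ₗ[K] MvPolynomial (Fin n ⊕ Fin n) K :=
  (basisMonomials (Fin n ⊕ Fin n) K).constr K fun m ↦ if zeros m = T then monomial m 1 else 0

variable {K T}

lemma part_monomial (m : Fin n ⊕ Fin n →₀ ℕ) :
    part K T (monomial m 1) = if zeros m = T then monomial m 1 else 0 := by
  have := (basisMonomials (Fin n ⊕ Fin n) K).constr_basis K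
    (fun m ↦ if zeros m = T then monomial m (1 : K) else 0) m
  rwa [coe_basisMonomials] at this

lemma sum_part (h : MvPolynomial (Fin n ⊕ Fin n) K) : ∑ T : Finset (Fin n), part K T h = h := by
  have : ∑ T : Finset (Fin n), part K T = LinearMap.id := by
    refine (basisMonomials (Fin n ⊕ Fin n) K).ext fun m ↦ ?_
    simp [coe_basisMonomials, part_monomial]
  simpa using DFunLike.congr_fun this h

lemma param_X_of_mem {v : Fin n ⊕ Fin n} (hv : v.elim id id ∈ T) : param K T (X v) = 0 := by
  simp [param, hv]

lemma param_X_of_notMem {v : Fin n ⊕ Fin n} (hv : v.elim id id ∉ T) :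
    param K T (X v) = monomial (varKey T v) 1 := by
  simp [param, hv]

lemma param_monomial_of_disjoint {m : Fin n ⊕ Fin n →₀ ℕ}
    (hm : ∀ i ∈ T, m (Sum.inl i) = 0 ∧ m (Sum.inr i) = 0) :
    param K T (monomial m 1) = monomial (key T m) 1 := by
  rw [param, aeval_monomial, map_one, one_mul, key, Finsupp.linearCombination_apply,
    Finsupp.sum, monomial_sum_one]
  refine Finset.prod_congr rfl fun v hv ↦ ?_
  beta_reduce
  rw [if_neg, monomial_pow, one_pow]
  intro hT
  rw [Finsupp.mem_support_iff] at hv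
  rcases v with i | i
  · exact hv (hm i hT).1
  · exact hv (hm i hT).2

lemma param_monomial_eq_zero {m : Fin n ⊕ Fin n →₀ ℕ} {v : Fin n ⊕ Fin n} (hv : v.elim id id ∈ T)
    (hm : m v ≠ 0) : param K T (monomial m 1) = 0 := by
  obtain ⟨q, rfl⟩ := exists_eq_add_single hm
  rw [monomial_add_single, map_mul, param_X_of_mem hv, zero_mul]

/-- The `T`-part of a polynomial in the kernel of the parametrization belonging to `T` lies in the
path ideal. -/
lemma part_mem {h : MvPolynomial (Fin n ⊕ Fin n) K} (hh : param K T h = 0) :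
    part K T h ∈ pathI K n (n - 1) := by
  classical
  -- A partial inverse of the parametrization modulo the path ideal, well defined on multidegrees
  -- because monomials of the same multidegree are congruent.
  let ψ : MvPolynomial (Fin n ⊕ ℕ) K →ₗ[K] MvPolynomial (Fin n ⊕ Fin n) K ⧸ pathI K n (n - 1) :=
    (basisMonomials (Fin n ⊕ ℕ) K).constr K fun k ↦
      if hk : ∃ m, zeros m = T ∧ key T m = k then Ideal.Quotient.mk _ (monomial hk.choose 1) else 0
  have hψ (k) : ψ (monomial k 1) = if hk : ∃ m, zeros m = T ∧ key T m = k then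
      Ideal.Quotient.mk _ (monomial hk.choose 1) else 0 := by
    have := (basisMonomials (Fin n ⊕ ℕ) K).constr_basis K (fun k ↦
      if hk : ∃ m, zeros m = T ∧ key T m = k then
        Ideal.Quotient.mk (pathI K n (n - 1)) (monomial hk.choose 1) else 0) k
    rwa [coe_basisMonomials] at this
  have key : ψ ∘ₗ (param K T).toLinearMap =
      (Ideal.Quotient.mkₐ K (pathI K n (n - 1))).toLinearMap ∘ₗ part K T := by
    refine (basisMonomials (Fin n ⊕ Fin n) K).ext fun m ↦ ?_
    simp only [coe_basisMonomials, LinearMap.comp_apply, AlgHom.toLinearMap_apply, part_monomial,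
      Ideal.Quotient.mkₐ_eq_mk]
    by_cases hm : ∀ i ∈ T, m (Sum.inl i) = 0 ∧ m (Sum.inr i) = 0
    · rw [param_monomial_of_disjoint hm, hψ]
      by_cases hZ : zeros m = T
      · have hk : ∃ m', zeros m' = T ∧ key T m' = key T m := ⟨m, hZ, rfl⟩
        rw [dif_pos hk, if_pos hZ, Ideal.Quotient.eq]
        exact monomial_sub_mem K hk.choose_spec.2 hk.choose_spec.1
      · rw [dif_neg, if_neg hZ, map_zero]
        rintro ⟨m', h₁, h₂⟩
        exact hZ ((zeros_congr h₂).symm.trans h₁)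
    · rw [if_neg, map_zero]
      · push Not at hm
        obtain ⟨i, hi, hm⟩ := hm
        by_cases h₀ : m (Sum.inl i) = 0
        · rw [param_monomial_eq_zero (v := Sum.inr i) hi (hm h₀), map_zero]
        · rw [param_monomial_eq_zero (v := Sum.inl i) hi h₀, map_zero]
      · rintro rfl
        exact hm fun i hi ↦ (Finset.mem_filter.mp hi).2.2
  have := DFunLike.congr_fun key h
  simp only [LinearMap.comp_apply, AlgHom.toLinearMap_apply, hh, map_zero] at this
  exact Ideal.Quotient.eq_zero_iff_mem.mp this.symm

lemma param_binomial {i j : Fin n} (h : i ∈ T ∨ j ∈ T ∨ compIdx T i = compIdx T j) :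
    param K T (xv K i * yv K j - xv K j * yv K i) = 0 := by
  simp only [xv, yv, map_sub, map_mul]
  by_cases hi : i ∈ T
  · rw [param_X_of_mem (v := Sum.inl i) hi, param_X_of_mem (v := Sum.inr i) hi, zero_mul, mul_zero,
      sub_zero]
  by_cases hj : j ∈ T
  · rw [param_X_of_mem (v := Sum.inl j) hj, param_X_of_mem (v := Sum.inr j) hj, zero_mul, mul_zero,
      sub_zero]
  rw [param_X_of_notMem (v := Sum.inl i) hi, param_X_of_notMem (v := Sum.inr i) hi,
    param_X_of_notMem (v := Sum.inl j) hj, param_X_of_notMem (v := Sum.inr j) hj, monomial_mul,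
    monomial_mul, varKey, varKey, varKey, varKey, (h.resolve_left hi).resolve_left hj, sub_eq_zero]
  rw [add_left_comm]

lemma pathI_le_ker : pathI K n (n - 1) ≤ RingHom.ker (param K T) := by
  refine Ideal.span_le.mpr ?_
  rintro _ ⟨k, hk, rfl⟩
  simp only [Set.mem_ofPred_eq] at hk
  rw [SetLike.mem_coe, RingHom.mem_ker, pathGen, dif_pos (by omega)]
  apply param_binomial
  by_cases h : (⟨k, by omega⟩ : Fin n) ∈ T
  · exact Or.inl h
  · refine Or.inr (Or.inr (congrArg Finset.card (Finset.filter_congr fun a ha ↦ ?_)))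
    have : a ≠ ⟨k, by omega⟩ := by rintro rfl; exact h ha
    simp only [Fin.lt_def, ne_eq, Fin.ext_iff] at this ⊢
    omega

lemma bei_le_ker : bei K (⊤ : SimpleGraph (Fin n)) ≤ RingHom.ker (param K (∅ : Finset (Fin n))) := by
  refine Ideal.span_le.mpr ?_
  rintro _ ⟨i, j, -, -, rfl⟩
  exact param_binomial (by simp [compIdx])

lemma binomial_mem_bei {i j : Fin n} (h : i < j) :
    xv K i * yv K j - xv K j * yv K i ∈ bei K (⊤ : SimpleGraph (Fin n)) :=
  Ideal.subset_span ⟨i, j, h, by simpa using h.ne, rfl⟩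

lemma pathGen_mem_bei (k : ℕ) : pathGen K n k ∈ bei K (⊤ : SimpleGraph (Fin n)) := by
  rw [pathGen]
  split_ifs with h
  · exact binomial_mem_bei (Fin.lt_def.mpr (by simp))
  · exact zero_mem _

lemma pathI_le_bei : pathI K n (n - 1) ≤ bei K (⊤ : SimpleGraph (Fin n)) := by
  refine Ideal.span_le.mpr ?_
  rintro _ ⟨k, -, rfl⟩
  exact pathGen_mem_bei k

lemma part_eq_zero (hT : ¬ ∀ i ∈ T, 0 < (i : ℕ) ∧ (i : ℕ) < n - 1)
    (h : MvPolynomial (Fin n ⊕ Fin n) K) : part K T h = 0 := by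
  have : part K T = 0 := by
    refine (basisMonomials (Fin n ⊕ Fin n) K).ext fun m ↦ ?_
    rw [coe_basisMonomials, part_monomial, if_neg, LinearMap.zero_apply]
    rintro rfl
    exact hT fun i hi ↦ (Finset.mem_filter.mp hi).2.1
  rw [this, LinearMap.zero_apply]

/-- If `h` multiplies the binomial of the two end vertices into the path ideal, then all its parts
belonging to nonempty `T` lie in the path ideal: the end vertices lie in different components of the
path with `T` removed, so their binomial is not in the kernel of the parametrization. -/
lemma part_mem_of_mul_mem (hT : T.Nonempty) {i j : Fin n} (hi : (i : ℕ) = 0)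
    (hj : (j : ℕ) = n - 1) {h : MvPolynomial (Fin n ⊕ Fin n) K}
    (hh : h * (xv K i * yv K j - xv K j * yv K i) ∈ pathI K n (n - 1)) :
    part K T h ∈ pathI K n (n - 1) := by
  by_cases hTint : ∀ i ∈ T, 0 < (i : ℕ) ∧ (i : ℕ) < n - 1
  · apply part_mem
    have := pathI_le_ker (T := T) hh
    rw [RingHom.mem_ker, map_mul, mul_eq_zero] at this
    refine this.resolve_right fun h₀ ↦ ?_
    have hiT : i ∉ T := fun h ↦ by have := hTint i h; omega
    have hjT : j ∉ T := fun h ↦ by have := hTint j h; omega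
    simp only [xv, yv, map_sub, map_mul] at h₀
    rw [param_X_of_notMem (v := Sum.inl i) hiT, param_X_of_notMem (v := Sum.inr i) hiT,
      param_X_of_notMem (v := Sum.inl j) hjT, param_X_of_notMem (v := Sum.inr j) hjT, monomial_mul,
      monomial_mul, one_mul, sub_eq_zero] at h₀
    have h₁ := monomial_left_injective (R := K) one_ne_zero h₀
    obtain ⟨t, ht⟩ := hT
    have hlt := compIdx_lt ht (i := i) (j := j) (Fin.le_def.mpr (by omega))
      (Fin.lt_def.mpr (by have := hTint t ht; omega))
    have := DFunLike.congr_fun h₁ (Sum.inr (compIdx T j))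
    simp [varKey, hlt.ne] at this
  · rw [part_eq_zero hTint]
    exact zero_mem _

end parts

/-! ### The linkage of the ideal of minors by the path ideal -/

section linkage

variable (K : Type) [Field K] {n : ℕ}

/-- The interior vertices `0 < q < n - 1`. -/
def interior (n : ℕ) : Finset (Fin n) :=
  Finset.univ.filter fun q ↦ 0 < (q : ℕ) ∧ (q : ℕ) < n - 1

/-- The exponent of the monomial having at each interior vertex `q` the factor `x_q` or `y_q`,
according to whether `P q` holds. -/
def choiceExp (P : Fin n → Prop) [DecidablePred P] : Fin n ⊕ Fin n →₀ ℕ :=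
  ∑ q ∈ interior n, Finsupp.single (if P q then Sum.inl q else Sum.inr q) 1

lemma choiceExp_apply (P : Fin n → Prop) [DecidablePred P] {q : Fin n} (hq : q ∈ interior n)
    {v : Fin n ⊕ Fin n} (hv : v.elim id id = q) :
    choiceExp P v = if (if P q then Sum.inl q else Sum.inr q) = v then 1 else 0 := by
  rw [choiceExp, Finsupp.finsetSum_apply, Finset.sum_eq_single q]
  · rw [Finsupp.single_apply]
  · intro b _ hb
    rw [Finsupp.single_apply, if_neg]
    rintro rfl
    apply hb
    rw [← hv]
    split_ifs <;> rfl
  · exact fun h ↦ (h hq).elim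

lemma mgen_eq (i : ℕ) : mgen K n i = monomial (choiceExp fun q : Fin n ↦ (q : ℕ) + 1 ≤ i) 1 := by
  rw [choiceExp, monomial_sum_one, mgen]
  refine Finset.prod_congr rfl fun q _ ↦ ?_
  split_ifs <;> rfl

lemma choiceExp_ne_zero (P : Fin n → Prop) [DecidablePred P] {q : Fin n} (hq : q ∈ interior n) :
    choiceExp P (Sum.inl q) ≠ 0 ∨ choiceExp P (Sum.inr q) ≠ 0 := by
  rw [choiceExp_apply P hq rfl, choiceExp_apply P hq rfl]
  by_cases h : P q <;> simp [h]

lemma zeros_choiceExp (P : Fin n → Prop) [DecidablePred P] : zeros (choiceExp P) = ∅ := by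
  rw [zeros, Finset.filter_eq_empty_iff]
  rintro q - ⟨hq, h₁, h₂⟩
  have := choiceExp_ne_zero P (q := q) (by simpa [interior] using hq)
  tauto

lemma key_choiceExp (P : Fin n → Prop) [DecidablePred P] :
    key ∅ (choiceExp P) = ∑ q ∈ interior n, Finsupp.single (Sum.inl q) 1 +
      ((interior n).filter (¬ P ·)).card • Finsupp.single (Sum.inr 0) 1 := by
  rw [choiceExp, map_sum, Finset.card_filter, Finset.sum_smul, ← Finset.sum_add_distrib]
  refine Finset.sum_congr rfl fun q _ ↦ ?_
  rw [key, Finsupp.linearCombination_single, one_smul]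
  split_ifs <;> simp [varKey, compIdx]

lemma card_interior_filter (a : ℕ) (ha : 0 < a) :
    ((interior n).filter fun q : Fin n ↦ a ≤ (q : ℕ)).card = n - 1 - a := by
  rw [← Nat.card_Ico, ← Finset.card_map Fin.valEmbedding]
  congr 1
  ext b
  simp only [interior, Finset.mem_map, Finset.mem_filter, Finset.mem_univ, true_and,
    Fin.valEmbedding_apply, Finset.mem_Ico]
  constructor
  · rintro ⟨q, hq, rfl⟩
    omega
  · intro hb
    exact ⟨⟨b, by omega⟩, ⟨by simp; omega, hb.1⟩, rfl⟩

/-- A monomial involving all interior vertices lies in `M` modulo the path ideal. -/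
lemma monomial_mem (hn : 2 ≤ n) {m : Fin n ⊕ Fin n →₀ ℕ} (hm : zeros m = ∅) :
    monomial m (1 : K) ∈ pathI K n (n - 1) ⊔ monoM K n := by
  classical
  let P : Fin n → Prop := fun q ↦ m (Sum.inl q) ≠ 0
  obtain ⟨q, hq⟩ : ∃ q, m = q + choiceExp P := by
    refine ⟨m - choiceExp P, (tsub_add_cancel_of_le fun v ↦ ?_).symm⟩
    by_cases hv : v.elim id id ∈ interior n
    · rw [choiceExp_apply P hv rfl]
      have : v.elim id id ∉ zeros m := by simp [hm]
      simp only [zeros, Finset.mem_filter, Finset.mem_univ, true_and] at this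
      simp only [interior, Finset.mem_filter, Finset.mem_univ, true_and] at hv
      split_ifs with h₁ h₂ h₂
      · rw [← h₂]; exact Nat.one_le_iff_ne_zero.mpr h₁
      · exact Nat.zero_le _
      · have h₀ : m (Sum.inl (v.elim id id)) = 0 := not_not.mp h₁
        rw [← h₂]
        omega
      · exact Nat.zero_le _
    · rw [choiceExp, Finsupp.finsetSum_apply, Finset.sum_eq_zero]
      · exact Nat.zero_le _
      · intro b hb
        rw [Finsupp.single_apply, if_neg]
        rintro rfl
        apply hv
        split_ifs <;> exact hb
  set e := ((interior n).filter (¬ P ·)).card with he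
  have he' : e ≤ n - 2 := by
    have h₁ := card_interior_filter (n := n) 1 one_pos
    have h₂ : e ≤ ((interior n).filter fun q : Fin n ↦ 1 ≤ (q : ℕ)).card := by
      refine Finset.card_le_card fun q hq ↦ ?_
      simp only [interior, Finset.mem_filter] at hq ⊢
      exact ⟨hq.1, hq.1.2.1⟩
    omega
  have hkey : key ∅ (choiceExp P) =
      key ∅ (choiceExp fun q : Fin n ↦ (q : ℕ) + 1 ≤ n - 1 - e) := by
    rw [key_choiceExp, key_choiceExp, ← he]
    congr 2
    simp only [not_le, Nat.lt_succ_iff]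
    rw [card_interior_filter _ (by omega)]
    omega
  have h₁ := Ideal.mul_mem_left _ (monomial q 1)
    (monomial_sub_mem K hkey (zeros_choiceExp P))
  have h₂ : mgen K n (n - 1 - e) ∈ monoM K n :=
    Ideal.subset_span ⟨_, by omega, by omega, rfl⟩
  rw [mgen_eq] at h₂
  have := add_mem (Ideal.mem_sup_left h₁) (Ideal.mem_sup_right (Ideal.mul_mem_left _
    (monomial q 1) h₂))
  rw [mul_sub, sub_add_cancel, monomial_mul, one_mul, ← hq] at this
  exact this

lemma part_empty_mem (hn : 2 ≤ n) (h : MvPolynomial (Fin n ⊕ Fin n) K) :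
    part K ∅ h ∈ pathI K n (n - 1) ⊔ monoM K n := by
  rw [h.as_sum, map_sum]
  refine sum_mem fun m _ ↦ ?_
  rw [← mul_one (coeff m h), ← smul_eq_mul, ← smul_monomial, map_smul, part_monomial]
  refine Submodule.smul_of_tower_mem _ _ ?_
  split_ifs with hm
  · exact monomial_mem K hn hm
  · exact zero_mem _

/-- The path ideal `I` links the ideal of minors `J` to `I + M`: one has `I : J = I + M`. -/
lemma colon_eq (hn : 2 ≤ n) (h : MvPolynomial (Fin n ⊕ Fin n) K) :
    (∀ g ∈ bei K (⊤ : SimpleGraph (Fin n)), h * g ∈ pathI K n (n - 1)) ↔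
      h ∈ pathI K n (n - 1) ⊔ monoM K n := by
  constructor
  · intro hh
    rw [← sum_part h]
    refine sum_mem fun T _ ↦ ?_
    rcases T.eq_empty_or_nonempty with rfl | hT
    · exact part_empty_mem K hn h
    · exact Ideal.mem_sup_left (part_mem_of_mul_mem hT (i := ⟨0, by omega⟩)
        (j := ⟨n - 1, by omega⟩) rfl rfl (hh _ (binomial_mem_bei (Fin.lt_def.mpr (by simp; omega)))))
  · intro hh g hg
    obtain ⟨a, ha, b, hb, rfl⟩ := Submodule.mem_sup.mp hh
    rw [add_mul]
    refine add_mem (Ideal.mul_mem_right _ _ ha) ?_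
    have : monoM K n * bei K (⊤ : SimpleGraph (Fin n)) ≤ pathI K n (n - 1) := by
      rw [monoM, bei, Ideal.span_mul_span', Ideal.span_le]
      rintro _ ⟨_, ⟨k, -, -, rfl⟩, _, ⟨i, j, hij, -, rfl⟩, rfl⟩
      change _ * _ ∈ _
      rw [mgen_eq, mul_comm]
      refine swap_mem i j hij _ fun q hiq hqj ↦ choiceExp_ne_zero _ ?_
      simp only [interior, Finset.mem_filter, Finset.mem_univ, true_and, Fin.lt_def] at *
      omega
    exact this (Ideal.mul_mem_mul hb hg)

/-- With `I` the path ideal and `J` the ideal of minors, `(I + M) ∩ J = I`. -/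
lemma mem_pathI (hn : 2 ≤ n) {h : MvPolynomial (Fin n ⊕ Fin n) K}
    (hM : h ∈ pathI K n (n - 1) ⊔ monoM K n) (hJ : h ∈ bei K (⊤ : SimpleGraph (Fin n))) :
    h ∈ pathI K n (n - 1) := by
  rw [← sum_part h]
  refine sum_mem fun T _ ↦ ?_
  rcases T.eq_empty_or_nonempty with rfl | hT
  · exact part_mem (bei_le_ker hJ)
  · exact part_mem_of_mul_mem hT (i := ⟨0, by omega⟩) (j := ⟨n - 1, by omega⟩) rfl rfl
      ((colon_eq K hn h).mpr hM _ (binomial_mem_bei (Fin.lt_def.mpr (by simp; omega))))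

end linkage

/-! ### The canonical module -/

/-- If `N = I : J` with `I ≤ J` and `N ∩ J = I`, then `Hom(R/J, R/I) ≅ N/I ≅ (J + N)/J`. -/
lemma nonempty_hom_equiv {R : Type} [CommRing R] (I J N : Ideal R) (hIJ : I ≤ J)
    (hN : ∀ h, (∀ g ∈ J, h * g ∈ I) ↔ h ∈ N) (hNJ : ∀ h ∈ N, h ∈ J → h ∈ I) :
    Nonempty (((R ⧸ J) →ₗ[R] (R ⧸ I)) ≃ₗ[R] Submodule.map (Algebra.linearMap R (R ⧸ J)) N) := by
  have hN' (h : N) : J ≤ LinearMap.ker (LinearMap.toSpanSingleton R (R ⧸ I)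
      (Submodule.Quotient.mk h.1)) := fun g hg ↦ by
    rw [LinearMap.mem_ker, LinearMap.toSpanSingleton_apply, ← Submodule.Quotient.mk_smul,
      Submodule.Quotient.mk_eq_zero, smul_eq_mul, mul_comm]
    exact (hN h.1).mpr h.2 g hg
  let f : N →ₗ[R] ((R ⧸ J) →ₗ[R] (R ⧸ I)) :=
    { toFun h := Submodule.liftQ J _ (hN' h)
      map_add' h h' := by
        refine LinearMap.ext fun x ↦ ?_
        obtain ⟨r, rfl⟩ := Submodule.Quotient.mk_surjective _ x
        exact congrArg Submodule.Quotient.mk (mul_add r h.1 h'.1)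
      map_smul' s h := by
        refine LinearMap.ext fun x ↦ ?_
        obtain ⟨r, rfl⟩ := Submodule.Quotient.mk_surjective _ x
        exact congrArg Submodule.Quotient.mk (mul_left_comm r s h.1) }
  have hf_apply (h : N) (r : R) :
      f h (Submodule.Quotient.mk r) = Submodule.Quotient.mk (r * h.1) := rfl
  have hf : Function.Surjective f := fun φ ↦ by
    obtain ⟨h, hh⟩ := Submodule.Quotient.mk_surjective _ (φ (Submodule.Quotient.mk 1))
    have key (r : R) : φ (Submodule.Quotient.mk r) = Submodule.Quotient.mk (r * h) := by
      rw [← smul_eq_mul, Submodule.Quotient.mk_smul, hh, ← map_smul, ← Submodule.Quotient.mk_smul,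
        smul_eq_mul, mul_one]
    refine ⟨⟨h, (hN h).mp fun g hg ↦ ?_⟩, ?_⟩
    · rw [mul_comm, ← Submodule.Quotient.mk_eq_zero I, ← key,
        (Submodule.Quotient.mk_eq_zero J).mpr hg, map_zero]
    · ext
      exact (hf_apply _ 1).trans (key 1).symm
  let g : N →ₗ[R] (R ⧸ J) := Algebra.linearMap R (R ⧸ J) ∘ₗ N.subtype
  have hg : LinearMap.range g = Submodule.map (Algebra.linearMap R (R ⧸ J)) N := by
    rw [LinearMap.range_comp, Submodule.range_subtype]
  have hker : LinearMap.ker f = LinearMap.ker g := by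
    ext h
    have h₁ : f h = 0 ↔ h.1 ∈ I := by
      rw [← Submodule.Quotient.mk_eq_zero I]
      constructor
      · intro hh
        have := hf_apply h 1
        rwa [hh, one_mul, LinearMap.zero_apply, eq_comm] at this
      · intro hh
        ext
        refine (hf_apply h 1).trans ?_
        rw [one_mul, hh]
        rfl
    have h₂ : g h = 0 ↔ h.1 ∈ J := Ideal.Quotient.eq_zero_iff_mem
    rw [LinearMap.mem_ker, LinearMap.mem_ker, h₁, h₂]
    exact ⟨fun h' ↦ hIJ h', hNJ h.1 h.2⟩
  exact ⟨(f.quotKerEquivOfSurjective hf).symm ≪≫ₗ Submodule.quotEquivOfEq _ _ hker ≪≫ₗ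
    g.quotKerEquivRange ≪≫ₗ LinearEquiv.ofEq _ _ hg⟩

/-- Let `n ≥ 3`, let `J_G̃` be the binomial edge ideal of the
complete graph on `[n]`, and let `M` be the monomial ideal generated by the `n−1`
monomials `x_2 x_3 ⋯ x_i y_{i+1} ⋯ y_{n−1}` for `i = 1, …, n−1`.  Then the
canonical module `ω(S/J_G̃) = Ext_S^{n−1}(S/J_G̃, S)` is isomorphic, as an
`S/J_G̃`-module (equivalently, as an `S`-module; up to a shift in grading), to
`(J_G̃, M)/J_G̃`, the image of `J_G̃ + M` in `S/J_G̃`. -/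
theorem statement14 (K : Type) [Field K] (n : ℕ) (hn : 3 ≤ n) :
    Nonempty
      ((extSI K (bei K (⊤ : SimpleGraph (Fin n))) (n - 1)) ≃ₗ[MvPolynomial (Fin n ⊕ Fin n) K]
        (Submodule.map
          (Algebra.linearMap (MvPolynomial (Fin n ⊕ Fin n) K)
            (MvPolynomial (Fin n ⊕ Fin n) K ⧸ bei K (⊤ : SimpleGraph (Fin n))))
          ((bei K (⊤ : SimpleGraph (Fin n)) ⊔ monoM K n :
            Ideal (MvPolynomial (Fin n ⊕ Fin n) K)) :
              Submodule (MvPolynomial (Fin n ⊕ Fin n) K)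
                (MvPolynomial (Fin n ⊕ Fin n) K)))) := by
  let S := MvPolynomial (Fin n ⊕ Fin n) K
  let J : Ideal S := bei K (⊤ : SimpleGraph (Fin n))
  let I : Ideal S := pathI K n (n - 1)
  let N : Ideal S := I ⊔ monoM K n
  have hIJ : I ≤ J := pathI_le_bei
  let A : ModuleCat S := ModuleCat.of S (S ⧸ J)
  -- `S` is the quotient by the ideal generated by the empty sequence of path binomials.
  have hbot : pathI K n 0 = (⊥ : Ideal S) := by simp [pathI]
  let e₀ : ModuleCat.of S S ≅ ModuleCat.of S (S ⧸ pathI K n 0) :=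
    (Submodule.quotEquivOfEqBot _ hbot).symm.toModuleIso
  let e₁ : extSI K J (n - 1) ≃ₗ[S]
      (((Ext S (ModuleCat S) (n - 1)).obj (op A)).obj (ModuleCat.of S (S ⧸ pathI K n 0))) :=
    (((Ext S (ModuleCat S) (n - 1)).obj (op A)).mapIso e₀).toLinearEquiv
  obtain ⟨e₂⟩ : Nonempty ((((Ext S (ModuleCat S) (n - 1)).obj (op A)).obj
      (ModuleCat.of S (S ⧸ pathI K n 0))) ≃ₗ[S]
        Abelian.Ext A (ModuleCat.of S (S ⧸ pathI K n 0)) (n - 1)) := by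
    obtain ⟨p, hp⟩ : ∃ p, n - 1 = p + 1 := ⟨n - 2, by omega⟩
    rw [hp]
    exact nonempty_ext_equiv A _ p
  obtain ⟨-, ⟨e₃⟩⟩ := rees A (n - 1) (pathI K n) (pathGen K n) (fun k _ ↦ pathI_succ k)
    (fun k hk ↦ pathGen_regular k (by omega)) (fun k _ x ↦ by
      obtain ⟨s, rfl⟩ := Submodule.Quotient.mk_surjective _ x
      rw [← Submodule.Quotient.mk_smul, Submodule.Quotient.mk_eq_zero]
      exact Ideal.mul_mem_right _ _ (pathGen_mem_bei k))
  obtain ⟨e₄⟩ := nonempty_hom_equiv I J N hIJ (colon_eq K (by omega))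
    (fun h ↦ mem_pathI K (by omega))
  have hmap : Submodule.map (Algebra.linearMap S (S ⧸ J)) N =
      Submodule.map (Algebra.linearMap S (S ⧸ J)) (J ⊔ monoM K n) := by
    have hJ (L : Ideal S) (hL : L ≤ J) : Submodule.map (Algebra.linearMap S (S ⧸ J)) L = ⊥ :=
      le_bot_iff.mp (Submodule.map_le_iff_le_comap.mpr fun s hs ↦
        Ideal.Quotient.eq_zero_iff_mem.mpr (hL hs))
    rw [Submodule.map_sup, Submodule.map_sup, hJ I hIJ, hJ J le_rfl]
  exact ⟨e₁ ≪≫ₗ e₂ ≪≫ₗ e₃ ≪≫ₗ e₄ ≪≫ₗ LinearEquiv.ofEq _ _ hmap⟩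

end BEIPaper
end
end

section
/- Let n ≥ 3, let J_G̃ be the binomial edge ideal of the complete graph on [n], and let M be the monomial ideal generated by the n−1 monomials x_2 x_3 ⋯ x_i y_{i+1} ⋯ y_{n−1} for i = 1, …, n−1. Then S/(J_G̃, M) is a Gorenstein ring of Krull dimension n. -/
/-!
Write `n = N + 1`, index the variables from `0`, let `J` be the ideal of `2 × 2` minors and
`I = J + M`.

**The residue pairing.** `J` is the kernel of the parametrization
`x_i ↦ θ_i + θ_{i-1} T + ⋯ + θ_0 T ^ i`, `y_i ↦ T x_i` into `K[θ_0, …, θ_N][T]`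
(`par_eq_zero_iff`). With `θ_0 = x_0` and `θ_{i+1} = x_{i+1} - y_i`, the subring
`A = K[θ_0, …, θ_N, y_N]` is a Noether normalization of `S / J`, and `S / J` is `A`-free on
`1, y_0, …, y_{N-1}`. The generators `g_0, …, g_{N-1}` of `M` map to `Π T ^ (N-1), …, Π T, Π`, where
`Π` is the product of the images of `x_1, …, x_{N-1}`. It follows that `I / J` is `A`-free on
`w = y_0 g_0`, with image `Π θ_0 T ^ N`, and the `g_i`. Moreover the coefficient of `w` in `y_i g_j` is
`1` for `i = j` and `0` otherwise (`isPairing`). Hence the coefficient of `w` gives a perfect pairing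
`S / J × I / J → A`; in other words `I / J` is the canonical module `Hom_A(S / J, A)` of `S / J`, and
a quotient of a Cohen-Macaulay ring by a canonical ideal is Gorenstein of one dimension less.

**Depth and dimension.** In `0 → I / J → S / J → S / I → 0` the first two modules are free over the
polynomial ring `A` of dimension `n + 1`, so the long exact sequence of `Ext` gives depth at least `n`.
As `I` contains a nonzero `δ ∈ A`, the dimension is at most `n` (`depth_dim_of_isPairing`).

**The canonical module.** Take such a `δ` and integral equations `f_i` of the `y_i` over `A`
modulo `J`. As `S = A[y_0, …, y_{N-1}]`, the elements `δ, f_i(y_i)` form a regular sequence `rs` of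
length `n` in `I`, and `S / (rs)` carries an explicit `A / δ`-valued Frobenius form (`exists_isFrob`).
Comparison with the residue pairing gives an element `u` with `(rs : I) = (rs) + (u)` and
`(rs : u) = I` (`IsPairing.exists_link`). Therefore
`Ext^n(S / I, S) ≃ Hom(S / I, S / (rs)) ≃ S / I` (`ext_of_isWeaklyRegular`, `hom_equiv_of_link`).
-/

open MvPolynomial CategoryTheory Opposite

noncomputable section

namespace BEIPaper

/-! ### Regular sequences and `Ext` -/

section ExtShift

open RingTheory.Sequence

variable {R : Type} [CommRing R]

/-- The annihilator of `N` annihilates `Ext(N, -)`. -/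
lemma ext_smul_eq_zero_s15 {M N : ModuleCat.{0} R} {r : R} (hr : r ∈ Module.annihilator R N) {i : ℕ}
    (x : Abelian.Ext N M i) : r • x = 0 := by
  have h := Abelian.Ext.postcomp_smul_id_eq_zero_of_mem_annihilator (M := M) hr i
  have := congrArg (fun f => f.hom x) h
  simpa [← Abelian.Ext.smul_eq_comp_mk₀] using this

/-- If `rs` is weakly regular on `M` and annihilates `N`, then the modules `Ext^i(N, M)` vanish
for `i < rs.length`, and `Ext^{rs.length}(N, M)` is `Hom(N, M / rs M)`. -/
lemma ext_of_isWeaklyRegular (N : ModuleCat.{0} R) (rs : List R) :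
    ∀ (M : ModuleCat.{0} R), IsWeaklyRegular M rs → (∀ r ∈ rs, r ∈ Module.annihilator R N) →
      (∀ i < rs.length, Subsingleton (Abelian.Ext N M i)) ∧
      Nonempty (Abelian.Ext N M rs.length ≃ₗ[R]
        (N →ₗ[R] (M ⧸ (Ideal.ofList rs • (⊤ : Submodule R M))))) := by
  induction rs with
  | nil =>
    intro M _ _
    refine ⟨by simp, ⟨Abelian.Ext.linearEquiv₀ (R := R) ≪≫ₗ ModuleCat.homLinearEquiv (S := R) ≪≫ₗ
      LinearEquiv.congrRight (Submodule.quotEquivOfEqBot _ (by simp)).symm⟩⟩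
  | cons r rs ih =>
    intro M hreg hann
    rw [isWeaklyRegular_cons_iff] at hreg
    obtain ⟨hr, hrs⟩ := hreg
    have hr0 := hann r (by simp)
    obtain ⟨hv, ⟨e⟩⟩ := ih (ModuleCat.of R (QuotSMulTop r M)) hrs
      (fun s hs => hann s (by simp [hs]))
    have hS := hr.smulShortComplex_shortExact
    have hf : ∀ (i : ℕ) (x : Abelian.Ext N M i),
        x.comp (Abelian.Ext.mk₀ (ModuleCat.smulShortComplex M r).f) (add_zero i) = 0 := by
      intro i x
      rw [ModuleCat.smulShortComplex_f_eq_smul_id]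
      exact (Abelian.Ext.smul_eq_comp_mk₀ x r).symm.trans (ext_smul_eq_zero_s15 hr0 x)
    have hvan : ∀ i < rs.length + 1, Subsingleton (Abelian.Ext N M i) := by
      intro i hi
      refine subsingleton_of_forall_eq 0 fun x => ?_
      match i, hi, x with
      | 0, _, x =>
        have := hS.mono_f
        refine Abelian.Ext.postcomp_mk₀_injective_of_mono N
          (ModuleCat.smulShortComplex M r).f ?_
        exact (hf 0 x).trans (map_zero _).symm
      | i + 1, hi, x =>
        obtain ⟨x₃, h₃⟩ := Abelian.Ext.covariant_sequence_exact₁ N hS x (hf _ x) rfl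
        have := hv i (by omega)
        have : x₃ = 0 := Subsingleton.elim (α := Abelian.Ext N (ModuleCat.of R (QuotSMulTop r M)) i)
          x₃ 0
        rw [← h₃, this, Abelian.Ext.zero_comp]
        rfl
    refine ⟨by simpa using hvan, ⟨?_⟩⟩
    let δ : Abelian.Ext N (ModuleCat.of R (QuotSMulTop r M)) rs.length →ₗ[R]
        Abelian.Ext N M (rs.length + 1) :=
      Abelian.Ext.postcompOfLinear hS.extClass R N rfl
    have hδ : Function.Bijective δ := by
      constructor
      · rw [injective_iff_map_eq_zero]
        intro x hx
        obtain ⟨x₂, h₂⟩ := Abelian.Ext.covariant_sequence_exact₃ N hS x rfl hx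
        have := hvan rs.length (by omega)
        have : x₂ = 0 := Subsingleton.elim (α := Abelian.Ext N M rs.length) x₂ 0
        rw [← h₂, this, Abelian.Ext.zero_comp]
        rfl
      · intro x
        exact Abelian.Ext.covariant_sequence_exact₁ N hS x (hf _ x) rfl
    exact (LinearEquiv.ofBijective δ hδ).symm ≪≫ₗ e ≪≫ₗ LinearEquiv.congrRight
      (Submodule.quotOfListConsSMulTopEquivQuotSMulTopInner M r rs).symm

/-- The long exact sequence bounds the vanishing range of `Ext(N, -)` on a quotient. -/
lemma ext_subsingleton_quotient (N : ModuleCat.{0} R) {S : ShortComplex (ModuleCat.{0} R)}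
    (hS : S.ShortExact) (n : ℕ)
    (h₁ : ∀ i < n + 1, Subsingleton (Abelian.Ext N S.X₁ i))
    (h₂ : ∀ i < n + 1, Subsingleton (Abelian.Ext N S.X₂ i)) :
    ∀ i < n, Subsingleton (Abelian.Ext N S.X₃ i) := by
  intro i hi
  refine subsingleton_of_forall_eq 0 fun x => ?_
  have := h₁ (i + 1) (by omega)
  obtain ⟨x₂, hx₂⟩ := Abelian.Ext.covariant_sequence_exact₃ N hS x rfl (Subsingleton.elim _ _)
  have := h₂ i (by omega)
  rw [← hx₂, Subsingleton.elim x₂ 0, Abelian.Ext.zero_comp]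

end ExtShift

/-! ### The two descriptions of `Ext` -/

section OldExt

variable {R : Type} [CommRing R]

/-- In positive degree, `Ext` as a left derived functor agrees, as a module, with `Ext` computed
in the derived category: both are cocycles modulo coboundaries of `Hom(P, Y)` for a projective
resolution `P` of `X`. -/
lemma ext_equiv_abelianExt (X Y : ModuleCat.{0} R) (p : ℕ) :
    Nonempty ((((Ext R (ModuleCat.{0} R) (p + 1)).obj (op X)).obj Y) ≃ₗ[R]
      Abelian.Ext X Y (p + 1)) := by
  let P := projectiveResolution X
  let K := P.complex.linearYonedaObj R Y
  let S := K.sc' p (p + 1) (p + 2)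
  have hg : ∀ f : LinearMap.ker S.g.hom, P.complex.d (p + 2) (p + 1) ≫ f.1 = 0 := fun f => f.2
  have hsmul : ∀ (r : R) (f : P.complex.X (p + 1) ⟶ Y) (hf : P.complex.d (p + 2) (p + 1) ≫ f = 0)
      (hf' : P.complex.d (p + 2) (p + 1) ≫ (r • f) = 0),
      P.extMk (r • f) (p + 2) rfl hf' = r • P.extMk f (p + 2) rfl hf := by
    intro r f hf hf'
    rw [Abelian.Ext.smul_eq_comp_mk₀, P.extMk_comp_mk₀]
    congr 1
  let Φ : LinearMap.ker S.g.hom →ₗ[R] Abelian.Ext X Y (p + 1) :=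
    { toFun := fun f => P.extMk (n := p + 1) (Y := Y) f.1 (p + 2) rfl (hg f)
      map_add' := fun f g => (P.add_extMk _ _ _ _ (hg f) (hg g)).symm
      map_smul' := fun r f => hsmul r f.1 (hg f) (hg (r • f)) }
  have hsurj : Function.Surjective Φ := fun x => by
    obtain ⟨f, hf, h⟩ := P.extMk_surjective x (p + 2) rfl
    exact ⟨⟨f, hf⟩, h⟩
  have hker : LinearMap.range S.moduleCatToCycles = LinearMap.ker Φ := by
    ext f
    refine Iff.trans ?_ (P.extMk_eq_zero_iff f.1 (p + 2) rfl (hg f) p rfl).symm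
    constructor
    · rintro ⟨g, rfl⟩
      exact ⟨g, rfl⟩
    · rintro ⟨g, h⟩
      exact ⟨g, Subtype.ext h⟩
  have e1 := ((P.isoExt (R := R) (p + 1) Y) ≪≫
    ShortComplex.homologyMapIso (K.isoSc' p (p + 1) (p + 2) (by simp) (by simp)) ≪≫
    S.moduleCatHomologyIso).toLinearEquiv
  exact ⟨e1 ≪≫ₗ Submodule.quotEquivOfEq _ _ hker ≪≫ₗ Φ.quotKerEquivOfSurjective hsurj⟩

end OldExt

/-! ### Relative Frobenius forms on polynomial rings -/

section Frobenius

open RingTheory.Sequence Polynomial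

lemma mem_map_C_iff_map_mk {P : Type} [CommRing P] {I : Ideal P} {F : P[X]} :
    F ∈ Ideal.map Polynomial.C I ↔ F.map (Ideal.Quotient.mk I) = 0 := by
  simp [Ideal.mem_map_C_iff, Polynomial.ext_iff, Ideal.Quotient.eq_zero_iff_mem]

lemma isWeaklyRegular_C_append {P : Type} [CommRing P] {rs : List P} (h : IsWeaklyRegular P rs)
    {f : P[X]} (hf : f.Monic) : IsWeaklyRegular P[X] (rs.map Polynomial.C ++ [f]) := by
  rw [isWeaklyRegular_append_iff]
  refine ⟨h.of_flat (S := P[X]), ?_⟩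
  rw [isWeaklyRegular_singleton_iff, isSMulRegular_quotient_iff_mem_of_smul_mem]
  intro F hF
  rw [smul_eq_mul, Ideal.mul_top, ← Ideal.map_ofList, mem_map_C_iff_map_mk] at hF ⊢
  rw [smul_eq_mul, Polynomial.map_mul] at hF
  exact (hf.map (Ideal.Quotient.mk (Ideal.ofList rs))).mul_right_eq_zero_iff.mp hF

/-- The coefficient of `X ^ (deg f - 1)` of the remainder modulo `f`: the Frobenius form of
`P[X] / (f)` over `P`. -/
def tr {P : Type} [CommRing P] (f : P[X]) : P[X] →ₗ[P] P :=
  Polynomial.lcoeff P (f.natDegree - 1) ∘ₗ Polynomial.modByMonicHom f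

lemma tr_apply {P : Type} [CommRing P] (f F : P[X]) :
    tr f F = (F %ₘ f).coeff (f.natDegree - 1) := rfl

lemma tr_of_lt {P : Type} [CommRing P] {f : P[X]} (hf : f.Monic) {F : P[X]}
    (h : F.degree < f.degree) : tr f F = F.coeff (f.natDegree - 1) := by
  nontriviality P
  rw [tr_apply, (Polynomial.modByMonic_eq_self_iff hf).mpr h]

lemma tr_mul_mod {P : Type} [CommRing P] {f : P[X]} (hf : f.Monic) (F G : P[X]) :
    tr f (F * (G %ₘ f)) = tr f (F * G) := by
  rw [tr_apply, tr_apply, Polynomial.mul_modByMonic F (G %ₘ f), Polynomial.mul_modByMonic F G]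
  nontriviality P
  rw [(Polynomial.modByMonic_eq_self_iff hf).mpr (Polynomial.degree_modByMonic_lt G hf)]

lemma tr_map {P Q : Type} [CommRing P] [CommRing Q] [Nontrivial Q] (φ : P →+* Q) {f : P[X]}
    (hf : f.Monic) (F : P[X]) : tr (f.map φ) (F.map φ) = φ (tr f F) := by
  rw [tr_apply, tr_apply, ← Polynomial.map_modByMonic φ hf, Polynomial.coeff_map,
    hf.natDegree_map]

/-- The form `tr f` is nondegenerate on `P[X] / (f)`. -/
lemma dvd_of_tr {P : Type} [CommRing P] {f : P[X]} (hf : f.Monic) (hd : 0 < f.natDegree)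
    {g : P[X]} (h : ∀ F, tr f (F * g) = 0) : f ∣ g := by
  nontriviality P
  rw [← Polynomial.modByMonic_eq_zero_iff_dvd hf]
  by_contra hr
  set r := g %ₘ f with hrdef
  have hlt : r.natDegree < f.natDegree := Polynomial.natDegree_modByMonic_lt g hf (by
    rintro rfl; simp at hd)
  have := h (Polynomial.X ^ (f.natDegree - 1 - r.natDegree))
  rw [← tr_mul_mod hf, tr_of_lt hf, Polynomial.coeff_X_pow_mul'] at this
  · rw [if_pos (by omega), show f.natDegree - 1 - (f.natDegree - 1 - r.natDegree) = r.natDegree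
      by omega] at this
    exact hr (Polynomial.leadingCoeff_eq_zero.mp this)
  · rw [Polynomial.degree_eq_natDegree hf.ne_zero]
    refine lt_of_le_of_lt (Polynomial.degree_mul_le _ _) ?_
    rw [Polynomial.degree_X_pow, Polynomial.degree_eq_natDegree hr]
    norm_cast
    omega

/-- The pairing `(F, G) ↦ tr f (F * G)` takes prescribed values on the first `m ≤ deg f` powers of
`X`. With `dvd_of_tr` this makes `tr f` a Frobenius form on `P[X] / (f)`. -/
lemma exists_tr {P : Type} [CommRing P] {f : P[X]} (hf : f.Monic) (g : ℕ → P) (m : ℕ)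
    (hm : m ≤ f.natDegree) : ∃ G : P[X], ∀ k < m, tr f (G * Polynomial.X ^ k) = g k := by
  induction m with
  | zero => exact ⟨0, by simp⟩
  | succ m ih =>
    obtain ⟨G, hG⟩ := ih (by omega)
    refine ⟨G + Polynomial.C (g m - tr f (G * Polynomial.X ^ m)) *
      Polynomial.X ^ (f.natDegree - 1 - m), fun k hk => ?_⟩
    nontriviality P
    rw [add_mul, map_add, mul_assoc, ← pow_add, ← Polynomial.smul_eq_C_mul, map_smul,
      tr_of_lt hf (F := Polynomial.X ^ (f.natDegree - 1 - m + k)), Polynomial.coeff_X_pow]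
    · rcases (show k < m ∨ k = m by omega) with h | rfl
      · rw [hG k h, if_neg (by omega)]; simp
      · rw [if_pos (by omega)]; simp
    · rw [Polynomial.degree_X_pow, Polynomial.degree_eq_natDegree hf.ne_zero]
      norm_cast
      omega

/-- `IsFrob δ rs`: the sequence `rs` is weakly regular on `P`, and `P / (rs)` carries an
`A / (δ)`-valued form, lifted to an `A`-linear map `Λ : P → A`, whose pairing
`(g, h) ↦ Λ (g h)` is perfect. -/
structure IsFrob {A P : Type} [CommRing A] [CommRing P] [Algebra A P] (δ : A) (rs : List P) :
    Prop where
  weak : IsWeaklyRegular P rs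
  form : ∃ Λ : P →ₗ[A] A, (∀ p ∈ Ideal.ofList rs, δ ∣ Λ p) ∧
    (∀ g, (∀ h, δ ∣ Λ (g * h)) → g ∈ Ideal.ofList rs) ∧
    (∀ φ : P →ₗ[A] A, (∀ p ∈ Ideal.ofList rs, δ ∣ φ p) → ∃ g, ∀ h, δ ∣ φ h - Λ (g * h))

lemma IsFrob.base {A : Type} [CommRing A] [IsDomain A] {δ : A} (hδ : δ ≠ 0) :
    IsFrob (A := A) (P := A) δ [δ] where
  weak := by
    rw [isWeaklyRegular_singleton_iff]
    exact fun a b h => mul_left_cancel₀ hδ h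
  form := by
    refine ⟨LinearMap.id, ?_, ?_, ?_⟩
    · simp [Ideal.mem_span_singleton]
    · intro g h
      simpa [Ideal.mem_span_singleton] using h 1
    · intro φ _
      refine ⟨φ 1, fun h => ?_⟩
      have : φ h = h * φ 1 := by
        rw [← smul_eq_mul, ← map_smul, smul_eq_mul, mul_one]
      simp [this, mul_comm]

lemma IsFrob.congr {A P Q : Type} [CommRing A] [CommRing P] [Algebra A P] [CommRing Q]
    [Algebra A Q] {δ : A} {rs : List P} (h : IsFrob δ rs) (e : P ≃ₐ[A] Q) :
    IsFrob δ (rs.map e) := by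
  have hmem : ∀ p, e p ∈ Ideal.ofList (rs.map e) ↔ p ∈ Ideal.ofList rs := by
    intro p
    have := Ideal.map_ofList (e : P →+* Q) rs
    have h2 : Ideal.ofList (rs.map e) = Ideal.map e.toRingEquiv (Ideal.ofList rs) := this.symm
    rw [h2, ← Ideal.comap_symm, Ideal.mem_comap]
    simp
  obtain ⟨Λ, h1, h2, h3⟩ := h.form
  refine ⟨?_, Λ ∘ₗ e.symm.toLinearMap, ?_, ?_, ?_⟩
  · refine (AddEquiv.isWeaklyRegular_congr (e := e.toAddEquiv) ?_).mp h.weak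
    rw [List.forall₂_map_right_iff, List.forall₂_same]
    intro x _ y
    simp
  · intro q hq
    obtain ⟨p, rfl⟩ := e.surjective q
    simpa using h1 p ((hmem p).mp hq)
  · intro g hg
    obtain ⟨p, rfl⟩ := e.surjective g
    refine (hmem p).mpr (h2 p fun x => ?_)
    simpa using hg (e x)
  · intro φ hφ
    obtain ⟨g, hg⟩ := h3 (φ ∘ₗ e.toLinearMap) (fun p hp => hφ _ ((hmem p).mpr hp))
    refine ⟨e g, fun x => ?_⟩
    obtain ⟨p, rfl⟩ := e.surjective x
    simpa using hg p

/-- Composing a Frobenius form of `P / (rs)` with the form `tr f` of `P[X] / (f)` over `P` gives a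
Frobenius form of `P[X] / (rs, f)`. -/
lemma IsFrob.step {A P : Type} [CommRing A] [CommRing P] [Algebra A P] {δ : A} {rs : List P}
    (h : IsFrob δ rs) {f : P[X]} (hf : f.Monic) (hd : 0 < f.natDegree) :
    IsFrob (A := A) (P := P[X]) δ (rs.map Polynomial.C ++ [f]) := by
  obtain ⟨Λ, h1, h2, h3⟩ := h.form
  have hmem : ∀ F : P[X], F ∈ Ideal.ofList (rs.map Polynomial.C ++ [f]) ↔
      F ∈ Ideal.map Polynomial.C (Ideal.ofList rs) ⊔ Ideal.span {f} := by
    intro F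
    rw [Ideal.ofList_append, Ideal.ofList_singleton, Ideal.map_ofList]
  refine ⟨isWeaklyRegular_C_append h.weak hf, Λ ∘ₗ (tr f).restrictScalars A, ?_, ?_, ?_⟩
  · intro F hF
    rw [hmem, Submodule.mem_sup] at hF
    obtain ⟨G, hG, H, hH, rfl⟩ := hF
    obtain ⟨H, rfl⟩ := Ideal.mem_span_singleton.mp hH
    refine h1 _ ?_
    have h0 : tr f (f * H) = 0 := by rw [tr_apply, Polynomial.self_mul_modByMonic hf]; simp
    rw [LinearMap.coe_restrictScalars, map_add, h0, add_zero]
    rw [← Ideal.Quotient.eq_zero_iff_mem]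
    rcases subsingleton_or_nontrivial (P ⧸ Ideal.ofList rs) with _ | _
    · exact Subsingleton.elim _ _
    rw [← tr_map _ hf]
    rw [mem_map_C_iff_map_mk] at hG
    rw [hG, map_zero]
  · intro g hg
    have key : ∀ F, tr f (F * g) ∈ Ideal.ofList rs := by
      intro F
      refine h2 _ fun c => ?_
      have := hg (Polynomial.C c * F)
      rwa [LinearMap.comp_apply, LinearMap.coe_restrictScalars,
        show g * (Polynomial.C c * F) = c • (F * g) by rw [Polynomial.smul_eq_C_mul]; ring,
        map_smul, smul_eq_mul, mul_comm] at this
    rw [hmem]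
    rcases subsingleton_or_nontrivial (P ⧸ Ideal.ofList rs) with hs | _
    · have : Ideal.ofList rs = ⊤ := Ideal.Quotient.subsingleton_iff.mp hs
      simp [this, Ideal.map_top]
    have hdvd : f.map (Ideal.Quotient.mk (Ideal.ofList rs)) ∣
        g.map (Ideal.Quotient.mk (Ideal.ofList rs)) := by
      refine dvd_of_tr (hf.map _) (by rwa [hf.natDegree_map]) fun F => ?_
      obtain ⟨F, rfl⟩ := Polynomial.map_surjective _ Ideal.Quotient.mk_surjective F
      rw [← Polynomial.map_mul, tr_map _ hf, Ideal.Quotient.eq_zero_iff_mem]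
      exact key F
    obtain ⟨H, hH⟩ := hdvd
    obtain ⟨H, rfl⟩ := Polynomial.map_surjective _ Ideal.Quotient.mk_surjective H
    rw [← Polynomial.map_mul] at hH
    have hker : g - f * H ∈ Ideal.map Polynomial.C (Ideal.ofList rs) := by
      rw [mem_map_C_iff_map_mk, Polynomial.map_sub, hH, sub_self]
    rw [show g = (g - f * H) + f * H by ring]
    exact Submodule.add_mem_sup hker (Ideal.mem_span_singleton.mpr (dvd_mul_right _ _))
  · intro φ hφ
    have hk : ∀ k : ℕ, ∃ g : P, ∀ c : P, δ ∣ φ (Polynomial.monomial k c) - Λ (g * c) := by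
      intro k
      refine h3 (φ ∘ₗ (Polynomial.monomial k).restrictScalars A) fun p hp => hφ _ ?_
      rw [hmem]
      refine Submodule.mem_sup_left ?_
      rw [LinearMap.coe_restrictScalars, ← Polynomial.C_mul_X_pow_eq_monomial]
      exact Ideal.mul_mem_right _ _ (Ideal.mem_map_of_mem _ hp)
    choose g hg using hk
    obtain ⟨G, hG⟩ := exists_tr hf g f.natDegree le_rfl
    refine ⟨G, fun F => ?_⟩
    -- modulo `f` one may replace `F` by its remainder, which is a combination of small powers
    have e1 : δ ∣ φ F - φ (F %ₘ f) := by
      rw [← map_sub]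
      refine hφ _ ?_
      rw [hmem]
      refine Submodule.mem_sup_right (Ideal.mem_span_singleton.mpr ⟨F /ₘ f, ?_⟩)
      nth_rewrite 1 [← Polynomial.modByMonic_add_div F f]
      ring
    have e2 : δ ∣ φ (F %ₘ f) - Λ (tr f (G * F)) := by
      rw [← tr_mul_mod hf]
      rcases subsingleton_or_nontrivial P with _ | _
      · simp [Subsingleton.elim (F %ₘ f) 0]
      have hs := Polynomial.as_sum_range' (F %ₘ f) f.natDegree
        (Polynomial.natDegree_modByMonic_lt F hf (by rintro rfl; simp at hd))
      rw [hs, Finset.mul_sum]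
      simp only [map_sum]
      rw [← Finset.sum_sub_distrib]
      refine Finset.dvd_sum fun k hk => ?_
      rw [show G * Polynomial.monomial k ((F %ₘ f).coeff k) =
          (F %ₘ f).coeff k • (G * Polynomial.X ^ k) by
        rw [← Polynomial.C_mul_X_pow_eq_monomial, Polynomial.smul_eq_C_mul]; ring]
      rw [map_smul, hG k (Finset.mem_range.mp hk), smul_eq_mul, mul_comm]
      exact hg k _
    have := dvd_add e1 e2
    rwa [sub_add_sub_cancel] at this

/-- For monic polynomials `f i` over `A`, the sequence `δ, f 0 (X 0), …, f (k-1) (X (k-1))` in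
`A[X 0, …, X (k-1)]` admits a Frobenius form. -/
lemma exists_isFrob {A : Type} [CommRing A] [IsDomain A] {δ : A} (hδ : δ ≠ 0) (k : ℕ)
    (f : Fin k → A[X]) (hf : ∀ i, (f i).Monic) (hd : ∀ i, 0 < (f i).natDegree) :
    ∃ rs : List (MvPolynomial (Fin k) A), rs.length = k + 1 ∧
      (∀ r ∈ rs, r = MvPolynomial.C δ ∨
        ∃ i, r = Polynomial.aeval (MvPolynomial.X i) (f i)) ∧ IsFrob δ rs := by
  induction k with
  | zero =>
    refine ⟨[δ].map (MvPolynomial.isEmptyAlgEquiv A (Fin 0)).symm, by simp, ?_,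
      (IsFrob.base hδ).congr _⟩
    intro r hr
    left
    simpa using hr
  | succ k ih =>
    obtain ⟨rs, hl, hr, hF⟩ := ih (fun i => f i.succ) (fun i => hf _) (fun i => hd _)
    have hm : ((f 0).map (MvPolynomial.C (σ := Fin k))).Monic := (hf 0).map _
    have hdm : 0 < ((f 0).map (MvPolynomial.C (R := A) (σ := Fin k))).natDegree := by
      rw [(hf 0).natDegree_map]; exact hd 0
    refine ⟨_, ?_, ?_, (hF.step hm hdm).congr (MvPolynomial.finSuccEquiv A k).symm⟩
    · simp [hl]
    · intro r hr'
      simp only [List.map_append, List.map_map, List.map_cons, List.map_nil, List.mem_append,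
        List.mem_map, Function.comp_apply, List.mem_singleton] at hr'
      rcases hr' with ⟨s, hs, rfl⟩ | rfl
      · rcases hr s hs with rfl | ⟨i, rfl⟩
        · left
          rw [AlgEquiv.symm_apply_eq, MvPolynomial.finSuccEquiv_apply]
          simp
        · right
          refine ⟨i.succ, ?_⟩
          have : Polynomial.C (Polynomial.aeval (MvPolynomial.X i) (f i.succ)) =
            (Polynomial.CAlgHom (R := A) (A := MvPolynomial (Fin k) A))
              (Polynomial.aeval (MvPolynomial.X i) (f i.succ)) := rfl
          rw [AlgEquiv.symm_apply_eq, this, ← Polynomial.aeval_algHom_apply,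
            ← Polynomial.aeval_algHom_apply, MvPolynomial.finSuccEquiv_X_succ]
          rfl
      · right
        refine ⟨0, ?_⟩
        rw [AlgEquiv.symm_apply_eq, ← Polynomial.aeval_algHom_apply,
          MvPolynomial.finSuccEquiv_X_zero]
        rw [Polynomial.aeval_def, Polynomial.map]
        congr 1

end Frobenius

/-! ### The residue pairing between `S / J` and `I / J` -/

section Pairing

/-- `IsPairing J I y g w`: modulo the prime ideal `J`, the `A`-algebra `S` is spanned over `A` by
`1` and the `y i`, the ideal `I ⊇ J` is free over `A` on `w` and the `g i`, and the coefficient of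
`w` in `y i * g j` is the Kronecker delta. -/
structure IsPairing {A S ι : Type} [CommRing A] [CommRing S] [Algebra A S] [Fintype ι]
    [DecidableEq ι] (J I : Ideal S) (y g : ι → S) (w : S) : Prop where
  span_top : ∀ s, ∃ (a : A) (b : ι → A), s - (algebraMap A S a + ∑ i, b i • y i) ∈ J
  g_mem : ∀ i, g i ∈ I
  w_mem : w ∈ I
  span_I : ∀ m ∈ I, ∃ (a : A) (b : ι → A), m - (a • w + ∑ i, b i • g i) ∈ J
  indep : ∀ (a : A) (b : ι → A), a • w + ∑ i, b i • g i ∈ J → a = 0 ∧ b = 0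
  mul : ∀ i j, ∃ b : ι → A, y i * g j - ((if i = j then w else 0) + ∑ k, b k • g k) ∈ J
  prime : J.IsPrime
  le : J ≤ I

/-- A function on `S` whose restriction to `I` is `A`-linear and factors through `I / J`. -/
structure LinOn {A S : Type} [CommRing A] [CommRing S] [Algebra A S] (J I : Ideal S)
    (φ : S → A) : Prop where
  add : ∀ m ∈ I, ∀ m' ∈ I, φ (m + m') = φ m + φ m'
  smul : ∀ (a : A), ∀ m ∈ I, φ (a • m) = a * φ m
  zero : ∀ m ∈ J, φ m = 0

variable {A S ι : Type} [CommRing A] [CommRing S] [Algebra A S] [Fintype ι] [DecidableEq ι]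
  {J I : Ideal S} {y g : ι → S} {w : S}

lemma smul_mem' {I : Ideal S} (a : A) {m : S} (h : m ∈ I) : a • m ∈ I := by
  rw [Algebra.smul_def]; exact I.mul_mem_left _ h

lemma LinOn.sum {φ : S → A} (h : LinOn J I φ) (b : ι → A) (hg : ∀ i, g i ∈ I) (s : Finset ι) :
    φ (∑ i ∈ s, b i • g i) = ∑ i ∈ s, b i * φ (g i) := by
  induction s using Finset.induction_on with
  | empty => simpa using h.zero 0 J.zero_mem
  | insert i s hi ih =>
    rw [Finset.sum_insert hi, Finset.sum_insert hi, h.add _ (smul_mem' _ (hg i)) _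
      (I.sum_mem fun j _ => smul_mem' _ (hg j)), h.smul _ _ (hg i), ih]

lemma LinOn.congr {φ : S → A} (h : LinOn J I φ) (hle : J ≤ I) {m m' : S} (hm : m' ∈ I)
    (hmm : m - m' ∈ J) : φ m = φ m' := by
  rw [show m = m' + (m - m') by ring, h.add _ hm _ (hle hmm), h.zero _ hmm, add_zero]

lemma LinOn.sub {φ : S → A} (h : LinOn J I φ) {m m' : S} (hm : m ∈ I) (hm' : m' ∈ I) :
    φ (m - m') = φ m - φ m' := by
  rw [eq_sub_iff_add_eq, ← h.add _ (I.sub_mem hm hm') _ hm', sub_add_cancel]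

namespace IsPairing

lemma comb_mem (H : IsPairing (A := A) J I y g w) (a : A) (b : ι → A) :
    a • w + ∑ i, b i • g i ∈ I :=
  I.add_mem (smul_mem' _ H.w_mem) (I.sum_mem fun i _ => smul_mem' _ (H.g_mem i))

lemma linOn_comb (H : IsPairing (A := A) J I y g w) {φ : S → A} (h : LinOn J I φ) {m : S} {a : A}
    {b : ι → A} (hm : m - (a • w + ∑ i, b i • g i) ∈ J) :
    φ m = a * φ w + ∑ i, b i * φ (g i) := by
  rw [h.congr H.le (H.comb_mem a b) hm, h.add _ (smul_mem' _ H.w_mem) _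
    (I.sum_mem fun i _ => smul_mem' _ (H.g_mem i)), h.smul _ _ H.w_mem, h.sum b H.g_mem]

/-- The residue: the coefficient of `w`. -/
lemma exists_lam (H : IsPairing (A := A) J I y g w) : ∃ lam : S → A, LinOn J I lam ∧
    lam w = 1 ∧ (∀ i, lam (g i) = 0) ∧ ∀ i j, lam (y i * g j) = if i = j then 1 else 0 := by
  classical
  let lam : S → A := fun m => if h : m ∈ I then (H.span_I m h).choose else 0
  have key : ∀ (m : S) (a : A) (b : ι → A), m - (a • w + ∑ i, b i • g i) ∈ J → lam m = a := by
    intro m a b hm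
    have hmI : m ∈ I := by
      rw [show m = (m - (a • w + ∑ i, b i • g i)) + (a • w + ∑ i, b i • g i) by ring]
      exact I.add_mem (H.le hm) (H.comb_mem a b)
    have h1 : lam m = (H.span_I m hmI).choose := dif_pos hmI
    obtain ⟨b', hb'⟩ := (H.span_I m hmI).choose_spec
    rw [← h1] at hb'
    have := J.sub_mem hm hb'
    rw [show m - (a • w + ∑ i, b i • g i) - (m - (lam m • w + ∑ i, b' i • g i)) =
      (lam m - a) • w + ∑ i, (b' - b) i • g i by
        simp only [Pi.sub_apply, sub_smul, Finset.sum_sub_distrib]; ring] at this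
    exact sub_eq_zero.mp (H.indep _ _ this).1
  have hlin : LinOn J I lam := by
    refine ⟨?_, ?_, ?_⟩
    · intro m hm m' hm'
      obtain ⟨a, b, h⟩ := H.span_I m hm
      obtain ⟨a', b', h'⟩ := H.span_I m' hm'
      rw [key m a b h, key m' a' b' h', key (m + m') (a + a') (b + b')]
      convert J.add_mem h h' using 1
      simp only [Pi.add_apply, add_smul, Finset.sum_add_distrib]; ring
    · intro c m hm
      obtain ⟨a, b, h⟩ := H.span_I m hm
      rw [key m a b h, key (c • m) (c * a) (c • b)]
      convert smul_mem' c h using 1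
      simp only [Pi.smul_apply, smul_sub, smul_add, mul_smul, smul_eq_mul, Finset.smul_sum]
    · intro m hm
      exact key m 0 0 (by simpa using hm)
  have hg : ∀ i, lam (g i) = 0 := fun i => key _ 0 (Pi.single i 1) (by
    simp [Pi.single_apply])
  have hw : lam w = 1 := key _ 1 0 (by simp)
  refine ⟨lam, hlin, hw, hg, fun i j => ?_⟩
  obtain ⟨b, hb⟩ := H.mul i j
  refine key _ _ b ?_
  split_ifs with h <;> simpa [h] using hb

variable [IsDomain A]

/-- The map `s ↦ lam (s * m)` for `m ∈ I`. -/
def pairL {lam : S → A} (h : LinOn J I lam) {m : S} (hm : m ∈ I) : S →ₗ[A] A where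
  toFun s := lam (s * m)
  map_add' s t := by rw [add_mul, h.add _ (I.mul_mem_left _ hm) _ (I.mul_mem_left _ hm)]
  map_smul' a s := by rw [smul_mul_assoc, h.smul _ _ (I.mul_mem_left _ hm)]; rfl

lemma lin_span (H : IsPairing (A := A) J I y g w) {δ : A} {φ : S →ₗ[A] A}
    (h0 : ∀ p ∈ J, δ ∣ φ p) (h1 : δ ∣ φ 1) (hy : ∀ i, δ ∣ φ (y i)) (s : S) : δ ∣ φ s := by
  obtain ⟨a, b, hab⟩ := H.span_top s
  have : φ s = φ (s - (algebraMap A S a + ∑ i, b i • y i)) + (a * φ 1 + ∑ i, b i * φ (y i)) := by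
    rw [map_sub, map_add, map_sum, Algebra.algebraMap_eq_smul_one, map_smul]
    simp
  rw [this]
  exact dvd_add (h0 _ hab) (dvd_add (h1.mul_left _) (Finset.dvd_sum fun i _ => (hy i).mul_left _))

section

variable (H : IsPairing (A := A) J I y g w) {lam : S → A} (hl : LinOn J I lam) (hw : lam w = 1)
  (hg : ∀ i, lam (g i) = 0) (hyg : ∀ i j, lam (y i * g j) = if i = j then 1 else 0)
include H hl hw hg hyg

lemma lam_y_comb (i : ι) (a : A) (b : ι → A) :
    lam (y i * (a • w + ∑ j, b j • g j)) = a * lam (y i * w) + b i := by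
  rw [mul_add, Finset.mul_sum, mul_smul_comm]
  simp only [mul_smul_comm]
  rw [hl.add _ (smul_mem' _ (I.mul_mem_left _ H.w_mem)) _
    (I.sum_mem fun j _ => smul_mem' _ (I.mul_mem_left _ (H.g_mem j))),
    hl.smul _ _ (I.mul_mem_left _ H.w_mem),
    hl.sum (g := fun j => y i * g j) b (fun j => I.mul_mem_left _ (H.g_mem j))]
  simp [hyg]

/-- Every functional on `S / J` modulo `δ` is represented by an element of `I`. -/
lemma exists_rep (δ : A) (φ : S →ₗ[A] A) (hφ : ∀ p ∈ J, δ ∣ φ p) :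
    ∃ m ∈ I, ∀ s, δ ∣ φ s - lam (s * m) := by
  let b : ι → A := fun i => φ (y i) - φ 1 * lam (y i * w)
  have hm := H.comb_mem (φ 1) b
  refine ⟨_, hm, fun s => ?_⟩
  refine H.lin_span (φ := φ - pairL hl hm) (δ := δ) ?_ ?_ ?_ s
  · intro p hp
    rw [LinearMap.sub_apply]
    refine dvd_sub (hφ p hp) ?_
    rw [show pairL hl hm p = 0 from hl.zero _ (J.mul_mem_right _ hp)]
    exact dvd_zero _
  · have : pairL hl hm 1 = φ 1 := by
      change lam (1 * _) = _
      rw [one_mul, H.linOn_comb hl (a := φ 1) (b := b) (by simp), hw]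
      simp [hg]
    simp [this]
  · intro i
    have : pairL hl hm (y i) = φ (y i) := by
      change lam (y i * _) = _
      rw [H.lam_y_comb hl hw hg hyg]
      simp [b]
    simp [this]

/-- Every functional on `I / J` is represented by an element of `S`. -/
lemma exists_rep' (φ : S → A) (hφ : LinOn J I φ) : ∃ r, ∀ m ∈ I, φ m = lam (r * m) := by
  let c : A := φ w - ∑ i, φ (g i) * lam (y i * w)
  let r : S := algebraMap A S c + ∑ i, φ (g i) • y i
  have hr : ∀ m ∈ I, lam (r * m) = c * lam m + ∑ i, φ (g i) * lam (y i * m) := by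
    intro m hm
    simp only [r, add_mul, Finset.sum_mul, smul_mul_assoc]
    rw [← Algebra.smul_def, hl.add _ (smul_mem' _ hm) _
      (I.sum_mem fun j _ => smul_mem' _ (I.mul_mem_left _ hm)), hl.smul _ _ hm,
      hl.sum (g := fun j => y j * m) _ (fun j => I.mul_mem_left _ hm)]
  have hlin : LinOn J I (fun m => lam (r * m)) :=
    ⟨fun m hm m' hm' => by
        simp only [mul_add]; rw [hl.add _ (I.mul_mem_left _ hm) _ (I.mul_mem_left _ hm')],
      fun a m hm => by simp only [mul_smul_comm]; rw [hl.smul _ _ (I.mul_mem_left _ hm)],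
      fun m hm => hl.zero _ (J.mul_mem_left _ hm)⟩
  refine ⟨r, fun m hm => ?_⟩
  obtain ⟨a, b, hab⟩ := H.span_I m hm
  rw [H.linOn_comb hφ hab, H.linOn_comb hlin hab]
  have e1 : φ w = lam (r * w) := by rw [hr w H.w_mem, hw]; simp [c]
  have e2 : ∀ j, φ (g j) = lam (r * g j) := fun j => by
    rw [hr _ (H.g_mem j), hg]; simp [hyg]
  rw [e1]
  simp only [← e2]

/-- The residue pairing has trivial kernel on the side of `I / J`. -/
lemma mem_J_of_lam {m : S} (hm : m ∈ I) (h : ∀ r, lam (r * m) = 0) : m ∈ J := by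
  obtain ⟨a, b, hab⟩ := H.span_I m hm
  have ha : a = 0 := by
    have := h 1
    rw [one_mul, H.linOn_comb hl hab, hw] at this
    simpa [hg] using this
  have hb : ∀ i, b i = 0 := by
    intro i
    have h2 := h (y i)
    rw [hl.congr H.le (I.mul_mem_left _ (H.comb_mem a b))
      (by rw [← mul_sub]; exact J.mul_mem_left _ hab), H.lam_y_comb hl hw hg hyg, ha] at h2
    simpa using h2
  simpa [ha, hb] using hab

/-- The residue pairing has trivial kernel on the side of `S / J`. -/
lemma mem_J_of_lam' {r : S} (h : ∀ m ∈ I, lam (r * m) = 0) : r ∈ J := by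
  have hrw : r * w ∈ J := by
    refine H.mem_J_of_lam hl hw hg hyg (I.mul_mem_left _ H.w_mem) fun s => ?_
    rw [mul_left_comm]
    exact h _ (I.mul_mem_left _ H.w_mem)
  refine (H.prime.mem_or_mem hrw).resolve_right fun hwJ => ?_
  rw [hl.zero _ hwJ] at hw
  exact zero_ne_one hw

end

/-- Let `𝔞 ≤ I` be the ideal generated by `rs`. Comparing the residue pairing with the Frobenius form
on `S / 𝔞` shows that `(𝔞 : I)` is generated modulo `𝔞` by one element `u`, with `(𝔞 : u) = I`. The
element `u` represents the functional `s ↦ lam (s * δ)`. -/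
lemma exists_link (H : IsPairing (A := A) J I y g w) {δ : A} (hδ0 : δ ≠ 0)
    (hδ : algebraMap A S δ ∈ I) {rs : List S} (hF : IsFrob δ rs) (hrs : Ideal.ofList rs ≤ I) :
    ∃ u : S, (∀ m ∈ I, u * m ∈ Ideal.ofList rs) ∧ (∀ s, s * u ∈ Ideal.ofList rs → s ∈ I) ∧
      ∀ v, (∀ m ∈ I, v * m ∈ Ideal.ofList rs) → ∃ r, v - r * u ∈ Ideal.ofList rs := by
  obtain ⟨lam, hl, hw, hg, hyg⟩ := H.exists_lam
  obtain ⟨Λ, hΛ1, hΛ2, hΛ3⟩ := hF.form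
  have hmulδ : ∀ m ∈ I, lam (m * algebraMap A S δ) = δ * lam m := fun m hm => by
    rw [mul_comm, ← Algebra.smul_def, hl.smul _ _ hm]
  obtain ⟨u, hu⟩ := hΛ3 (pairL hl hδ) fun p hp => by
    change δ ∣ lam _
    rw [hmulδ p (hrs hp)]
    exact dvd_mul_right _ _
  replace hu : ∀ h, δ ∣ lam (h * algebraMap A S δ) - Λ (u * h) := hu
  have hδJ : algebraMap A S δ ∉ J := fun h => by
    have h1 : δ • w + ∑ i, (0 : ι → A) i • g i ∈ J := by
      simpa [Algebra.smul_def] using J.mul_mem_right w h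
    exact hδ0 (H.indep _ _ h1).1
  refine ⟨u, fun m hm => hΛ2 _ fun h => ?_, fun s hs => ?_, fun v hv => ?_⟩
  · have h1 := hu (m * h)
    rw [hmulδ _ (I.mul_mem_right _ hm), ← mul_assoc] at h1
    simpa using dvd_sub (dvd_mul_right δ (lam (m * h))) h1
  · have h1 : ∀ t, δ ∣ lam (t * (s * algebraMap A S δ)) := fun t => by
      have h2 := hu (s * t)
      have h3 := hΛ1 (u * (s * t)) (by
        rw [show u * (s * t) = s * u * t by ring]; exact Ideal.mul_mem_right _ _ hs)
      have h4 := dvd_add h2 h3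
      rwa [sub_add_cancel, show s * t * algebraMap A S δ = t * (s * algebraMap A S δ) by ring]
        at h4
    -- the functional `t ↦ lam (t * s * δ)` is divisible by `δ`, and its quotient is represented by an
    -- element `m` of `I`, which is then congruent to `s` modulo `J`
    choose ψ hψ using h1
    have hsI : s * algebraMap A S δ ∈ I := I.mul_mem_left _ hδ
    let ψ' : S →ₗ[A] A :=
      { toFun := ψ
        map_add' := fun x y => mul_left_cancel₀ hδ0 (by
          rw [mul_add, ← hψ, ← hψ, ← hψ, add_mul,
            hl.add _ (I.mul_mem_left _ hsI) _ (I.mul_mem_left _ hsI)])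
        map_smul' := fun a x => mul_left_cancel₀ hδ0 (by
          rw [RingHom.id_apply, smul_eq_mul, mul_left_comm, ← hψ, ← hψ, smul_mul_assoc,
            hl.smul _ _ (I.mul_mem_left _ hsI)]) }
    obtain ⟨m, hm, hrep⟩ := H.exists_rep hl hw hg hyg 0 ψ' fun p hp => by
      have h2 : δ * ψ p = δ * 0 := by rw [← hψ, mul_zero, hl.zero _ (J.mul_mem_right _ hp)]
      rw [show ψ' p = 0 from mul_left_cancel₀ hδ0 h2]
    have h3 : algebraMap A S δ * (m - s) ∈ J := by
      refine H.mem_J_of_lam hl hw hg hyg (I.mul_mem_right _ hδ) fun t => ?_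
      have h4 : ψ t = lam (t * m) := sub_eq_zero.mp (zero_dvd_iff.mp (hrep t))
      rw [show t * (algebraMap A S δ * (m - s)) =
        t * m * algebraMap A S δ - t * (s * algebraMap A S δ) by ring,
        hl.sub (I.mul_mem_left _ hδ) (I.mul_mem_left _ hsI), hmulδ _ (I.mul_mem_left _ hm),
        hψ, h4, sub_self]
    have h5 := H.le ((H.prime.mem_or_mem h3).resolve_left hδJ)
    simpa using I.sub_mem hm h5
  · let φ : S →ₗ[A] A := Λ.comp (LinearMap.mulLeft A v)
    have hφ : ∀ s, φ s = Λ (v * s) := fun s => rfl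
    -- the functional `Λ (v * ·)` is represented modulo `δ` by some `m ∈ I`, and `lam (m * ·)` is
    -- divisible by `δ` on `I`, which forces `m` to be a multiple `r * δ` modulo `J`
    obtain ⟨m, hm, hrep⟩ := H.exists_rep hl hw hg hyg δ φ fun p hp => hΛ1 _ (hv _ (H.le hp))
    have h1 : ∀ m' ∈ I, δ ∣ lam (m * m') := fun m' hm' => by
      have h2 := dvd_sub (hΛ1 _ (hv _ hm')) (hrep m')
      rwa [hφ, sub_sub_cancel, mul_comm] at h2
    classical
    let ψ : S → A := fun m' => if h : m' ∈ I then (h1 m' h).choose else 0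
    have hψ : ∀ m' ∈ I, lam (m * m') = δ * ψ m' := fun m' h => by
      simp only [ψ, dif_pos h]
      exact (h1 m' h).choose_spec
    have hψl : LinOn J I ψ := by
      refine ⟨fun x hx y hy => ?_, fun a x hx => ?_, fun x hx => ?_⟩ <;>
        refine mul_left_cancel₀ hδ0 ?_
      · rw [mul_add, ← hψ _ hx, ← hψ _ hy, ← hψ _ (I.add_mem hx hy), mul_add,
          hl.add _ (I.mul_mem_left _ hx) _ (I.mul_mem_left _ hy)]
      · rw [mul_left_comm, ← hψ _ hx, ← hψ _ (smul_mem' a hx), mul_smul_comm,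
          hl.smul _ _ (I.mul_mem_left _ hx)]
      · rw [← hψ _ (H.le hx), hl.zero _ (J.mul_mem_left _ hx), mul_zero]
    obtain ⟨r, hr⟩ := H.exists_rep' hl hw hg hyg ψ hψl
    have h6 : m - r * algebraMap A S δ ∈ J := by
      refine H.mem_J_of_lam' hl hw hg hyg fun m' hm' => ?_
      rw [sub_mul, hl.sub (I.mul_mem_left _ hm') (I.mul_mem_left _ hm'), hψ _ hm', hr _ hm',
        mul_right_comm, hmulδ _ (I.mul_mem_left _ hm'), sub_self]
    refine ⟨r, hΛ2 _ fun s => ?_⟩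
    have h7 : lam (s * m) = lam (r * s * algebraMap A S δ) :=
      hl.congr H.le (I.mul_mem_left _ hδ) (by
        rw [show s * m - r * s * algebraMap A S δ = s * (m - r * algebraMap A S δ) by ring]
        exact J.mul_mem_left _ h6)
    have h8 := dvd_add (hrep s) (hu (r * s))
    rw [hφ, h7] at h8
    rw [sub_mul, map_sub, show r * u * s = u * (r * s) by ring]
    simpa using h8

end IsPairing

end Pairing

/-! ### Linkage and `Ext` -/

/-- If `(𝔞 : I)` is generated modulo `𝔞` by `u` and `(𝔞 : u) = I`, then multiplication by `u`
induces `S / I ≃ Hom(S / I, S / 𝔞)`. -/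
lemma hom_equiv_of_link {S : Type} [CommRing S] {I 𝔞 : Ideal S} {u : S}
    (h1 : ∀ m ∈ I, u * m ∈ 𝔞) (h2 : ∀ s, s * u ∈ 𝔞 → s ∈ I)
    (h3 : ∀ v, (∀ m ∈ I, v * m ∈ 𝔞) → ∃ r, v - r * u ∈ 𝔞) :
    Nonempty ((S ⧸ I) ≃ₗ[S] ((S ⧸ I) →ₗ[S] (S ⧸ 𝔞))) := by
  let L0 : (S ⧸ I) →ₗ[S] (S ⧸ 𝔞) := Submodule.liftQ I
    ((Submodule.mkQ 𝔞).comp (LinearMap.toSpanSingleton S S u)) fun m hm => by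
      refine (Submodule.Quotient.mk_eq_zero 𝔞).mpr ?_
      simpa [mul_comm] using h1 m hm
  have hL0 : ∀ s : S, L0 (Submodule.mkQ I s) = Submodule.mkQ 𝔞 (s * u) := fun s => rfl
  let F : S →ₗ[S] ((S ⧸ I) →ₗ[S] (S ⧸ 𝔞)) := LinearMap.toSpanSingleton S _ L0
  have hF : ∀ r s : S, F r (Submodule.mkQ I s) = Submodule.mkQ 𝔞 (r * s * u) := fun r s => by
    change r • L0 _ = _
    rw [hL0, ← map_smul, smul_eq_mul, mul_assoc]
  have hker : LinearMap.ker F = I := by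
    ext r
    rw [LinearMap.mem_ker]
    constructor
    · intro h
      have := hF r 1
      rw [h, LinearMap.zero_apply, mul_one] at this
      exact h2 _ ((Submodule.Quotient.mk_eq_zero _).mp this.symm)
    · intro h
      refine Submodule.linearMap_qext _ (LinearMap.ext fun s => ?_)
      change F r (Submodule.mkQ I s) = 0
      rw [hF]
      refine (Submodule.Quotient.mk_eq_zero _).mpr ?_
      rw [show r * s * u = s * (u * r) by ring]
      exact 𝔞.mul_mem_left _ (h1 _ h)
  have hsurj : Function.Surjective F := by
    intro φ
    obtain ⟨v, hv⟩ := Submodule.mkQ_surjective 𝔞 (φ (Submodule.mkQ I 1))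
    have hφ : ∀ s, φ (Submodule.mkQ I s) = Submodule.mkQ 𝔞 (v * s) := fun s => by
      rw [mul_comm, ← smul_eq_mul, map_smul, hv, ← map_smul, ← map_smul, smul_eq_mul, mul_one]
    obtain ⟨r, hr⟩ := h3 v fun m hm => by
      rw [← Submodule.Quotient.mk_eq_zero 𝔞]
      rw [← Submodule.mkQ_apply, ← hφ, Submodule.mkQ_apply,
        (Submodule.Quotient.mk_eq_zero I).mpr hm, map_zero]
    refine ⟨r, Submodule.linearMap_qext _ (LinearMap.ext fun s => ?_)⟩
    change F r (Submodule.mkQ I s) = φ (Submodule.mkQ I s)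
    rw [hF, hφ, Submodule.mkQ_apply, Submodule.mkQ_apply, eq_comm, Submodule.Quotient.eq,
      show v * s - r * s * u = s * (v - r * u) by ring]
    exact 𝔞.mul_mem_left _ hr
  exact ⟨(Submodule.quotEquivOfEq _ _ hker.symm).trans (F.quotKerEquivOfSurjective hsurj)⟩

/-- The top `Ext` module is computed on a weakly regular sequence `rs` inside `I`. -/
lemma extSI_equiv {K : Type} [Field K] {σ : Type} {I : Ideal (MvPolynomial σ K)}
    {rs : List (MvPolynomial σ K)}
    (hw : RingTheory.Sequence.IsWeaklyRegular (MvPolynomial σ K) rs)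
    (hrs : Ideal.ofList rs ≤ I) (hlen : rs.length ≠ 0) {u : MvPolynomial σ K}
    (h1 : ∀ m ∈ I, u * m ∈ Ideal.ofList rs) (h2 : ∀ s, s * u ∈ Ideal.ofList rs → s ∈ I)
    (h3 : ∀ v, (∀ m ∈ I, v * m ∈ Ideal.ofList rs) → ∃ r, v - r * u ∈ Ideal.ofList rs) :
    Nonempty (extSI K I rs.length ≃ₗ[MvPolynomial σ K] (MvPolynomial σ K ⧸ I)) := by
  obtain ⟨p, hp⟩ := Nat.exists_eq_succ_of_ne_zero hlen
  obtain ⟨e1⟩ := hom_equiv_of_link h1 h2 h3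
  obtain ⟨-, ⟨e2⟩⟩ := ext_of_isWeaklyRegular
    (ModuleCat.of (MvPolynomial σ K) (MvPolynomial σ K ⧸ I)) rs
    (ModuleCat.of (MvPolynomial σ K) (MvPolynomial σ K)) hw fun r hr => by
      change r ∈ Module.annihilator (MvPolynomial σ K) (MvPolynomial σ K ⧸ I)
      rw [Ideal.annihilator_quotient]
      exact hrs (Ideal.subset_span hr)
  have e : Ideal.ofList rs • (⊤ : Submodule (MvPolynomial σ K) (MvPolynomial σ K)) =
      Ideal.ofList rs := by
    rw [smul_eq_mul, Ideal.mul_top]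
  have e3 : (MvPolynomial σ K ⧸ I →ₗ[MvPolynomial σ K] (MvPolynomial σ K ⧸ (Ideal.ofList rs •
      (⊤ : Submodule (MvPolynomial σ K) (MvPolynomial σ K))))) ≃ₗ[MvPolynomial σ K]
      (MvPolynomial σ K ⧸ I →ₗ[MvPolynomial σ K] (MvPolynomial σ K ⧸ Ideal.ofList rs)) :=
    LinearEquiv.congrRight (Submodule.quotEquivOfEq _ _ e)
  rw [hp] at e2 ⊢
  obtain ⟨e4⟩ := ext_equiv_abelianExt
    (ModuleCat.of (MvPolynomial σ K) (MvPolynomial σ K ⧸ I))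
    (ModuleCat.of (MvPolynomial σ K) (MvPolynomial σ K)) p
  exact ⟨((e4.trans e2).trans e3).trans e1.symm⟩

/-! ### Depth and dimension -/

section Depth

open RingTheory.Sequence

lemma length_le_supportDim {R : Type} [CommRing R] [IsNoetherianRing R] (rs : List R) :
    ∀ (M : Type) [AddCommGroup M] [Module R M] [Module.Finite R M], IsRegular M rs →
      ((rs.length : ℕ∞) : WithBot ℕ∞) ≤ Module.supportDim R M := by
  induction rs with
  | nil =>
    intro M _ _ _ h
    have := h.nontrivial
    obtain ⟨d, hd⟩ := WithBot.ne_bot_iff_exists.mp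
      ((Module.supportDim_ne_bot_iff_nontrivial R M).mpr this)
    rw [← hd]
    simp
  | cons x rs ih =>
    intro M _ _ _ h
    obtain ⟨h1, h2⟩ := (isRegular_cons_iff M x rs).mp h
    refine le_trans ?_ (Module.supportDim_quotSMulTop_succ_le_of_notMem_minimalPrimes
      (fun _ ↦ h1.notMem_of_mem_minimalPrimes))
    have := add_le_add_left (ih _ h2) 1
    simpa using this

lemma ringKrullDim_le_of_isIntegral {A B : Type} [CommRing A] [CommRing B] [Algebra A B]
    [Algebra.IsIntegral A B] : ringKrullDim B ≤ ringKrullDim A :=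
  Order.krullDim_le_of_strictMono (PrimeSpectrum.comap (algebraMap A B)) fun p q h =>
    Ideal.IsIntegral.comap_lt_comap (I := p.asIdeal) (J := q.asIdeal) h

variable {A S ι : Type} [CommRing A] [CommRing S] [Algebra A S] [Fintype ι] [DecidableEq ι]
  {J I : Ideal S} {y g : ι → S} {w : S}

/-- The `A`-linear map sending the standard basis to the classes of `e` and the `v i`. -/
def combQ (J : Ideal S) (e : S) (v : ι → S) : (Option ι → A) →ₗ[A] S ⧸ J :=
  Fintype.linearCombination A (fun o => o.elim (Ideal.Quotient.mk J e)
    (fun i => Ideal.Quotient.mk J (v i)))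

omit [DecidableEq ι] in
lemma combQ_apply (e : S) (v : ι → S) (c : Option ι → A) :
    combQ J e v c = Ideal.Quotient.mk J (c none • e + ∑ i, c (some i) • v i) := by
  simp only [combQ, Fintype.linearCombination_apply, Fintype.sum_option, Option.elim]
  rw [map_add, map_sum]
  rfl

lemma combQ_injective {e : S} {v : ι → S}
    (h : ∀ (a : A) (b : ι → A), a • e + ∑ i, b i • v i ∈ J → a = 0 ∧ b = 0) :
    Function.Injective (combQ (A := A) J e v) := by
  rw [← LinearMap.ker_eq_bot, LinearMap.ker_eq_bot']
  intro c hc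
  rw [combQ_apply, Ideal.Quotient.eq_zero_iff_mem] at hc
  obtain ⟨h1, h2⟩ := h _ (fun i => c (some i)) hc
  funext o
  cases o with
  | none => exact h1
  | some i => exact congrFun h2 i

lemma IsPairing.combQ_surjective (H : IsPairing (A := A) J I y g w) :
    Function.Surjective (combQ (A := A) J 1 y) := by
  intro s
  obtain ⟨s, rfl⟩ := Ideal.Quotient.mk_surjective s
  obtain ⟨a, b, h⟩ := H.span_top s
  refine ⟨fun o => o.elim a b, ?_⟩
  rw [combQ_apply, eq_comm, Ideal.Quotient.eq]
  simpa [Algebra.algebraMap_eq_smul_one] using h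

lemma IsPairing.finite_quot (H : IsPairing (A := A) J I y g w) : Module.Finite A (S ⧸ J) :=
  Module.Finite.of_surjective _ H.combQ_surjective

lemma IsPairing.indep_top [IsDomain A] (H : IsPairing (A := A) J I y g w) (a : A) (b : ι → A)
    (h : a • (1 : S) + ∑ i, b i • y i ∈ J) : a = 0 ∧ b = 0 := by
  obtain ⟨lam, hl, hw, hg, hyg⟩ := H.exists_lam
  have hb : b = 0 := by
    funext j
    have h1 := hl.zero _ (J.mul_mem_right (g j) h)
    rw [add_mul, Finset.sum_mul, smul_mul_assoc, one_mul] at h1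
    simp only [smul_mul_assoc] at h1
    rw [hl.add _ (smul_mem' _ (H.g_mem j)) _
      (I.sum_mem fun i _ => smul_mem' _ (I.mul_mem_left _ (H.g_mem j))),
      hl.smul _ _ (H.g_mem j), hg,
      hl.sum (g := fun i => y i * g j) b (fun i => I.mul_mem_left _ (H.g_mem j))] at h1
    simpa [hyg] using h1
  refine ⟨?_, hb⟩
  have h2 : a • w + ∑ i, (0 : ι → A) i • g i ∈ J := by
    have := J.mul_mem_right w h
    simpa [hb] using this
  exact (H.indep _ _ h2).1

lemma IsPairing.flat_quot [IsDomain A] (H : IsPairing (A := A) J I y g w) :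
    Module.Flat A (S ⧸ J) :=
  Module.Flat.of_linearEquiv
    (LinearEquiv.ofBijective _ ⟨combQ_injective H.indep_top, H.combQ_surjective⟩).symm

/-- The submodule `I / J` of `S / J`. -/
abbrev subQ (J I : Ideal S) : Submodule S (S ⧸ J) := Submodule.map J.mkQ I

lemma IsPairing.flat_sub (H : IsPairing (A := A) J I y g w) : Module.Flat A (subQ J I) := by
  have hr : LinearMap.range (combQ (A := A) J w g) = (subQ J I).restrictScalars A := by
    ext q
    simp only [LinearMap.mem_range, combQ_apply, Submodule.restrictScalars_mem,
      Submodule.mem_map]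
    constructor
    · rintro ⟨c, rfl⟩
      exact ⟨_, H.comb_mem (c none) (fun i => c (some i)), rfl⟩
    · rintro ⟨m, hm, rfl⟩
      obtain ⟨a, b, h⟩ := H.span_I m hm
      exact ⟨fun o => o.elim a b, ((Ideal.Quotient.eq).mpr h).symm⟩
  have e := (LinearEquiv.ofInjective _ (combQ_injective H.indep)).trans (LinearEquiv.ofEq _ _ hr)
  have : Module.Flat A ((subQ J I).restrictScalars A) := Module.Flat.of_linearEquiv e.symm
  exact this

lemma isWeaklyRegular_of_flat {as : List A} (h : IsWeaklyRegular A as) (M : Type)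
    [AddCommGroup M] [Module A M] [Module S M] [IsScalarTower A S M] [Module.Flat A M] :
    IsWeaklyRegular M (as.map (algebraMap A S)) := by
  rw [isWeaklyRegular_map_algebraMap_iff]
  exact ((TensorProduct.rid A M).isWeaklyRegular_congr as).mp (h.isWeaklyRegular_lTensor (M₂ := M))

/-- A regular sequence of length `k + 1` on `A` stays weakly regular on the flat modules `S / J` and
`I / J`, so the long exact sequence of `Ext` gives depth at least `k` for `S / I`. Since `S / I` is
integral over `A / (δ)`, its dimension is at most `k`. -/
lemma depth_dim_of_isPairing [IsDomain A] [IsNoetherianRing A] [IsNoetherianRing S]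
    (H : IsPairing (A := A) J I y g w) {𝔪 : Ideal S} (h𝔪 : 𝔪.IsMaximal) (hI : I ≤ 𝔪)
    {as : List A} (has : IsWeaklyRegular A as) {k : ℕ} (hlen : as.length = k + 1)
    (has' : ∀ a ∈ as, algebraMap A S a ∈ 𝔪) (hdim : ringKrullDim A = ((k + 1 : ℕ) : ℕ∞))
    {δ : A} (hδ0 : δ ≠ 0) (hδ : algebraMap A S δ ∈ I) :
    (depth 𝔪 (S ⧸ I) : WithBot ℕ∞) = (k : ℕ∞) ∧ ringKrullDim (S ⧸ I) = (k : ℕ∞) := by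
  have := H.finite_quot
  have := H.flat_quot
  have := H.flat_sub
  have hup : ringKrullDim (S ⧸ I) ≤ (k : ℕ∞) := by
    have h1 : Module.Finite A (S ⧸ I) := Module.Finite.of_surjective
      ((Submodule.factor H.le).restrictScalars A) (Submodule.factor_surjective H.le)
    let f : A ⧸ Ideal.span {δ} →+* S ⧸ I := Ideal.Quotient.lift _ (algebraMap A (S ⧸ I)) (by
      intro a ha
      obtain ⟨b, rfl⟩ := Ideal.mem_span_singleton.mp ha
      rw [IsScalarTower.algebraMap_apply A S (S ⧸ I), map_mul]
      exact Ideal.Quotient.eq_zero_iff_mem.mpr (I.mul_mem_right _ hδ))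
    let _ := f.toAlgebra
    have : IsScalarTower A (A ⧸ Ideal.span {δ}) (S ⧸ I) := IsScalarTower.of_algebraMap_eq fun a => rfl
    have : Algebra.IsIntegral (A ⧸ Ideal.span {δ}) (S ⧸ I) :=
      Algebra.IsIntegral.tower_top (R := A)
    refine (ringKrullDim_le_of_isIntegral (A := A ⧸ Ideal.span {δ})).trans ?_
    have h2 := ringKrullDim_quotient_succ_le_of_nonZeroDivisor (mem_nonZeroDivisors_of_ne_zero hδ0)
    rw [hdim] at h2
    generalize ringKrullDim (A ⧸ Ideal.span {δ}) = d at h2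
    induction d with
    | bot => exact bot_le
    | coe d =>
      norm_cast at h2 ⊢
      push_cast at h2
      exact (ENat.add_le_add_iff_right ENat.one_ne_top).mp h2
  -- `Ext(S / 𝔪, -)` vanishes below degree `k + 1` on `I / J` and `S / J`, hence below `k` on `S / I`
  have hseq : ∃ rs : List S, rs.length = k ∧ (∀ r ∈ rs, r ∈ 𝔪) ∧ IsRegular (S ⧸ I) rs := by
    let N := ModuleCat.of S (S ⧸ 𝔪)
    have hann : ∀ r ∈ as.map (algebraMap A S), r ∈ Module.annihilator S N := fun r hr => by
      change r ∈ Module.annihilator S (S ⧸ 𝔪)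
      rw [Ideal.annihilator_quotient]
      obtain ⟨a, ha, rfl⟩ := List.mem_map.mp hr
      exact has' a ha
    have e1 := (ext_of_isWeaklyRegular N _ (ModuleCat.of S (subQ J I))
      (isWeaklyRegular_of_flat has (subQ J I)) hann).1
    have e2 := (ext_of_isWeaklyRegular N _ (ModuleCat.of S (S ⧸ J))
      (isWeaklyRegular_of_flat has (S ⧸ J)) hann).1
    rw [List.length_map, hlen] at e1 e2
    let C : ShortComplex (ModuleCat S) := ShortComplex.mk (ModuleCat.ofHom (subQ J I).subtype)
      (ModuleCat.ofHom (Submodule.factor H.le)) (by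
        ext ⟨_, m, hm, rfl⟩
        exact (Submodule.Quotient.mk_eq_zero I).mpr hm)
    have hC : C.ShortExact := by
      refine ShortComplex.ShortExact.mk' ?_ ?_ ?_
      · rw [ShortComplex.moduleCat_exact_iff]
        intro q hq
        obtain ⟨s, rfl⟩ := Submodule.mkQ_surjective J q
        exact ⟨⟨_, s, (Submodule.Quotient.mk_eq_zero I).mp hq, rfl⟩, rfl⟩
      · exact (ModuleCat.mono_iff_injective _).mpr (Submodule.injective_subtype _)
      · exact (ModuleCat.epi_iff_surjective _).mpr (Submodule.factor_surjective H.le)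
    have e3 := ext_subsingleton_quotient N hC k e1 e2
    have : Module.Finite S (ModuleCat.of S (S ⧸ I)) := inferInstanceAs (Module.Finite S (S ⧸ I))
    have : Module.Finite S N := inferInstanceAs (Module.Finite S (S ⧸ 𝔪))
    refine ModuleCat.exists_isRegular_of_exists_subsingleton_ext 𝔪 k (ModuleCat.of S (S ⧸ I)) ?_ N ?_ e3
    · refine lt_top_iff_ne_top.mpr fun h => ?_
      have h1 : Submodule.mkQ I 1 ∈ 𝔪 • (⊤ : Submodule S (S ⧸ I)) := by
        have : (𝔪 • ⊤ : Submodule S (S ⧸ I)) = ⊤ := h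
        rw [this]; trivial
      have h2 : (𝔪 • ⊤ : Submodule S (S ⧸ I)) ≤ Submodule.map I.mkQ 𝔪 := by
        rw [Submodule.smul_le]
        intro r hr q _
        obtain ⟨s, rfl⟩ := Submodule.mkQ_surjective I q
        exact ⟨r * s, 𝔪.mul_mem_right _ hr, rfl⟩
      obtain ⟨m, hm, hm1⟩ := h2 h1
      have h3 := hI ((Submodule.Quotient.eq I).mp hm1)
      exact h𝔪.ne_top ((Ideal.eq_top_iff_one _).mpr (by simpa using 𝔪.sub_mem hm h3))
    · change Module.support S (S ⧸ 𝔪) = _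
      rw [Module.support_eq_zeroLocus, Ideal.annihilator_quotient]
  have hle : ∀ rs : List S, IsRegular (S ⧸ I) rs →
      ((rs.length : ℕ∞) : WithBot ℕ∞) ≤ ringKrullDim (S ⧸ I) := fun rs h => by
    have := length_le_supportDim rs _ h
    rwa [Module.supportDim_quotient_eq_ringKrullDim] at this
  obtain ⟨rs, hk, hm, hreg⟩ := hseq
  have hd : ringKrullDim (S ⧸ I) = (k : ℕ∞) := le_antisymm hup (by
    have := hle rs hreg
    rwa [hk] at this)
  refine ⟨?_, hd⟩
  rw [WithBot.coe_inj]
  refine le_antisymm (sSup_le ?_) (le_sSup ⟨rs, by rw [hk], hm, hreg⟩)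
  rintro _ ⟨rs', rfl, -, h⟩
  have := hle rs' h
  rw [hd] at this
  exact WithBot.coe_le_coe.mp this

end Depth

/-! ### A Noether normalization of the polynomial ring -/

section Concrete

variable (K : Type) [Field K] (N : ℕ)

/-- The polynomial ring in `x_0, …, x_N, y_0, …, y_N`. -/
abbrev SR := MvPolynomial (Fin (N + 1) ⊕ Fin (N + 1)) K

/-- The polynomial ring in `θ_0, …, θ_N` and one further variable. It plays two roles: as the
Noether normalization, with the further variable mapping to `y_N`, and as the target
`K[θ][T]` of the parametrization `par`. -/
abbrev BR := Polynomial (MvPolynomial (Fin (N + 1)) K)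

/-- The variable `x_i`, for `i` a natural number read modulo `N + 1`. -/
def xs (i : ℕ) : SR K N := xv K (Fin.ofNat (N + 1) i)

/-- The variable `y_i`, for `i` a natural number read modulo `N + 1`. -/
def ys (i : ℕ) : SR K N := yv K (Fin.ofNat (N + 1) i)

/-- The linear form `θ_0 = x_0`, `θ_{i + 1} = x_{i + 1} - y_i`. -/
def ths : ℕ → SR K N
  | 0 => xs K N 0
  | i + 1 => xs K N (i + 1) - ys K N i

/-- The variable `θ_i` of the Noether normalization. -/
def thb (i : ℕ) : BR K N := Polynomial.C (X (Fin.ofNat (N + 1) i))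

variable {K N}

lemma ofNat_val (i : Fin (N + 1)) : Fin.ofNat (N + 1) (i : ℕ) = i :=
  Fin.ext (Nat.mod_eq_of_lt i.2)

lemma val_ofNat {i : ℕ} (hi : i ≤ N) : ((Fin.ofNat (N + 1) i : Fin (N + 1)) : ℕ) = i :=
  Nat.mod_eq_of_lt (Nat.lt_succ_of_le hi)

lemma binom_mem (i j : ℕ) :
    xs K N i * ys K N j - xs K N j * ys K N i ∈ bei K (⊤ : SimpleGraph (Fin (N + 1))) := by
  unfold xs ys
  rcases lt_trichotomy (Fin.ofNat (N + 1) i) (Fin.ofNat (N + 1) j) with h | h | h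
  · exact Ideal.subset_span ⟨_, _, h, h.ne, rfl⟩
  · rw [h, sub_self]; exact Ideal.zero_mem _
  · rw [← neg_mem_iff, neg_sub]
    exact Ideal.subset_span ⟨_, _, h, h.ne, rfl⟩

variable (K N) in
/-- The inclusion of the Noether normalization: `θ_i` and `y_N` are sent to themselves. -/
def noeth : BR K N →+* SR K N :=
  Polynomial.eval₂RingHom (MvPolynomial.aeval (R := K) fun i : Fin (N + 1) => ths K N i).toRingHom
    (ys K N N)

instance : Algebra (BR K N) (SR K N) := (noeth K N).toAlgebra

lemma algebraMap_eq : algebraMap (BR K N) (SR K N) = noeth K N := rfl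

lemma noeth_thb {i : ℕ} (hi : i ≤ N) : noeth K N (thb K N i) = ths K N i := by
  simp [noeth, thb, Nat.mod_eq_of_lt (Nat.lt_succ_of_le hi)]

lemma noeth_X : noeth K N Polynomial.X = ys K N N := by simp [noeth]

lemma noeth_C_C (c : K) : noeth K N (Polynomial.C (C c)) = C c := by
  simp [noeth, MvPolynomial.algebraMap_eq]

variable (K N) in
/-- The polynomial ring over the Noether normalization in `y_0, …, y_{N - 1}`. -/
def toSR : MvPolynomial (Fin N) (BR K N) →ₐ[BR K N] SR K N :=
  MvPolynomial.aeval fun i => ys K N i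

variable (K N) in
/-- The inverse of `toSR`. -/
def ofSR : SR K N →ₐ[K] MvPolynomial (Fin N) (BR K N) :=
  MvPolynomial.aeval (Sum.elim
    (Fin.cases (C (thb K N 0)) fun i => C (thb K N (i + 1)) + X i)
    (Fin.lastCases (C Polynomial.X) fun i => X i))

lemma toSR_C (a : BR K N) : toSR K N (C a) = noeth K N a := (toSR K N).commutes a

lemma toSR_X (i : Fin N) : toSR K N (X i) = ys K N i := MvPolynomial.aeval_X _ i

lemma ofSR_xs_zero : ofSR K N (xs K N 0) = C (thb K N 0) := by
  simp only [ofSR, xs, xv, MvPolynomial.aeval_X, Sum.elim_inl]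
  rfl

lemma ofSR_xs_succ (i : Fin N) : ofSR K N (xs K N (i + 1)) = C (thb K N (i + 1)) + X i := by
  have : Fin.ofNat (N + 1) (i + 1) = i.succ := ofNat_val i.succ
  simp only [ofSR, xs, xv, MvPolynomial.aeval_X, Sum.elim_inl, this, Fin.cases_succ]

lemma ofSR_ys_last : ofSR K N (ys K N N) = C Polynomial.X := by
  have : Fin.ofNat (N + 1) N = Fin.last N := ofNat_val (Fin.last N)
  simp only [ofSR, ys, yv, MvPolynomial.aeval_X, Sum.elim_inr, this, Fin.lastCases_last]

lemma ofSR_ys (i : Fin N) : ofSR K N (ys K N i) = X i := by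
  have : Fin.ofNat (N + 1) i = i.castSucc := ofNat_val i.castSucc
  simp only [ofSR, ys, yv, MvPolynomial.aeval_X, Sum.elim_inr, this, Fin.lastCases_castSucc]

lemma ofSR_C (c : K) : ofSR K N (C c) = C (Polynomial.C (C c)) := (ofSR K N).commutes c

lemma toSR_ofSR (s : SR K N) : toSR K N (ofSR K N s) = s := by
  suffices h : (toSR K N).toRingHom.comp (ofSR K N).toRingHom = RingHom.id _ from
    DFunLike.congr_fun h s
  refine MvPolynomial.ringHom_ext (fun c => ?_) ?_
  · change toSR K N (ofSR K N (C c)) = C c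
    rw [ofSR_C, toSR_C, noeth_C_C]
  · rintro (i | i)
    · change toSR K N (ofSR K N (xv K i)) = xv K i
      induction i using Fin.cases with
      | zero =>
        change toSR K N (ofSR K N (xs K N 0)) = xs K N 0
        rw [ofSR_xs_zero, toSR_C, noeth_thb (Nat.zero_le _), ths]
      | succ i =>
        rw [show xv K i.succ = xs K N (i + 1) from congrArg _ (ofNat_val i.succ).symm,
          ofSR_xs_succ, map_add, toSR_C, toSR_X, noeth_thb i.2, ths, sub_add_cancel]
    · change toSR K N (ofSR K N (yv K i)) = yv K i
      induction i using Fin.lastCases with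
      | last =>
        rw [show yv K (Fin.last N) = ys K N N from congrArg _ (ofNat_val (Fin.last N)).symm,
          ofSR_ys_last, toSR_C, noeth_X]
      | cast i =>
        rw [show yv K i.castSucc = ys K N i from congrArg _ (ofNat_val i.castSucc).symm,
          ofSR_ys, toSR_X]

lemma ofSR_noeth (a : BR K N) : ofSR K N (noeth K N a) = C a := by
  suffices h : (ofSR K N).toRingHom.comp (noeth K N) = C from DFunLike.congr_fun h a
  refine Polynomial.ringHom_ext (fun a => ?_) ?_
  · suffices h : ((ofSR K N).toRingHom.comp (noeth K N)).comp Polynomial.C =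
        (C : _ →+* MvPolynomial (Fin N) (BR K N)).comp Polynomial.C from DFunLike.congr_fun h a
    refine MvPolynomial.ringHom_ext (fun c => ?_) (fun i => ?_)
    · change ofSR K N (noeth K N (Polynomial.C (C c))) = C (Polynomial.C (C c))
      rw [noeth_C_C, ofSR_C]
    · change ofSR K N (noeth K N (Polynomial.C (X i))) = C (Polynomial.C (X i))
      have hi : Polynomial.C (X i) = thb K N i := by rw [thb, ofNat_val]
      rw [hi, noeth_thb (Nat.le_of_lt_succ i.2)]
      induction i using Fin.cases with
      | zero => exact ofSR_xs_zero
      | succ i =>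
        change ofSR K N (xs K N (i + 1) - ys K N i) = C (thb K N (i + 1))
        rw [map_sub, ofSR_xs_succ, ofSR_ys]
        exact add_sub_cancel_right (C (thb K N (i + 1))) (X i)
  · change ofSR K N (noeth K N Polynomial.X) = C Polynomial.X
    rw [noeth_X, ofSR_ys_last]

lemma ofSR_toSR (p : MvPolynomial (Fin N) (BR K N)) : ofSR K N (toSR K N p) = p := by
  suffices h : (ofSR K N).toRingHom.comp (toSR K N).toRingHom = RingHom.id _ from
    DFunLike.congr_fun h p
  refine MvPolynomial.ringHom_ext (fun a => ?_) (fun i => ?_)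
  · change ofSR K N (toSR K N (C a)) = C a
    rw [toSR_C, ofSR_noeth]
  · change ofSR K N (toSR K N (X i)) = X i
    rw [toSR_X, ofSR_ys]

variable (K N) in
lemma toSR_bijective : Function.Bijective (toSR K N) :=
  ⟨Function.LeftInverse.injective ofSR_toSR, Function.RightInverse.surjective toSR_ofSR⟩

/-- Induction along `S = A[y_0, …, y_{N - 1}]`. -/
lemma SR_induction {p : SR K N → Prop} (s : SR K N) (h1 : p 1)
    (hadd : ∀ a b, p a → p b → p (a + b)) (hsmul : ∀ (a : BR K N) s, p s → p (noeth K N a * s))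
    (hy : ∀ s, ∀ i < N, p s → p (ys K N i * s)) : p s := by
  obtain ⟨q, rfl⟩ := (toSR_bijective K N).2 s
  induction q using MvPolynomial.induction_on with
  | C a => rw [toSR_C]; simpa using hsmul a 1 h1
  | add a b ha hb => rw [map_add]; exact hadd _ _ ha hb
  | mul_X q i hq => rw [map_mul, toSR_X, mul_comm]; exact hy _ _ i.2 hq

/-! ### The parametrization `x_i = θ_i + θ_{i - 1} T + ⋯ + θ_0 T ^ i`, `y_i = T x_i` -/

variable (K N) in
/-- The image of `x_i` under the parametrization. -/
def rx : ℕ → BR K N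
  | 0 => thb K N 0
  | i + 1 => Polynomial.X * rx i + thb K N (i + 1)

variable (K N) in
/-- The parametrization of the variety of rank-one matrices, with kernel the ideal `bei K ⊤`. -/
def par : SR K N →+* BR K N :=
  (MvPolynomial.aeval (R := K) (Sum.elim (fun i : Fin (N + 1) => rx K N i)
    fun i : Fin (N + 1) => Polynomial.X * rx K N i)).toRingHom

lemma par_xs {i : ℕ} (hi : i ≤ N) : par K N (xs K N i) = rx K N i := by
  simp [par, xs, xv, Nat.mod_eq_of_lt (Nat.lt_succ_of_le hi)]

lemma par_ys {i : ℕ} (hi : i ≤ N) : par K N (ys K N i) = Polynomial.X * rx K N i := by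
  simp [par, ys, yv, Nat.mod_eq_of_lt (Nat.lt_succ_of_le hi)]

lemma par_ths {i : ℕ} (hi : i ≤ N) : par K N (ths K N i) = thb K N i := by
  cases i with
  | zero => rw [ths, par_xs hi, rx]
  | succ i => rw [ths, map_sub, par_xs hi, par_ys (by omega), rx, add_sub_cancel_left]

lemma par_noeth (a : BR K N) : par K N (noeth K N a) = a.comp (Polynomial.X * rx K N N) := by
  suffices h : (par K N).comp (noeth K N) = Polynomial.compRingHom (Polynomial.X * rx K N N) from
    DFunLike.congr_fun h a
  refine Polynomial.ringHom_ext (fun a => ?_) ?_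
  · suffices h : ((par K N).comp (noeth K N)).comp Polynomial.C =
      (Polynomial.compRingHom (Polynomial.X * rx K N N)).comp Polynomial.C from
        DFunLike.congr_fun h a
    refine MvPolynomial.ringHom_ext (fun c => ?_) (fun i => ?_)
    · change par K N (noeth K N (Polynomial.C (C c))) = (Polynomial.C (C c)).comp _
      rw [noeth_C_C, Polynomial.C_comp]
      exact MvPolynomial.aeval_C _ c
    · change par K N (noeth K N (Polynomial.C (X i))) = (Polynomial.C (X i)).comp _
      have hi : Polynomial.C (X i) = thb K N i := by rw [thb, ofNat_val]
      rw [Polynomial.C_comp, hi, noeth_thb (Nat.le_of_lt_succ i.2),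
        par_ths (Nat.le_of_lt_succ i.2)]
  · change par K N (noeth K N Polynomial.X) = Polynomial.X.comp _
    rw [noeth_X, par_ys le_rfl, Polynomial.X_comp]

lemma natDegree_rx (i : ℕ) : (rx K N i).natDegree = i ∧ rx K N i ≠ 0 := by
  have h0 : ∀ i, (thb K N i).natDegree = 0 := fun i => Polynomial.natDegree_C _
  induction i with
  | zero => exact ⟨h0 0, Polynomial.C_ne_zero.mpr (X_ne_zero _)⟩
  | succ i ih =>
    have h1 : (Polynomial.X * rx K N i).natDegree = i + 1 := by
      rw [Polynomial.natDegree_X_mul ih.2, ih.1]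
    have h2 : (rx K N (i + 1)).natDegree = i + 1 := by
      rw [rx, Polynomial.natDegree_add_eq_left_of_natDegree_lt (by rw [h0, h1]; omega), h1]
    refine ⟨h2, fun h => ?_⟩
    rw [h, Polynomial.natDegree_zero] at h2
    omega

/-- Polynomials in `T` of pairwise distinct degrees at most `N` are independent over the subring
generated by the `θ_i` and the image of `y_N`, which has degree `N + 1`. -/
lemma comp_indep {κ : Type} [Fintype κ] {v : κ → BR K N} (hv : ∀ k, v k ≠ 0)
    (hN : ∀ k, (v k).natDegree ≤ N) (hinj : Function.Injective fun k => (v k).natDegree)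
    (b : κ → BR K N) (h : ∑ k, (b k).comp (Polynomial.X * rx K N N) * v k = 0) : b = 0 := by
  have hq : (Polynomial.X * rx K N N).natDegree = N + 1 := by
    rw [Polynomial.natDegree_X_mul (natDegree_rx N).2, (natDegree_rx N).1]
  have hc : ∀ a : BR K N, a.comp (Polynomial.X * rx K N N) = 0 → a = 0 := fun a ha => by
    rcases Polynomial.comp_eq_zero_iff.mp ha with h1 | ⟨-, h1⟩
    · exact h1
    · rw [h1, Polynomial.natDegree_C] at hq
      omega
  have hdeg : ∀ k, (b k).comp (Polynomial.X * rx K N N) * v k ≠ 0 →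
      ((b k).comp (Polynomial.X * rx K N N) * v k).natDegree =
        (N + 1) * (b k).natDegree + (v k).natDegree := fun k hk => by
    rw [Polynomial.natDegree_mul (left_ne_zero_of_mul hk) (hv k), Polynomial.natDegree_comp, hq,
      mul_comm]
  have hdis := Polynomial.degree_sum_eq_of_disjoint
    (fun k => (b k).comp (Polynomial.X * rx K N N) * v k) Finset.univ (by
      rintro k ⟨-, hk⟩ l ⟨-, hl⟩ hkl he
      simp only [Function.comp_apply] at he
      rw [Polynomial.degree_eq_natDegree hk, Polynomial.degree_eq_natDegree hl] at he
      have he' := WithBot.coe_inj.mp he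
      replace he' : ((b k).comp (Polynomial.X * rx K N N) * v k).natDegree =
        ((b l).comp (Polynomial.X * rx K N N) * v l).natDegree := by exact_mod_cast he'
      rw [hdeg k hk, hdeg l hl] at he'
      refine hkl (hinj ?_)
      have h1 := congrArg (· % (N + 1)) he'
      simp only [Nat.mul_add_mod] at h1
      rwa [Nat.mod_eq_of_lt (Nat.lt_succ_of_le (hN k)),
        Nat.mod_eq_of_lt (Nat.lt_succ_of_le (hN l))] at h1)
  rw [h, Polynomial.degree_zero] at hdis
  funext k
  have h2 := Finset.le_sup (f := fun k => ((b k).comp (Polynomial.X * rx K N N) * v k).degree)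
    (Finset.mem_univ k)
  rw [← hdis, le_bot_iff, Polynomial.degree_eq_bot] at h2
  exact hc _ ((mul_eq_zero.mp h2).resolve_right (hv k))

end Concrete

section Comb

variable {A R κ ρ : Type} [CommRing A] [CommRing R] [Fintype κ] [Fintype ρ]

/-- The linear combinations of the `v k` with coefficients in the image of `f`. -/
def combS (f : A →+* R) (v : κ → R) : AddSubgroup R where
  carrier := {z | ∃ b : κ → A, z = ∑ k, f (b k) * v k}
  zero_mem' := ⟨0, by simp⟩
  add_mem' := by
    rintro _ _ ⟨b, rfl⟩ ⟨c, rfl⟩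
    exact ⟨b + c, by simp [add_mul, Finset.sum_add_distrib]⟩
  neg_mem' := by
    rintro _ ⟨b, rfl⟩
    exact ⟨-b, by simp⟩

variable {f : A →+* R} {v : κ → R} {v' : ρ → R}

lemma combS_mul (a : A) {z : R} (hz : z ∈ combS f v) : f a * z ∈ combS f v := by
  obtain ⟨b, rfl⟩ := hz
  exact ⟨fun k => a * b k, by simp [Finset.mul_sum, mul_assoc]⟩

lemma combS_mem (k : κ) : v k ∈ combS f v := by
  classical
  exact ⟨Pi.single k 1, by simp [Pi.single_apply, apply_ite f]⟩

lemma combS_closed {r : R} (h : ∀ k, r * v k ∈ combS f v') {z : R} (hz : z ∈ combS f v) :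
    r * z ∈ combS f v' := by
  obtain ⟨b, rfl⟩ := hz
  rw [Finset.mul_sum]
  refine sum_mem fun k _ => ?_
  rw [mul_left_comm]
  exact combS_mul _ (h k)

end Comb

section Concrete

variable {K : Type} [Field K] {N : ℕ}

/-! ### The coordinate ring of the variety of rank-one matrices -/

variable (K N) in
/-- The classes of `1, y_0, …, y_{N - 1}`. -/
def topQ : Option (Fin N) → SR K N ⧸ bei K (⊤ : SimpleGraph (Fin (N + 1))) :=
  fun o => o.elim 1 fun i => Ideal.Quotient.mk _ (ys K N i)

variable (K N) in
/-- The structure map of `S / J` as an algebra over the Noether normalization. -/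
def noethQ : BR K N →+* SR K N ⧸ bei K (⊤ : SimpleGraph (Fin (N + 1))) :=
  (Ideal.Quotient.mk _).comp (noeth K N)

lemma ys_mem_combS {i : ℕ} (hi : i ≤ N) :
    Ideal.Quotient.mk _ (ys K N i) ∈ combS (noethQ K N) (topQ K N) := by
  rcases hi.lt_or_eq with h | rfl
  · exact combS_mem (v := topQ K N) (some ⟨i, h⟩)
  · have := combS_mul (f := noethQ K i) Polynomial.X (combS_mem (v := topQ K i) none)
    rwa [noethQ, RingHom.comp_apply, noeth_X, topQ, Option.elim, mul_one] at this

lemma ths_mul_mem {i : ℕ} (hi : i ≤ N) {s : SR K N}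
    (hs : Ideal.Quotient.mk _ s ∈ combS (noethQ K N) (topQ K N)) :
    Ideal.Quotient.mk _ (ths K N i * s) ∈ combS (noethQ K N) (topQ K N) := by
  rw [map_mul, ← noeth_thb hi]
  exact combS_mul (f := noethQ K N) (thb K N i) hs

/-- Modulo `J`, products of two `y` variables are rewritten with
`y_i y_{j + 1} = y_{i + 1} y_j + θ_{j + 1} y_{i + 1} - θ_{i + 1} y_{j + 1}` until `y_N`, a parameter,
splits off. -/
lemma ys_mul_ys_mem (j : ℕ) : ∀ i, i ≤ N → j ≤ N →
    Ideal.Quotient.mk _ (ys K N i * ys K N j) ∈ combS (noethQ K N) (topQ K N) := by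
  have hlast : ∀ j ≤ N,
      Ideal.Quotient.mk _ (ys K N N * ys K N j) ∈ combS (noethQ K N) (topQ K N) := fun j hj => by
    rw [map_mul, ← noeth_X]
    exact combS_mul (f := noethQ K N) Polynomial.X (ys_mem_combS hj)
  induction j with
  | zero =>
    intro i hi hj
    rcases hi.lt_or_eq with h | rfl
    · have e : Ideal.Quotient.mk (bei K (⊤ : SimpleGraph (Fin (N + 1)))) (ys K N i * ys K N 0) =
          Ideal.Quotient.mk _ (ths K N 0 * ys K N (i + 1)) -
            Ideal.Quotient.mk _ (ths K N (i + 1) * ys K N 0) := by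
        rw [← map_sub, Ideal.Quotient.eq]
        convert binom_mem (K := K) (N := N) (i + 1) 0 using 1
        simp only [ths]; ring
      rw [e]
      exact sub_mem (ths_mul_mem hj (ys_mem_combS h)) (ths_mul_mem h (ys_mem_combS hj))
    · exact hlast 0 hj
  | succ j ih =>
    intro i hi hj
    rcases hi.lt_or_eq with h | rfl
    · have e : Ideal.Quotient.mk (bei K (⊤ : SimpleGraph (Fin (N + 1))))
          (ys K N i * ys K N (j + 1)) =
          Ideal.Quotient.mk _ (ys K N (i + 1) * ys K N j) +
            Ideal.Quotient.mk _ (ths K N (j + 1) * ys K N (i + 1)) -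
            Ideal.Quotient.mk _ (ths K N (i + 1) * ys K N (j + 1)) := by
        rw [← map_add, ← map_sub, Ideal.Quotient.eq]
        convert binom_mem (K := K) (N := N) (i + 1) (j + 1) using 1
        simp only [ths]; ring
      rw [e]
      exact sub_mem (add_mem (ih (i + 1) h (by omega)) (ths_mul_mem hj (ys_mem_combS h)))
        (ths_mul_mem h (ys_mem_combS hj))
    · exact hlast _ hj

/-- `S / J` is spanned by `1, y_0, …, y_{N - 1}` over the Noether normalization. -/
lemma mk_mem_combS (s : SR K N) :
    Ideal.Quotient.mk _ s ∈ combS (noethQ K N) (topQ K N) := by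
  refine SR_induction (p := fun s => Ideal.Quotient.mk _ s ∈ combS (noethQ K N) (topQ K N)) s
    (combS_mem (v := topQ K N) none) (fun a b ha hb => ?_) (fun a s hs => ?_) fun s i hi hs => ?_
  · rw [map_add]; exact add_mem ha hb
  · rw [map_mul]; exact combS_mul (f := noethQ K N) a hs
  · rw [map_mul]
    refine combS_closed (fun k => ?_) hs
    cases k with
    | none => rw [topQ, Option.elim, mul_one]; exact ys_mem_combS hi.le
    | some j => rw [topQ, Option.elim, ← map_mul]; exact ys_mul_ys_mem _ _ hi.le j.2.le

lemma span_top_aux (s : SR K N) : ∃ (a : BR K N) (b : Fin N → BR K N),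
    s - (algebraMap (BR K N) (SR K N) a + ∑ i, b i • ys K N i) ∈
      bei K (⊤ : SimpleGraph (Fin (N + 1))) := by
  obtain ⟨b, hb⟩ := mk_mem_combS s
  refine ⟨b none, fun i => b (some i), ?_⟩
  rw [← Ideal.Quotient.eq, hb, Fintype.sum_option, map_add, map_sum]
  simp only [topQ, Option.elim, mul_one, Algebra.smul_def, map_mul]
  rfl

variable (K N) in
/-- The action of the Noether normalization on `K[θ][T]` through the parametrization. -/
def noethP : BR K N →+* BR K N := (par K N).comp (noeth K N)

lemma noethP_apply (a : BR K N) : noethP K N a = a.comp (Polynomial.X * rx K N N) := par_noeth a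

/-- The form of `comp_indep` for a family `v₀, v 0, …, v (N - 1)`. -/
lemma noethP_indep {v₀ : BR K N} {v : Fin N → BR K N} (h₀ : v₀ ≠ 0) (hv : ∀ i, v i ≠ 0)
    (hN₀ : v₀.natDegree ≤ N) (hN : ∀ i, (v i).natDegree ≤ N)
    (hinj : Function.Injective fun i => (v i).natDegree)
    (hne : ∀ i, v₀.natDegree ≠ (v i).natDegree) (a : BR K N) (b : Fin N → BR K N)
    (h : noethP K N a * v₀ + ∑ i, noethP K N (b i) * v i = 0) : a = 0 ∧ ∀ i, b i = 0 := by
  have hc := comp_indep (v := fun o : Option (Fin N) => o.elim v₀ v) (Option.rec h₀ hv)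
    (Option.rec hN₀ hN) (by
      rintro (_ | i) (_ | j) hij
      · rfl
      · exact absurd hij (hne j)
      · exact absurd hij.symm (hne i)
      · exact congrArg some (hinj hij)) (fun o => o.elim a b) (by
      rw [Fintype.sum_option]
      simp only [noethP_apply] at h
      exact h)
  exact ⟨congrFun hc none, fun i => congrFun hc (some i)⟩

lemma par_smul (a : BR K N) (s : SR K N) : par K N (a • s) = noethP K N a * par K N s := by
  rw [Algebra.smul_def, map_mul]; rfl

/-- The kernel of the parametrization is `J`: modulo `J` every element is a combination of
`1, y_0, …, y_{N - 1}` over the Noether normalization, and the images of these have distinct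
degrees `0, …, N` in `T`. -/
lemma par_eq_zero_iff (s : SR K N) :
    par K N s = 0 ↔ s ∈ bei K (⊤ : SimpleGraph (Fin (N + 1))) := by
  have hle : ∀ s ∈ bei K (⊤ : SimpleGraph (Fin (N + 1))), par K N s = 0 := by
    suffices h : bei K (⊤ : SimpleGraph (Fin (N + 1))) ≤ RingHom.ker (par K N) from h
    refine Ideal.span_le.mpr ?_
    rintro _ ⟨i, j, -, -, rfl⟩
    have hx : ∀ i : Fin (N + 1), xv K i = xs K N i := fun i => congrArg _ (ofNat_val i).symm
    have hy : ∀ i : Fin (N + 1), yv K i = ys K N i := fun i => congrArg _ (ofNat_val i).symm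
    have h1 := Nat.le_of_lt_succ i.2
    have h2 := Nat.le_of_lt_succ j.2
    change par K N _ = 0
    rw [hx, hx, hy, hy, map_sub, map_mul, map_mul, par_xs h1, par_xs h2, par_ys h1, par_ys h2]
    ring
  refine ⟨fun h => ?_, hle s⟩
  obtain ⟨a, b, hab⟩ := span_top_aux s
  have hd : ∀ i : Fin N, (Polynomial.X * rx K N i : BR K N).natDegree = (i : ℕ) + 1 := fun i => by
    rw [Polynomial.natDegree_X_mul (natDegree_rx _).2, (natDegree_rx _).1]
  have hs : noethP K N a * 1 + ∑ i : Fin N, noethP K N (b i) * (Polynomial.X * rx K N i) = 0 := by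
    have h1 := hle _ hab
    rw [map_sub, h, zero_sub, neg_eq_zero, map_add, map_sum] at h1
    rw [mul_one, ← h1]
    exact congrArg₂ _ rfl (Finset.sum_congr rfl fun i _ => by rw [par_smul, par_ys i.2.le])
  obtain ⟨ha, hb⟩ := noethP_indep one_ne_zero
    (fun i => mul_ne_zero Polynomial.X_ne_zero (natDegree_rx _).2) (by simp)
    (fun i => by rw [hd]; omega)
    (fun i j hij => Fin.ext (Nat.succ_injective ((hd i).symm.trans (hij.trans (hd j)))))
    (fun i => by rw [hd, Polynomial.natDegree_one]; omega) a b hs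
  have h0 : ∀ i : Fin N, (0 : BR K N) • ys K N i = 0 := fun i => by
    rw [Algebra.smul_def, map_zero, zero_mul]
  simpa [ha, hb, h0] using hab

variable (K N) in
lemma bei_prime : (bei K (⊤ : SimpleGraph (Fin (N + 1)))).IsPrime := by
  have : bei K (⊤ : SimpleGraph (Fin (N + 1))) = RingHom.ker (par K N) := by
    ext s; rw [RingHom.mem_ker, par_eq_zero_iff]
  rw [this]
  exact RingHom.ker_isPrime _

end Concrete

section Concrete

variable {K : Type} [Field K] {N : ℕ}

/-! ### The image of the ideal under the parametrization -/

lemma noethP_thb {i : ℕ} (hi : i ≤ N) : noethP K N (thb K N i) = thb K N i := by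
  rw [noethP, RingHom.comp_apply, noeth_thb hi, par_ths hi]

lemma noethP_X : noethP K N Polynomial.X = Polynomial.X * rx K N N := by
  rw [noethP_apply, Polynomial.X_comp]

variable (K N) in
/-- The span of `T ^ (N - 1), …, T, 1` over the Noether normalization. Up to a common factor these
are the images of the generators of `M`. -/
def lowS : AddSubgroup (BR K N) :=
  combS (noethP K N) fun i : Fin N => Polynomial.X ^ (N - 1 - (i : ℕ))

variable (K N) in
/-- The span of `θ_0 T ^ N` and the powers `T ^ c` with `c < N` over the Noether normalization. Up
to a common factor this is the image of the ideal `J + M`. -/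
def fullS : AddSubgroup (BR K N) :=
  combS (noethP K N) fun o : Option (Fin N) =>
    o.elim (thb K N 0 * Polynomial.X ^ N) fun i => Polynomial.X ^ (N - 1 - (i : ℕ))

lemma pow_mem_lowS {c : ℕ} (hc : c < N) : Polynomial.X ^ c ∈ lowS K N := by
  have := combS_mem (f := noethP K N) (v := fun i : Fin N => Polynomial.X ^ (N - 1 - (i : ℕ)))
    ⟨N - 1 - c, by omega⟩
  rwa [show N - 1 - (N - 1 - c) = c by omega] at this

lemma thb_mul_mem_lowS {i : ℕ} (hi : i ≤ N) {z : BR K N} (hz : z ∈ lowS K N) :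
    thb K N i * z ∈ lowS K N := by
  have := combS_mul (thb K N i) hz
  rwa [noethP_thb hi] at this

/-- The image of `y_i`, times `T ^ c`, has residue zero for `i + c + 1 < N`: it is a combination of
powers of `T` below `N`. -/
lemma rx_mul_pow_mem {i c : ℕ} (h : i + c + 1 < N) :
    Polynomial.X * rx K N i * Polynomial.X ^ c ∈ lowS K N := by
  induction i generalizing c with
  | zero =>
    rw [rx, mul_comm Polynomial.X, mul_assoc, ← pow_succ']
    exact thb_mul_mem_lowS (Nat.zero_le _) (pow_mem_lowS (by omega))
  | succ i ih =>
    have h1 := add_mem (ih (c := c + 1) (by omega))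
      (thb_mul_mem_lowS (K := K) (i := i + 1) (by omega) (pow_mem_lowS (c := c + 1) (by omega)))
    convert h1 using 1
    rw [rx]; ring

/-- The image of `y_i`, times `T ^ c`, has residue one for `i + c + 1 = N`. -/
lemma rx_mul_pow_sub_mem {i c : ℕ} (h : i + c + 1 = N) :
    Polynomial.X * rx K N i * Polynomial.X ^ c - thb K N 0 * Polynomial.X ^ N ∈ lowS K N := by
  induction i generalizing c with
  | zero =>
    convert (lowS K N).zero_mem using 1
    rw [rx, show N = c + 1 by omega]; ring
  | succ i ih =>
    have h1 := add_mem (ih (c := c + 1) (by omega))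
      (thb_mul_mem_lowS (K := K) (i := i + 1) (by omega) (pow_mem_lowS (c := c + 1) (by omega)))
    convert h1 using 1
    rw [rx]; ring

/-- The image of `y_i`, times `T ^ c`, has residue zero for `N - i = d ≤ c < N`. The induction
moves `i` up to `N`, where the image of `y_N` is a coefficient. -/
lemma rx_mul_pow_mem' {i d c : ℕ} (h : i + d = N) (hd : d ≤ c) (hc : c < N) :
    Polynomial.X * rx K N i * Polynomial.X ^ c ∈ lowS K N := by
  induction d generalizing i c with
  | zero =>
    obtain rfl : i = N := h
    rw [← noethP_X]
    exact combS_mul _ (pow_mem_lowS hc)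
  | succ d ih =>
    obtain ⟨c, rfl⟩ : ∃ c', c = c' + 1 := ⟨c - 1, by omega⟩
    have h1 := sub_mem (ih (i := i + 1) (c := c) (by omega) (by omega) (by omega))
      (thb_mul_mem_lowS (K := K) (i := i + 1) (by omega) (pow_mem_lowS (c := c + 1) (by omega)))
    convert h1 using 1
    rw [rx]; ring

lemma top_mem_fullS : thb K N 0 * Polynomial.X ^ N ∈ fullS K N :=
  combS_mem (f := noethP K N) (v := fun o : Option (Fin N) =>
    o.elim (thb K N 0 * Polynomial.X ^ N) fun i => Polynomial.X ^ (N - 1 - (i : ℕ))) none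

lemma lowS_le : lowS K N ≤ fullS K N := by
  intro z hz
  rw [← one_mul z]
  refine combS_closed (fun k => ?_) hz
  rw [one_mul]
  exact combS_mem (f := noethP K N) (v := fun o : Option (Fin N) =>
    o.elim (thb K N 0 * Polynomial.X ^ N) fun i => Polynomial.X ^ (N - 1 - (i : ℕ))) (some k)

lemma rx_mul_mem_of_lowS {i : ℕ} (hi : i < N) {z : BR K N} (hz : z ∈ lowS K N) :
    Polynomial.X * rx K N i * z ∈ fullS K N := by
  refine combS_closed (fun k => ?_) hz
  rcases lt_trichotomy (i + (N - 1 - (k : ℕ)) + 1) N with h | h | h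
  · exact lowS_le (rx_mul_pow_mem h)
  · have h1 := add_mem (lowS_le (rx_mul_pow_sub_mem (K := K) h)) top_mem_fullS
    rwa [sub_add_cancel] at h1
  · exact lowS_le (rx_mul_pow_mem' (d := N - i) (by omega) (by omega) (by omega))

lemma rx_mul_mem (hN : 2 ≤ N) {i : ℕ} (hi : i < N) {z : BR K N} (hz : z ∈ fullS K N) :
    Polynomial.X * rx K N i * z ∈ fullS K N := by
  refine combS_closed (fun k => ?_) hz
  obtain ⟨M, rfl⟩ : ∃ M, N = M + 1 := ⟨N - 1, by omega⟩
  rcases k with _ | k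
  · change Polynomial.X * rx K (M + 1) i * (thb K (M + 1) 0 * Polynomial.X ^ (M + 1)) ∈
      fullS K (M + 1)
    rcases Nat.eq_zero_or_pos i with rfl | h0
    · have h1 := thb_mul_mem_lowS (K := K) (N := M + 1) (Nat.zero_le _)
        (rx_mul_pow_mem' (K := K) (N := M + 1) (i := 1) (d := M) (c := M) (by omega) le_rfl
          (by omega))
      have h2 := combS_mul (thb K (M + 1) 1) (top_mem_fullS (K := K) (N := M + 1))
      rw [noethP_thb (by omega)] at h2
      convert sub_mem (lowS_le h1) h2 using 1
      simp only [rx]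
      ring
    · have h1 := rx_mul_pow_mem' (K := K) (N := M + 1) (i := i) (d := M + 1 - i) (c := M)
        (by omega) (by omega) (by omega)
      convert rx_mul_mem_of_lowS (Nat.succ_pos M) h1 using 1
      simp only [rx]
      ring
  · exact rx_mul_mem_of_lowS hi (pow_mem_lowS (by omega))

lemma par_mul_mem (hN : 2 ≤ N) (s : SR K N) {z : BR K N} (hz : z ∈ fullS K N) :
    par K N s * z ∈ fullS K N := by
  induction s using SR_induction generalizing z with
  | h1 => rwa [map_one, one_mul]
  | hadd a b ha hb => rw [map_add, add_mul]; exact add_mem (ha hz) (hb hz)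
  | hsmul a s h => rw [map_mul, mul_assoc]; exact combS_mul a (h hz)
  | hy s i hi h => rw [map_mul, mul_assoc, par_ys hi.le]; exact rx_mul_mem hN hi (h hz)

end Concrete

/-! ### The ideal `J + M` -/

section Concrete

variable {K : Type} [Field K] {N : ℕ}

variable (K N) in
/-- The common factor `∏ x_q` (`0 < q < N`) of the images of the generators of `M`. -/
def piM : BR K N :=
  ∏ q ∈ Finset.univ.filter (fun q : Fin (N + 1) => 0 < (q : ℕ) ∧ (q : ℕ) < N), rx K N q

lemma piM_ne_zero : piM K N ≠ 0 :=
  Finset.prod_ne_zero_iff.mpr fun q _ => (natDegree_rx (q : ℕ)).2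

lemma par_mgen {i : ℕ} (h1 : 1 ≤ i) (h2 : i ≤ N) :
    par K N (mgen K (N + 1) i) = piM K N * Polynomial.X ^ (N - i) := by
  have hx : ∀ q : Fin (N + 1), xv K q = xs K N q := fun i => congrArg _ (ofNat_val i).symm
  have hy : ∀ q : Fin (N + 1), yv K q = ys K N q := fun i => congrArg _ (ofNat_val i).symm
  have hq : ∀ q : Fin (N + 1), par K N (if (q : ℕ) + 1 ≤ i then xv K q else yv K q) =
      rx K N q * (if (q : ℕ) + 1 ≤ i then 1 else Polynomial.X) := fun q => by
    have := Nat.le_of_lt_succ q.2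
    split_ifs
    · rw [hx, par_xs this, mul_one]
    · rw [hy, par_ys this, mul_comm]
  rw [mgen, map_prod, Finset.prod_congr rfl fun q _ => hq q, Finset.prod_mul_distrib,
    Finset.prod_ite, Finset.prod_const_one, one_mul, Finset.prod_const, Finset.filter_filter, piM]
  congr 2
  have : (Finset.univ.filter fun q : Fin (N + 1) =>
      (0 < (q : ℕ) ∧ (q : ℕ) < N + 1 - 1) ∧ ¬ (q : ℕ) + 1 ≤ i) =
      Finset.Ico ⟨i, by omega⟩ (Fin.last N) := by
    ext q
    simp only [Finset.mem_filter, Finset.mem_univ, true_and, Finset.mem_Ico, Fin.le_def,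
      Fin.lt_def, Fin.val_last]
    omega
  rw [this, Fin.card_Ico, Fin.val_last]

variable (K N) in
/-- The ideal `J + M`. -/
abbrev IM : Ideal (SR K N) := bei K (⊤ : SimpleGraph (Fin (N + 1))) ⊔ monoM K (N + 1)

lemma mgen_mem {i : ℕ} (h1 : 1 ≤ i) (h2 : i ≤ N) : mgen K (N + 1) i ∈ IM K N :=
  Ideal.mem_sup_right (Ideal.subset_span ⟨i, h1, h2, rfl⟩)

lemma par_mem_IM (hN : 2 ≤ N) {m : SR K N} (hm : m ∈ IM K N) :
    ∃ z ∈ fullS K N, par K N m = piM K N * z := by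
  obtain ⟨j, hj, m, hm', rfl⟩ := Submodule.mem_sup.mp hm
  clear hm
  rw [map_add, (par_eq_zero_iff j).mpr hj, zero_add]
  change m ∈ Submodule.span _ _ at hm'
  induction hm' using Submodule.span_induction with
  | mem x hx =>
    obtain ⟨i, h1, h2, rfl⟩ := hx
    exact ⟨_, lowS_le (pow_mem_lowS (c := N - i) (by omega)), par_mgen h1 h2⟩
  | zero => exact ⟨0, zero_mem _, by rw [map_zero, mul_zero]⟩
  | add x y _ _ hx hy =>
    obtain ⟨a, ha, hx⟩ := hx
    obtain ⟨b, hb, hy⟩ := hy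
    exact ⟨a + b, add_mem ha hb, by rw [map_add, hx, hy, mul_add]⟩
  | smul s x _ hx =>
    obtain ⟨a, ha, hx⟩ := hx
    exact ⟨_, par_mul_mem hN s ha, by rw [smul_eq_mul, map_mul, hx, mul_left_comm]⟩

variable (K N) in
/-- The generators of `M`, indexed by `0, …, N - 1`. -/
def gI (i : Fin N) : SR K N := mgen K (N + 1) (i + 1)

variable (K N) in
/-- The element of `M` that completes the generators `gI` to a basis modulo `J`. -/
def wI : SR K N := ys K N 0 * mgen K (N + 1) 1

lemma par_gI (i : Fin N) : par K N (gI K N i) = piM K N * Polynomial.X ^ (N - 1 - (i : ℕ)) := by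
  rw [gI, par_mgen (by omega) (by omega), show N - ((i : ℕ) + 1) = N - 1 - i by omega]

lemma par_wI (hN : 2 ≤ N) : par K N (wI K N) = piM K N * (thb K N 0 * Polynomial.X ^ N) := by
  obtain ⟨M, rfl⟩ : ∃ M, N = M + 1 := ⟨N - 1, by omega⟩
  rw [wI, map_mul, par_mgen le_rfl (by omega), par_ys (Nat.zero_le _), rx, Nat.add_sub_cancel]
  ring

lemma par_sum_gI (b : Fin N → BR K N) : par K N (∑ i, b i • gI K N i) =
    piM K N * ∑ i, noethP K N (b i) * Polynomial.X ^ (N - 1 - (i : ℕ)) := by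
  rw [map_sum, Finset.mul_sum]
  exact Finset.sum_congr rfl fun i _ => by rw [par_smul, par_gI, mul_left_comm]

lemma exists_of_mem_lowS {m : SR K N} {z : BR K N} (hz : z ∈ lowS K N)
    (hm : par K N m = piM K N * z) :
    ∃ b : Fin N → BR K N, par K N m = par K N (∑ i, b i • gI K N i) := by
  obtain ⟨b, rfl⟩ := hz
  exact ⟨b, by rw [hm, par_sum_gI]⟩

/-- The hypotheses of the residue pairing hold for `I = J + M`: after removing the factor `piM`, the
images of `w` and of the generators `g i` are `θ_0 T ^ N` and `T ^ (N - 1 - i)`. -/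
lemma isPairing (hN : 2 ≤ N) : IsPairing (A := BR K N)
    (bei K (⊤ : SimpleGraph (Fin (N + 1)))) (IM K N) (fun i : Fin N => ys K N i)
    (gI K N) (wI K N) where
  span_top := span_top_aux
  g_mem i := mgen_mem (by omega) (by omega)
  w_mem := Ideal.mul_mem_left _ _ (mgen_mem le_rfl (by omega))
  span_I m hm := by
    obtain ⟨_, ⟨b, rfl⟩, hm⟩ := par_mem_IM hN hm
    refine ⟨b none, fun i => b (some i), (par_eq_zero_iff _).mp ?_⟩
    rw [map_sub, map_add, par_sum_gI, par_smul, par_wI hN, hm, Fintype.sum_option]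
    simp only [Option.elim]
    ring
  indep a b h := by
    have h1 := (par_eq_zero_iff _).mpr h
    rw [map_add, par_sum_gI, par_smul, par_wI hN, mul_left_comm, ← mul_add] at h1
    have hd : ∀ i : Fin N, (Polynomial.X ^ (N - 1 - (i : ℕ)) : BR K N).natDegree = N - 1 - i :=
      fun i => Polynomial.natDegree_X_pow _
    have hθ : thb K N 0 ≠ 0 := (natDegree_rx (K := K) (N := N) 0).2
    have hd₀ : (thb K N 0 * Polynomial.X ^ N : BR K N).natDegree = N := by
      rw [Polynomial.natDegree_mul_X_pow _ hθ, thb, Polynomial.natDegree_C, zero_add]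
    obtain ⟨ha, hb⟩ := noethP_indep (mul_ne_zero hθ (pow_ne_zero _ Polynomial.X_ne_zero))
      (fun i => pow_ne_zero _ Polynomial.X_ne_zero) hd₀.le (fun i => by rw [hd]; omega)
      (fun i j hij => Fin.ext (by
        have := (hd i).symm.trans (hij.trans (hd j))
        omega))
      (fun i => by rw [hd, hd₀]; omega) a b ((mul_eq_zero.mp h1).resolve_left piM_ne_zero)
    exact ⟨ha, funext hb⟩
  mul i j := by
    obtain ⟨z, hz, h⟩ : ∃ z ∈ lowS K N,
        par K N (ys K N i * gI K N j - if i = j then wI K N else 0) = piM K N * z := by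
      rw [map_sub, map_mul, par_ys i.2.le, par_gI]
      split_ifs with hij
      · subst hij
        exact ⟨_, rx_mul_pow_sub_mem (i := i) (c := N - 1 - i) (by omega),
          by rw [par_wI hN]; ring⟩
      · have hij' : (i : ℕ) ≠ j := fun h => hij (Fin.ext h)
        refine ⟨Polynomial.X * rx K N i * Polynomial.X ^ (N - 1 - (j : ℕ)), ?_,
          by rw [map_zero]; ring⟩
        rcases lt_or_gt_of_ne hij' with h | h
        · exact rx_mul_pow_mem (by omega)
        · exact rx_mul_pow_mem' (d := N - i) (by omega) (by omega) (by omega)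
    obtain ⟨b, hb⟩ := exists_of_mem_lowS hz h
    refine ⟨b, (par_eq_zero_iff _).mp ?_⟩
    rw [← sub_sub, map_sub, hb, sub_self]
  prime := bei_prime K N
  le := le_sup_left

end Concrete

/-! ### Integral equations and parameters -/

section Integral

variable {A S ι : Type} [CommRing A] [CommRing S] [Algebra A S] [Fintype ι] [DecidableEq ι]
  {J I : Ideal S} {y g : ι → S} {w : S}

/-- The ideal `I` meets `A`, since `I / J` is a nonzero ideal of an integral extension domain of `A`. -/
lemma IsPairing.exists_delta [IsDomain A] (H : IsPairing (A := A) J I y g w) :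
    ∃ δ : A, δ ≠ 0 ∧ algebraMap A S δ ∈ I := by
  have := H.finite_quot
  have := H.prime
  have hw : Ideal.Quotient.mk J w ≠ 0 := fun h => by
    have := (H.indep 1 0 (by simpa using Ideal.Quotient.eq_zero_iff_mem.mp h)).1
    exact one_ne_zero this
  have h := Ideal.comap_ne_bot_of_integral_mem (R := A) hw (Ideal.mem_map_of_mem _ H.w_mem)
    (Algebra.IsIntegral.isIntegral _)
  obtain ⟨δ, hδ, hδ0⟩ := Submodule.exists_mem_ne_zero_of_ne_bot h
  refine ⟨δ, hδ0, ?_⟩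
  have h1 : Ideal.Quotient.mk J (algebraMap A S δ) ∈ I.map (Ideal.Quotient.mk J) := hδ
  exact (Ideal.mem_quotient_iff_mem H.le).mp h1

/-- Every element of `S` is integral over `A` modulo `J`. The extra factor `X` ensures positive degree. -/
lemma IsPairing.exists_monic [IsDomain A] (H : IsPairing (A := A) J I y g w) (s : S) :
    ∃ f : Polynomial A, f.Monic ∧ 0 < f.natDegree ∧ Polynomial.aeval s f ∈ J := by
  have := H.finite_quot
  obtain ⟨f, hf, hs⟩ := Algebra.IsIntegral.isIntegral (R := A) (Ideal.Quotient.mk J s)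
  refine ⟨Polynomial.X * f, Polynomial.monic_X.mul hf, ?_, ?_⟩
  · rw [Polynomial.natDegree_X_mul hf.ne_zero]; omega
  · rw [map_mul]
    refine J.mul_mem_left _ (Ideal.Quotient.eq_zero_iff_mem.mp ?_)
    change Ideal.Quotient.mkₐ A J _ = 0
    rw [← Polynomial.aeval_algHom_apply]
    exact hs

end Integral

section Concrete

variable {K : Type} [Field K] {N : ℕ}

open RingTheory.Sequence in
variable (K) in
lemma exists_weaklyRegular_vars (k : ℕ) : ∃ as : List (MvPolynomial (Fin k) K), as.length = k ∧
    (∀ a ∈ as, ∃ i, a = X i) ∧ IsWeaklyRegular (MvPolynomial (Fin k) K) as := by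
  induction k with
  | zero => exact ⟨[], rfl, by simp, IsWeaklyRegular.nil _ _⟩
  | succ k ih =>
    obtain ⟨as, hl, ha, has⟩ := ih
    let e := (MvPolynomial.finSuccEquiv K k).symm
    refine ⟨(as.map Polynomial.C ++ [Polynomial.X]).map e, by simp [hl], ?_, ?_⟩
    · intro a h
      simp only [List.map_append, List.map_map, List.map_cons, List.map_nil, List.mem_append,
        List.mem_map, Function.comp_apply, List.mem_singleton] at h
      rcases h with ⟨b, hb, rfl⟩ | rfl
      · obtain ⟨i, rfl⟩ := ha b hb
        exact ⟨i.succ, by rw [AlgEquiv.symm_apply_eq, MvPolynomial.finSuccEquiv_X_succ]⟩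
      · exact ⟨0, by rw [AlgEquiv.symm_apply_eq, MvPolynomial.finSuccEquiv_X_zero]⟩
    · refine (AddEquiv.isWeaklyRegular_congr (e := e.toAddEquiv) ?_).mp
        (isWeaklyRegular_C_append has Polynomial.monic_X)
      rw [List.forall₂_map_right_iff, List.forall₂_same]
      intro x _ y
      simp

lemma mIdeal_eq_ker (σ : Type) : mIdeal K σ = RingHom.ker (constantCoeff (R := K) (σ := σ)) := by
  have hX : ∀ i, (X i : MvPolynomial σ K) ∈ mIdeal K σ := fun i => Ideal.subset_span ⟨i, rfl⟩
  refine le_antisymm (Ideal.span_le.mpr ?_) fun p hp => ?_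
  · rintro _ ⟨i, rfl⟩
    exact constantCoeff_X (R := K) i
  · have h : ∀ p : MvPolynomial σ K, p - C (constantCoeff p) ∈ mIdeal K σ := fun p => by
      induction p using MvPolynomial.induction_on with
      | C a => simp
      | add p q hp hq => rw [map_add, C_add, add_sub_add_comm]; exact add_mem hp hq
      | mul_X p i hp =>
        rw [map_mul, constantCoeff_X, mul_zero, C_0, sub_zero]
        exact Ideal.mul_mem_left _ _ (hX i)
    have := h p
    rwa [RingHom.mem_ker.mp hp, C_0, sub_zero] at this

lemma mIdeal_isMaximal (σ : Type) : (mIdeal K σ).IsMaximal := by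
  rw [mIdeal_eq_ker]
  exact RingHom.ker_isMaximal_of_surjective _ fun c => ⟨C c, constantCoeff_C σ c⟩

lemma xs_mem (i : ℕ) : xs K N i ∈ mIdeal K _ := Ideal.subset_span ⟨_, rfl⟩

lemma ys_mem (i : ℕ) : ys K N i ∈ mIdeal K _ := Ideal.subset_span ⟨_, rfl⟩

lemma ths_mem (i : ℕ) : ths K N i ∈ mIdeal K _ := by
  cases i with
  | zero => exact xs_mem 0
  | succ i => exact sub_mem (xs_mem _) (ys_mem _)

lemma IM_le (hN : 2 ≤ N) : IM K N ≤ mIdeal K _ := by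
  have hX : ∀ i, (X i : SR K N) ∈ mIdeal K _ := fun i => Ideal.subset_span ⟨i, rfl⟩
  refine sup_le (Ideal.span_le.mpr ?_) (Ideal.span_le.mpr ?_)
  · rintro _ ⟨i, j, -, -, rfl⟩
    exact sub_mem (Ideal.mul_mem_left _ _ (hX _)) (Ideal.mul_mem_left _ _ (hX _))
  · rintro _ ⟨i, -, -, rfl⟩
    have h1 : (⟨1, by omega⟩ : Fin (N + 1)) ∈ Finset.univ.filter
        fun q : Fin (N + 1) => 0 < (q : ℕ) ∧ (q : ℕ) < N + 1 - 1 := by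
      simp only [Finset.mem_filter, Finset.mem_univ, true_and]; omega
    refine Ideal.mem_of_dvd _ (Finset.dvd_prod_of_mem _ h1) ?_
    split_ifs
    exacts [hX _, hX _]

lemma ringKrullDim_BR : ringKrullDim (BR K N) = ((N + 1 + 1 : ℕ) : ℕ∞) := by
  rw [Polynomial.ringKrullDim_of_isNoetherianRing, MvPolynomial.ringKrullDim_of_isNoetherianRing,
    ringKrullDim_eq_zero_of_field, Nat.card_fin]
  push_cast
  ring

open RingTheory.Sequence in
variable (K N) in
lemma exists_weaklyRegular_BR : ∃ as : List (BR K N), as.length = N + 1 + 1 ∧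
    (∀ a ∈ as, algebraMap (BR K N) (SR K N) a ∈ mIdeal K _) ∧ IsWeaklyRegular (BR K N) as := by
  obtain ⟨as, hl, ha, has⟩ := exists_weaklyRegular_vars K (N + 1)
  refine ⟨as.map Polynomial.C ++ [Polynomial.X], by simp [hl], fun a h => ?_,
    isWeaklyRegular_C_append has Polynomial.monic_X⟩
  rw [algebraMap_eq]
  rcases List.mem_append.mp h with h | h
  · obtain ⟨b, hb, rfl⟩ := List.mem_map.mp h
    obtain ⟨i, rfl⟩ := ha b hb
    have := noeth_thb (K := K) (Nat.le_of_lt_succ i.2)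
    rw [thb, ofNat_val] at this
    rw [this]
    exact ths_mem _
  · rw [List.mem_singleton.mp h, noeth_X]
    exact ys_mem _

/-- The sequence consists of `δ` and of the integral equations of `y_0, …, y_{N - 1}` over `A`. -/
lemma exists_isFrob_IM (hN : 2 ≤ N) {δ : BR K N} (hδ0 : δ ≠ 0)
    (hδ : algebraMap (BR K N) (SR K N) δ ∈ IM K N) :
    ∃ rs : List (SR K N), rs.length = N + 1 ∧ Ideal.ofList rs ≤ IM K N ∧ IsFrob δ rs := by
  choose f hf hd hJ using fun i : Fin N => (isPairing (K := K) hN).exists_monic (ys K N i)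
  obtain ⟨rs, hl, hr, hF⟩ := exists_isFrob hδ0 N f hf hd
  let e : MvPolynomial (Fin N) (BR K N) ≃ₐ[BR K N] SR K N :=
    AlgEquiv.ofBijective (toSR K N) (toSR_bijective K N)
  refine ⟨rs.map e, by simpa using hl, Ideal.span_le.mpr ?_, hF.congr e⟩
  intro r hr'
  obtain ⟨s, hs, rfl⟩ := List.mem_map.mp hr'
  change toSR K N s ∈ IM K N
  rcases hr s hs with rfl | ⟨i, rfl⟩
  · rw [toSR_C]; exact hδ
  · rw [← Polynomial.aeval_algHom_apply, toSR_X]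
    exact Ideal.mem_sup_left (hJ i)

variable (K) in
theorem gorenstein_IM (hN : 2 ≤ N) :
    (depth (mIdeal K (Fin (N + 1) ⊕ Fin (N + 1))) (SR K N ⧸ IM K N) : WithBot ℕ∞) =
      ((N + 1 : ℕ) : ℕ∞) ∧ ringKrullDim (SR K N ⧸ IM K N) = ((N + 1 : ℕ) : ℕ∞) ∧
    Nonempty (extSI K (IM K N) (N + 1) ≃ₗ[SR K N] (SR K N ⧸ IM K N)) := by
  have H := isPairing (K := K) hN
  obtain ⟨δ, hδ0, hδ⟩ := H.exists_delta
  obtain ⟨as, hl, ha, has⟩ := exists_weaklyRegular_BR K N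
  obtain ⟨h1, h2⟩ := depth_dim_of_isPairing H (mIdeal_isMaximal _) (IM_le hN) has hl ha
    ringKrullDim_BR hδ0 hδ
  obtain ⟨rs, hlen, hrs, hF⟩ := exists_isFrob_IM hN hδ0 hδ
  obtain ⟨u, hu1, hu2, hu3⟩ := H.exists_link hδ0 hδ hF hrs
  refine ⟨h1, h2, ?_⟩
  have h3 := extSI_equiv hF.weak hrs (by omega) hu1 hu2 hu3
  rwa [hlen] at h3

end Concrete

/-- Let `n ≥ 3`, let `J_G̃` be the binomial edge ideal of the
complete graph on `[n]`, and let `M` be the monomial ideal generated by the `n−1`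
monomials `x_2 x_3 ⋯ x_i y_{i+1} ⋯ y_{n−1}` for `i = 1, …, n−1`.  Then
`S/(J_G̃, M)` is a Gorenstein ring of Krull dimension `n`: it is Cohen-Macaulay of
dimension `n` and its canonical module `Ext_S^{2n−n}(S/(J_G̃, M), S)` is isomorphic
(as an `S`-module, up to a shift in grading) to `S/(J_G̃, M)` itself. -/
theorem statement15 (K : Type) [Field K] (n : ℕ) (hn : 3 ≤ n) :
    IsCMQuot K (bei K (⊤ : SimpleGraph (Fin n)) ⊔ monoM K n) ∧
    ringKrullDim (MvPolynomial (Fin n ⊕ Fin n) K ⧸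
      (bei K (⊤ : SimpleGraph (Fin n)) ⊔ monoM K n)) = (n : ℕ) ∧
    Nonempty
      ((extSI K (bei K (⊤ : SimpleGraph (Fin n)) ⊔ monoM K n) (2 * n - n))
        ≃ₗ[MvPolynomial (Fin n ⊕ Fin n) K]
          (MvPolynomial (Fin n ⊕ Fin n) K ⧸
            (bei K (⊤ : SimpleGraph (Fin n)) ⊔ monoM K n))) := by
  obtain ⟨N, rfl⟩ : ∃ N, n = N + 1 := ⟨n - 1, by omega⟩
  obtain ⟨h1, h2, h3⟩ := gorenstein_IM K (N := N) (by omega)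
  refine ⟨h1.trans h2.symm, h2, ?_⟩
  rw [show 2 * (N + 1) - (N + 1) = N + 1 by omega]
  exact h3

end BEIPaper
end
end
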